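/- arXiv:1605.03756 — 2 statements merged into one kernel-verified Lean document; each statement's English description precedes it below -/
import Mathlib

section
/- Assume the setup described in the context, with m ≥ 100. Then n < 10¹⁸·b⁴, ℓ < 2·10¹⁸·b⁴, and m < 10²⁰·b⁷. -/
/-!
Write `β = X₁ + Y₁√d`, `q = b - 1`, and let `p` be a prime dividing `b`. The two repdigit equations
are used in two independent ways.

*Elementary congruences.* Let `R = (b ^ m - 1) / (b - 1)`, so that `X₁ = a R`. Since
`Xₙ ≡ ± n X₁` modulo `X₁³` and `Xₙ = c R (1 + Q + ⋯ + Q ^ (ℓ - 1))` with `Q = 1 + q R`, comparison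
modulo `R` and then modulo `R²` gives `R ≤ 3 q² n²` (`pell_odd`, `geom_mod`, `repunit_le`). Hence
`m` is at most of the order of `log n`. Comparing sizes also gives `(m - 1) n < m ℓ` and `ℓ ≤ 2 n`,
so everything follows from the bound for `n`.

*A `p`-adic linear form in two logarithms.* The equation for `Xₙ` says that
`q Xₙ + c = c b ^ (m ℓ)` is divisible by an enormous power of `p`. Since `β ^ n` is a root of
`Z² - 2 Xₙ Z + 1`, it is `p`-adically very close to a root `g` of `q Z² + 2 c Z + q`
(`exists_close_root`). Some `k ≤ 2 p` satisfies `β ^ k ≡ 1` modulo `p` (`exists_pow_sub_one_dvd`).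
The pigeonhole principle yields a nonzero exponential polynomial in `t` and `β ^ (k t)` with small
integer coefficients and values highly divisible by `p` at the first integers
(`exists_small_coeffs`), hence at all integers by Newton interpolation
(`dvd_expPoly_of_dvd_initial`). At `t = s₁ + n s₂` the number `β ^ (k t)` may be replaced by
`β ^ (k s₁) g ^ (k s₂)`, of much smaller height, and Liouville's inequality in the biquadratic
field generated by `β` and `g` shows that the value is zero (`value_eq_zero_of_small`). Too many
zeros contradict a determinant zero estimate (`zero_estimate`). The outcome is
`two_log_contradiction`, and `size_contradiction` chooses the parameters for `n ≥ 10¹⁸ b⁴`.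
-/

/-! ### Zero estimate for exponential polynomials -/

section
open Polynomial

/-- The coefficient of a product in the sum of the degree bounds is the product of the
coefficients in those degrees. -/
theorem coeff_prod_sum_aux {F ι : Type*} [Field F] [DecidableEq ι] (s : Finset ι) (f : ι → F[X])
    (n : ι → ℕ) (h : ∀ i ∈ s, (f i).natDegree ≤ n i) :
    (∏ i ∈ s, f i).coeff (∑ i ∈ s, n i) = ∏ i ∈ s, (f i).coeff (n i) := by
  induction s using Finset.induction_on with
  | empty => simp
  | insert a s ha ih =>
    have hs : ∀ i ∈ s, (f i).natDegree ≤ n i := fun i hi => h i (Finset.mem_insert_of_mem hi)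
    rw [Finset.prod_insert ha, Finset.sum_insert ha, Finset.prod_insert ha,
      Polynomial.coeff_mul_add_eq_of_natDegree_le (h a (Finset.mem_insert_self _ _)), ih hs]
    exact (Polynomial.natDegree_prod_le _ _).trans (Finset.sum_le_sum hs)

/-- If the exponential polynomial `∑ j, P j (u + n v) (B ^ u * G ^ v) ^ j`, with `deg P j < K`
and `L` frequencies, vanishes on the grid `u < S₁ + L`, `v < S₂` with `K * L ≤ S₁ * S₂`, then
all `P j` vanish.

Shifting `u` by `0, …, r - 1`, where `r ≤ L` is the number of nonzero `P j`, gives a square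
homogeneous system with a nontrivial solution; its determinant is a polynomial of degree `< K * L`
vanishing at the `S₁ * S₂` distinct points `u + n v`. It is not the zero polynomial, since its top
coefficient is a Vandermonde determinant in the distinct powers `B ^ j` times the leading
coefficients. -/
theorem zero_estimate {F : Type*} [Field F] [CharZero F] (K L S₁ S₂ n : ℕ) (P : Fin L → F[X])
    (hdeg : ∀ j, (P j).natDegree < K) (B G : F) (hB0 : B ≠ 0) (hG : G ≠ 0)
    (hB : ∀ s t : ℕ, B ^ s = B ^ t → s = t) (hn : S₁ ≤ n) (hcard : K * L ≤ S₁ * S₂)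
    (hv : ∀ s₁ < S₁ + L, ∀ s₂ < S₂,
      ∑ j, (P j).eval ((s₁ + n * s₂ : ℕ) : F) * (B ^ s₁ * G ^ s₂) ^ (j : ℕ) = 0) :
    ∀ j, P j = 0 := by
  classical
  by_contra! hne
  obtain ⟨j₀, hj₀⟩ := hne
  let J := {j : Fin L // P j ≠ 0}
  let e : Fin (Fintype.card J) ≃ J := (Fintype.equivFin J).symm
  have hJL : Fintype.card J ≤ L := by
    exact (Fintype.card_subtype_le (fun j : Fin L => P j ≠ 0)).trans_eq (Fintype.card_fin L)
  have hJpos : 0 < Fintype.card J := Fintype.card_pos_iff.2 ⟨⟨j₀, hj₀⟩⟩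
  let M : Matrix (Fin (Fintype.card J)) (Fin (Fintype.card J)) F[X] :=
    fun s i => C (B ^ ((s : ℕ) * ((e i : Fin L) : ℕ))) * (P (e i)).comp (X + C ((s : ℕ) : F))
  have hMdeg : ∀ s i, (M s i).natDegree ≤ (P (e i)).natDegree := by
    intro s i
    refine (natDegree_C_mul_le _ _).trans ?_
    rw [natDegree_comp, natDegree_X_add_C, mul_one]
  have hMcoeff : ∀ s i, (M s i).coeff (P (e i)).natDegree
      = (B ^ ((e i : Fin L) : ℕ)) ^ (s : ℕ) * (P (e i)).leadingCoeff := by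
    intro s i
    simp only [M, coeff_C_mul]
    congr 1
    · rw [← pow_mul, mul_comm]
    · have := leadingCoeff_comp (p := P (e i)) (q := X + C ((s : ℕ) : F))
        (by rw [natDegree_X_add_C]; exact one_ne_zero)
      rw [leadingCoeff, natDegree_comp, natDegree_X_add_C, mul_one, (monic_X_add_C _).leadingCoeff, one_pow,
        mul_one] at this
      exact this
  -- the coefficient of the determinant in the top degree is a Vandermonde determinant
  have htop : M.det.coeff (∑ i, (P (e i)).natDegree)
      = (Matrix.vandermonde (fun i => B ^ ((e i : Fin L) : ℕ))).det
        * ∏ i, (P (e i)).leadingCoeff := by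
    rw [← Matrix.det_transpose (Matrix.vandermonde _), Matrix.det_apply, Matrix.det_apply,
      finsetSum_coeff, Finset.sum_mul]
    refine Finset.sum_congr rfl fun σ _ => ?_
    rw [coeff_smul, coeff_prod_sum_aux _ _ _ (fun i _ => hMdeg (σ i) i), smul_mul_assoc,
      ← Finset.prod_mul_distrib]
    congr 1
    refine Finset.prod_congr rfl fun i _ => ?_
    rw [hMcoeff]
    simp [Matrix.vandermonde_apply]
  have htop0 : M.det.coeff (∑ i, (P (e i)).natDegree) ≠ 0 := by
    rw [htop]
    refine mul_ne_zero ?_ ?_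
    · rw [Matrix.det_vandermonde_ne_zero_iff]
      intro i i' h
      exact e.injective (Subtype.ext (Fin.ext (hB _ _ h)))
    · exact Finset.prod_ne_zero_iff.2 fun i _ => leadingCoeff_ne_zero.2 (e i).2
  have hdet0 : M.det ≠ 0 := by
    intro h; rw [h] at htop0; simp at htop0
  have hdetdeg : M.det.natDegree ≤ ∑ i, (P (e i)).natDegree := by
    rw [Matrix.det_apply]
    refine natDegree_sum_le_of_forall_le _ _ fun σ _ => ?_
    refine (natDegree_smul_le _ _).trans ?_
    exact (natDegree_prod_le _ _).trans (Finset.sum_le_sum fun i _ => hMdeg _ _)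
  have hdetlt : M.det.natDegree < K * L := by
    refine hdetdeg.trans_lt ?_
    calc ∑ i, (P (e i)).natDegree < ∑ _i : Fin (Fintype.card J), K := by
          refine Finset.sum_lt_sum_of_nonempty ⟨⟨0, hJpos⟩, Finset.mem_univ _⟩ fun i _ => hdeg _
      _ = Fintype.card J * K := by simp
      _ ≤ K * L := by rw [mul_comm]; exact Nat.mul_le_mul_left _ hJL
  have hroot : ∀ s₁ < S₁, ∀ s₂ < S₂, M.det.eval ((s₁ + n * s₂ : ℕ) : F) = 0 := by
    intro s₁ h₁ s₂ h₂
    have hev : M.det.eval ((s₁ + n * s₂ : ℕ) : F)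
        = ((evalRingHom ((s₁ + n * s₂ : ℕ) : F)).mapMatrix M).det := by
      rw [← RingHom.map_det]; rfl
    rw [hev, ← Matrix.exists_mulVec_eq_zero_iff]
    refine ⟨fun i => (B ^ s₁ * G ^ s₂) ^ ((e i : Fin L) : ℕ), ?_, ?_⟩
    · intro h
      have := congrFun h ⟨0, hJpos⟩
      simp [hB0, hG] at this
    · funext s
      have hs : (s : ℕ) < L := s.2.trans_le hJL
      have := hv (s + s₁) (by omega) s₂ h₂
      have hsub : ∑ j, (P j).eval ((s + s₁ + n * s₂ : ℕ) : F)
            * (B ^ (s + s₁) * G ^ s₂) ^ (j : ℕ)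
          = ∑ j : J, (P j).eval ((s + s₁ + n * s₂ : ℕ) : F)
            * (B ^ (s + s₁) * G ^ s₂) ^ ((j : Fin L) : ℕ) := by
        rw [← Finset.sum_subtype (Finset.univ.filter fun j : Fin L => P j ≠ 0) (by simp)
          (fun j => (P j).eval ((s + s₁ + n * s₂ : ℕ) : F)
            * (B ^ (s + s₁) * G ^ s₂) ^ (j : ℕ))]
        refine (Finset.sum_filter_of_ne (p := fun j : Fin L => P j ≠ 0) fun j _ hj h0 => hj ?_).symm
        simp [h0]
      rw [Pi.zero_apply, ← this, hsub, ← Equiv.sum_comp e, Matrix.mulVec_eq_sum, Finset.sum_apply]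
      refine Finset.sum_congr rfl fun i _ => ?_
      have hMe : (evalRingHom ((s₁ + n * s₂ : ℕ) : F)).mapMatrix M s i
          = (M s i).eval ((s₁ + n * s₂ : ℕ) : F) := rfl
      simp only [Pi.smul_apply, MulOpposite.smul_eq_mul_unop, MulOpposite.unop_op,
        Matrix.transpose_apply]
      rw [hMe]
      simp only [M, eval_mul, eval_C, eval_comp, eval_add, eval_X]
      rw [show ((s + s₁ + n * s₂ : ℕ) : F) = ((s₁ + n * s₂ : ℕ) : F) + ((s : ℕ) : F) by
        push_cast; ring]
      ring
  let Z : Finset F := (Finset.range S₁ ×ˢ Finset.range S₂).image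
    (fun s => ((s.1 + n * s.2 : ℕ) : F))
  have hZcard : Z.card = S₁ * S₂ := by
    rw [Finset.card_image_of_injOn, Finset.card_product, Finset.card_range, Finset.card_range]
    rintro ⟨u, v⟩ huv ⟨u', v'⟩ huv' h
    simp only [Finset.coe_product, Finset.coe_range, Set.mem_prod, Set.mem_Iio] at huv huv'
    have h' : u + n * v = u' + n * v' := by
      simpa using (Nat.cast_injective (R := F) h)
    have hu : u < n := by omega
    have hu' : u' < n := by omega
    have e1 : u = u' := by
      have := congrArg (· % n) h'
      simpa [Nat.add_mul_mod_self_left, Nat.mod_eq_of_lt hu, Nat.mod_eq_of_lt hu'] using this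
    subst e1
    have : n * v = n * v' := by omega
    rw [Nat.eq_of_mul_eq_mul_left (by omega) this]
  have := Polynomial.card_le_degree_of_subset_roots (p := M.det) (Z := Z) (by
    intro z hz
    simp only [Z, Finset.mem_val, Finset.mem_image, Finset.mem_product, Finset.mem_range] at hz
    obtain ⟨⟨u, v⟩, ⟨hu, hv'⟩, rfl⟩ := hz
    exact (mem_roots hdet0).2 (hroot u hu v hv'))
  omega
end

/-! ### Construction and extrapolation of the auxiliary function -/

section
open Finset

/-- The `k`-th difference of `t ↦ t ^ i * y ^ t` is divisible by `(y - 1) ^ (k - i)`: each difference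
either gains a factor `y - 1` or lowers the degree of the polynomial factor. -/
theorem fwdDiff_pow_mul_pow_dvd {R : Type*} [CommRing R] (y : R) (k : ℕ) :
    ∀ (i t : ℕ), (y - 1) ^ (k - i) ∣
      ((fwdDiff 1)^[k] (fun t : ℕ => (t : R) ^ i * y ^ t)) t := by
  induction k with
  | zero => intro i t; simp
  | succ k ih =>
    intro i t
    have key : fwdDiff 1 (fun t : ℕ => (t : R) ^ i * y ^ t)
        = (∑ r ∈ range (i + 1), ((y - 1) * (i.choose r : R)) • (fun t : ℕ => (t : R) ^ r * y ^ t))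
          + ∑ r ∈ range i, (i.choose r : R) • (fun t : ℕ => (t : R) ^ r * y ^ t) := by
      funext t
      have hb : ((t : R) + 1) ^ i = ∑ r ∈ range (i + 1), (t : R) ^ r * (i.choose r : R) := by
        rw [add_pow]; simp
      have hb' : ((t : R) + 1) ^ i = (∑ r ∈ range i, (t : R) ^ r * (i.choose r : R)) + t ^ i := by
        rw [hb, sum_range_succ]; simp
      simp only [fwdDiff, Pi.add_apply, Finset.sum_apply, Pi.smul_apply, smul_eq_mul]
      have e1 : ∑ r ∈ range (i + 1), (y - 1) * (i.choose r : R) * ((t : R) ^ r * y ^ t)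
          = (y - 1) * y ^ t * ((t : R) + 1) ^ i := by
        rw [hb, mul_sum]; exact sum_congr rfl fun r _ => by ring
      have e2 : ∑ r ∈ range i, (i.choose r : R) * ((t : R) ^ r * y ^ t)
          = y ^ t * (((t : R) + 1) ^ i - t ^ i) := by
        rw [hb', add_sub_cancel_right, mul_sum]; exact sum_congr rfl fun r _ => by ring
      rw [e1, e2]; push_cast; ring
    rw [Function.iterate_succ_apply, key, fwdDiff_iter_add, fwdDiff_iter_finsetSum,
      fwdDiff_iter_finsetSum, Pi.add_apply, Finset.sum_apply, Finset.sum_apply]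
    refine dvd_add (dvd_sum fun r hr => ?_) (dvd_sum fun r hr => ?_)
    · rw [fwdDiff_iter_const_smul, Pi.smul_apply, smul_eq_mul]
      have hr' : r ≤ i := Nat.lt_succ_iff.1 (mem_range.1 hr)
      have h1 : (y - 1) ^ (k + 1 - i) ∣ (y - 1) * (y - 1) ^ (k - r) := by
        rw [← pow_succ']; exact pow_dvd_pow _ (by omega)
      refine h1.trans (mul_dvd_mul (dvd_mul_right _ _) (ih r t))
    · rw [fwdDiff_iter_const_smul, Pi.smul_apply, smul_eq_mul]
      have hr' : r < i := mem_range.1 hr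
      exact (((pow_dvd_pow _ (by omega)).trans (ih r t))).mul_left _

/-- Extrapolation: an exponential polynomial with base `y ≡ 1` modulo `ϖ` and polynomial degree
`< K`, divisible by `ϖ ^ w` at the first `w + K` integers, is divisible by `ϖ ^ w` everywhere.
In the Newton expansion at `0`, the differences of order at least `w + K` are divisible by `ϖ ^ w`
automatically, and the earlier ones are combinations of the initial values. -/
theorem dvd_expPoly_of_dvd_initial {R : Type*} [CommRing R] (ϖ y : R) (hy : ϖ ∣ y - 1)
    (w T K L : ℕ) (hT : w + K ≤ T) (c : Fin K → Fin L → R)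
    (h : ∀ t < T, ϖ ^ w ∣ ∑ i, ∑ j, c i j * ((t : R) ^ (i : ℕ) * (y ^ (j : ℕ)) ^ t)) (t : ℕ) :
    ϖ ^ w ∣ ∑ i, ∑ j, c i j * ((t : R) ^ (i : ℕ) * (y ^ (j : ℕ)) ^ t) := by
  set f : ℕ → R := ∑ i, ∑ j, c i j • (fun t : ℕ => (t : R) ^ (i : ℕ) * (y ^ (j : ℕ)) ^ t) with hf
  have hfe : ∀ t, f t = ∑ i, ∑ j, c i j * ((t : R) ^ (i : ℕ) * (y ^ (j : ℕ)) ^ t) := by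
    intro t; simp [hf, Finset.sum_apply]
  rw [← hfe]
  have hdiff : ∀ k, ϖ ^ w ∣ ((fwdDiff 1)^[k] f) 0 := by
    intro k
    rcases lt_or_ge k T with hk | hk
    · rw [fwdDiff_iter_eq_sum_shift]
      refine dvd_sum fun s hs => ?_
      have hs' := mem_range.1 hs
      rw [zsmul_eq_mul]
      refine Dvd.dvd.mul_left ?_ _
      rw [hfe]; exact h _ (by simp; omega)
    · rw [hf, fwdDiff_iter_finsetSum, Finset.sum_apply]
      refine dvd_sum fun i _ => ?_
      rw [fwdDiff_iter_finsetSum, Finset.sum_apply]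
      refine dvd_sum fun j _ => ?_
      rw [fwdDiff_iter_const_smul, Pi.smul_apply, smul_eq_mul]
      refine Dvd.dvd.mul_left ?_ _
      refine dvd_trans ?_ (fwdDiff_pow_mul_pow_dvd (y ^ (j : ℕ)) k i 0)
      have h1 : ϖ ∣ y ^ (j : ℕ) - 1 := hy.trans (sub_one_dvd_pow_sub_one y _)
      exact (pow_dvd_pow ϖ (by have := i.2; omega)).trans (pow_dvd_pow_of_dvd h1 _)
  have := shift_eq_sum_fwdDiff_iter (1 : ℕ) f t 0
  simp only [smul_eq_mul, mul_one, zero_add] at this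
  rw [this]
  refine dvd_sum fun k _ => ?_
  rw [nsmul_eq_mul]
  exact (hdiff k).mul_left _

/-- Siegel's lemma modulo `p ^ w`, by the pigeonhole principle: the residues of the `T` linear forms
take at most `p ^ (2 * w * T)` values on the box `[0, p ^ h)`. -/
theorem exists_small_coeffs {d : ℤ} (p : ℕ) (hp : 2 ≤ p) (w T h : ℕ) {κ : Type*} [Fintype κ]
    (E : κ → ℕ → ℤ√d) (hcard : 2 * w * T < h * Fintype.card κ) :
    ∃ c : κ → ℤ, c ≠ 0 ∧ (∀ i, |c i| ≤ p ^ h) ∧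
      ∀ t < T, (p : ℤ√d) ^ w ∣ ∑ i, (c i : ℤ√d) * E i t := by
  classical
  have : NeZero (p ^ w) := ⟨by positivity⟩
  let S : (κ → Fin (p ^ h)) → ℕ → ℤ√d := fun v t => ∑ i, ((v i : ℕ) : ℤ√d) * E i t
  let φ : (κ → Fin (p ^ h)) → (Fin T → ZMod (p ^ w) × ZMod (p ^ w)) :=
    fun v t => (((S v t).re : ZMod (p ^ w)), ((S v t).im : ZMod (p ^ w)))
  obtain ⟨u, v, huv, he⟩ := Fintype.exists_ne_map_eq_of_card_lt φ (by
    simp only [Fintype.card_fun, Fintype.card_fin, Fintype.card_prod, ZMod.card]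
    rw [← pow_add, ← pow_mul, ← pow_mul]
    exact Nat.pow_lt_pow_right (by omega) (by linarith))
  refine ⟨fun i => (u i : ℤ) - (v i : ℤ), ?_, ?_, ?_⟩
  · intro h0
    apply huv
    funext i
    have := congrFun h0 i
    simp only [Pi.zero_apply] at this
    exact Fin.ext (by omega)
  · intro i
    have h1 := (u i).2
    have h2 := (v i).2
    have h3 : ((p : ℤ) ^ h) = ((p ^ h : ℕ) : ℤ) := by push_cast; rfl
    change |(u i : ℤ) - (v i : ℤ)| ≤ (p : ℤ) ^ h
    rw [h3, abs_le]; constructor <;> omega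
  · intro t ht
    have hS : ∑ i, (((u i : ℤ) - (v i : ℤ) : ℤ) : ℤ√d) * E i t = S u t - S v t := by
      simp only [S, ← Finset.sum_sub_distrib]
      exact sum_congr rfl fun i _ => by push_cast; ring
    have := congrFun he ⟨t, ht⟩
    simp only [φ, Prod.mk.injEq] at this
    rw [hS, show ((p : ℤ√d) ^ w) = (((p ^ w : ℕ) : ℤ) : ℤ√d) by push_cast; rfl,
      Zsqrtd.intCast_dvd]
    constructor
    · rw [Zsqrtd.re_sub, ← ZMod.intCast_zmod_eq_zero_iff_dvd]
      push_cast at this ⊢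
      rw [this.1, sub_self]
    · rw [Zsqrtd.im_sub, ← ZMod.intCast_zmod_eq_zero_iff_dvd]
      push_cast at this ⊢
      rw [this.2, sub_self]
end

/-! ### The order of a Pell unit modulo a prime -/

/-- Modulo an odd prime `p`, Frobenius sends `x + y√d` to `x`, to itself or to its conjugate (its inverse),
according to the Legendre symbol of `d`; so the order of a norm one element divides `2 * p`,
`p - 1` or `p + 1`. For `p = 2`, the square of such an element is `1`. -/
theorem exists_pow_sub_one_dvd {d : ℤ} (p : ℕ) (hp : p.Prime) (x y : ℤ)
    (hxy : x ^ 2 - d * y ^ 2 = 1) :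
    ∃ k, 1 ≤ k ∧ k ≤ 2 * p ∧ (p : ℤ√d) ∣ (⟨x, y⟩ : ℤ√d) ^ k - 1 := by
  have := Fact.mk hp
  set β : ℤ√d := ⟨x, y⟩ with hβ
  set β' : ℤ√d := ⟨x, -y⟩ with hβ'
  have hββ' : β * β' = 1 := by
    ext <;> simp [hβ, hβ']
    · linarith
    · ring
  have hfrob : (p : ℤ√d) ∣ β ^ p - ((x : ℤ√d) ^ p + (y : ℤ√d) ^ p * Zsqrtd.sqrtd ^ p) := by
    obtain ⟨r, hr⟩ := exists_add_pow_prime_eq hp (x : ℤ√d) ((y : ℤ√d) * Zsqrtd.sqrtd)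
    have : β = (x : ℤ√d) + (y : ℤ√d) * Zsqrtd.sqrtd := by
      ext <;> simp [hβ]
    rw [this, hr, mul_pow, add_sub_cancel_left, mul_assoc, mul_assoc]
    exact dvd_mul_right _ _
  have hcast : ∀ z : ℤ, (p : ℤ) ∣ z → (p : ℤ√d) ∣ (z : ℤ√d) := by
    rintro z ⟨r, rfl⟩; exact ⟨r, by push_cast; rfl⟩
  rcases hp.eq_two_or_odd' with h2 | hodd
  · -- in characteristic two, `β² = x² + d y² = x² - d y² = 1`
    refine ⟨2, by norm_num, by omega, ?_⟩
    have : β ^ 2 - 1 = ((2 : ℕ) : ℤ√d) * ⟨d * y ^ 2, x * y⟩ := by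
      ext <;> simp [hβ, pow_two]
      · linarith
      · ring
    rw [h2, this]; exact dvd_mul_right _ _
  · obtain ⟨r, hr⟩ := hodd
    have hsq : (Zsqrtd.sqrtd : ℤ√d) ^ p = ((d ^ r : ℤ) : ℤ√d) * Zsqrtd.sqrtd := by
      rw [hr, pow_succ, pow_mul]
      congr 1
      have : (Zsqrtd.sqrtd : ℤ√d) ^ 2 = ((d : ℤ) : ℤ√d) := by
        rw [pow_two]; exact Zsqrtd.dmuld
      rw [this]; push_cast; rfl
    have hfermat : ∀ z : ℤ, (p : ℤ) ∣ z ^ p - z := by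
      intro z
      rw [← ZMod.intCast_zmod_eq_zero_iff_dvd]
      push_cast; rw [ZMod.pow_card, sub_self]
    -- `β ^ p ≡ x + (d/p) y √d`
    have hfrob' : ∀ ε : ℤ, (p : ℤ) ∣ d ^ r - ε → (p : ℤ√d) ∣ β ^ p - ⟨x, ε * y⟩ := by
      intro ε hε
      have e : β ^ p - ⟨x, ε * y⟩ = (β ^ p - ((x : ℤ√d) ^ p + (y : ℤ√d) ^ p * Zsqrtd.sqrtd ^ p))
          + ((x ^ p - x : ℤ) : ℤ√d) + ((y ^ p - y : ℤ) : ℤ√d) * ((d : ℤ√d) ^ r * Zsqrtd.sqrtd)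
          + ((d ^ r - ε : ℤ) : ℤ√d) * ((y : ℤ√d) * Zsqrtd.sqrtd) := by
        have e1 : (⟨x, ε * y⟩ : ℤ√d) = (x : ℤ√d) + (ε : ℤ√d) * (y : ℤ√d) * Zsqrtd.sqrtd := by
          ext <;> simp
        rw [hsq, e1]; push_cast; ring
      rw [e]
      refine dvd_add (dvd_add (dvd_add hfrob (hcast _ (hfermat x))) ?_) ?_
      · exact (hcast _ (hfermat y)).mul_right _
      · exact (hcast _ hε).mul_right _
    have hdcase : (p : ℤ) ∣ d ^ r - 0 ∨ (p : ℤ) ∣ d ^ r - 1 ∨ (p : ℤ) ∣ d ^ r - (-1) := by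
      have hprime : Prime (p : ℤ) := Nat.prime_iff_prime_int.1 hp
      have h := hfermat d
      have : d ^ p - d = d * ((d ^ r - 1) * (d ^ r - (-1))) := by
        rw [hr]; ring
      rw [this] at h
      rcases hprime.dvd_or_dvd h with h | h
      · left
        rw [sub_zero]
        have hr0 : r ≠ 0 := by rintro rfl; exact hp.one_lt.ne' (by omega)
        exact h.trans (dvd_pow_self d hr0)
      · exact Or.inr (hprime.dvd_or_dvd h)
    have hp1 := hp.two_le
    rcases hdcase with h | h | h
    · refine ⟨2 * p, by omega, le_rfl, ?_⟩
      have h1 := hfrob' 0 h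
      have hd : (p : ℤ) ∣ d := by
        rw [sub_zero] at h
        exact (Nat.prime_iff_prime_int.1 hp).dvd_of_dvd_pow h
      have e : β ^ (2 * p) - 1 = (β ^ p - ⟨x, 0 * y⟩) * (β ^ p + ⟨x, 0 * y⟩)
          + ((d * y ^ 2 : ℤ) : ℤ√d) := by
        have e1 : (⟨x, 0 * y⟩ : ℤ√d) = (x : ℤ√d) := by ext <;> simp
        have e2 : ((d * y ^ 2 : ℤ) : ℤ√d) = (x : ℤ√d) ^ 2 - 1 := by
          rw [show d * y ^ 2 = x ^ 2 - 1 by linarith]; push_cast; rfl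
        rw [e1, e2, pow_mul']; ring
      rw [e]
      exact dvd_add (h1.mul_right _) (hcast _ (hd.mul_right _))
    · refine ⟨p - 1, by omega, by omega, ?_⟩
      have h1 := hfrob' 1 h
      have e : β ^ (p - 1) - 1 = (β ^ p - ⟨x, 1 * y⟩) * β' := by
        rw [one_mul, ← hβ, sub_mul, hββ']
        conv_rhs => rw [show p = (p - 1) + 1 by omega, pow_succ, mul_assoc, hββ', mul_one]
      rw [e]; exact h1.mul_right _
    · refine ⟨p + 1, by omega, by omega, ?_⟩
      have h1 := hfrob' (-1) h
      have e : β ^ (p + 1) - 1 = (β ^ p - ⟨x, -1 * y⟩) * β := by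
        rw [neg_one_mul, ← hβ', sub_mul, mul_comm β' β, hββ', pow_succ]
      rw [e]; exact h1.mul_right _

/-! ### A `p`-adic Liouville inequality in biquadratic fields -/

section
open Finset

theorem PadicAlgCl.norm_le_one_of_isIntegral {p : ℕ} [Fact p.Prime] {x : PadicAlgCl p}
    (hx : IsIntegral ℤ x) : ‖x‖ ≤ 1 := by
  have hv : (PadicAlgCl.valued p).v.Integers (PadicAlgCl.valued p).v.integer :=
    Valuation.integer.integers _
  have hx' : IsIntegral (PadicAlgCl.valued p).v.integer x := hx.tower_top
  have := hv.mem_of_integral hx'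
  rw [Valuation.mem_integer_iff] at this
  exact_mod_cast this

theorem PadicAlgCl.norm_intCast {p : ℕ} [Fact p.Prime] (z : ℤ) :
    ‖(z : PadicAlgCl p)‖ = ‖(z : ℚ_[p])‖ := by
  rw [← PadicAlgCl.norm_extends p (z : ℚ_[p])]
  congr 1

theorem one_le_abs_mul_padic_norm {p : ℕ} [hp : Fact p.Prime] {z : ℤ} (hz : z ≠ 0) :
    1 ≤ |(z : ℝ)| * ‖(z : ℚ_[p])‖ := by
  have hz' : (z : ℚ_[p]) ≠ 0 := by exact_mod_cast hz
  have hp0 : (0 : ℝ) < p := by exact_mod_cast hp.1.pos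
  rw [Padic.norm_eq_zpow_neg_valuation hz', Padic.valuation_intCast, zpow_neg, zpow_natCast,
    ← div_eq_mul_inv, le_div_iff₀ (by positivity), one_mul]
  have h := Int.le_of_dvd (abs_pos.2 hz) ((dvd_abs _ _).2 (padicValInt_dvd (p := p) z))
  exact_mod_cast h

/-- A nonzero algebraic integer of degree at most `4` with all conjugates bounded by `A` has `p`-adic
absolute value at least `A ^ (-4)`: its norm is a nonzero integer, and all of its `p`-adic
conjugates are integral. -/
theorem padic_liouville {p : ℕ} [Fact p.Prime] (K : IntermediateField ℚ (PadicAlgCl p))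
    [FiniteDimensional ℚ K] (hK : Module.finrank ℚ K ≤ 4) (ξ : K) (hint : IsIntegral ℤ ξ)
    (hne : ξ ≠ 0) (A : ℝ) (hA : 1 ≤ A) (hσ : ∀ σ : K →ₐ[ℚ] ℂ, ‖σ ξ‖ ≤ A) :
    1 ≤ A ^ 4 * ‖(ξ : PadicAlgCl p)‖ := by
  classical
  obtain ⟨z, hz⟩ := IsIntegrallyClosed.isIntegral_iff.1 (Algebra.isIntegral_norm ℚ hint)
  have hz' : Algebra.norm ℚ ξ = (z : ℚ) := by rw [← hz]; simp
  have hz0 : z ≠ 0 := by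
    rintro rfl
    exact hne (Algebra.norm_eq_zero_iff.1 (hz'.trans Int.cast_zero))
  have h1 : |(z : ℝ)| ≤ A ^ 4 := by
    have h := Algebra.norm_eq_prod_embeddings ℚ ℂ ξ
    rw [hz'] at h
    have h2 : |(z : ℝ)| = ∏ σ : K →ₐ[ℚ] ℂ, ‖σ ξ‖ := by
      rw [← norm_prod, ← h]; simp
    rw [h2]
    calc ∏ σ : K →ₐ[ℚ] ℂ, ‖σ ξ‖ ≤ ∏ _σ : K →ₐ[ℚ] ℂ, A :=
          prod_le_prod (fun _ _ => norm_nonneg _) fun σ _ => hσ σ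
      _ = A ^ Module.finrank ℚ K := by
          rw [prod_const, card_univ, AlgHom.card]
      _ ≤ A ^ 4 := pow_le_pow_right₀ hA hK
  have h2 : ‖(z : ℚ_[p])‖ ≤ ‖(ξ : PadicAlgCl p)‖ := by
    have h := Algebra.norm_eq_prod_embeddings ℚ (PadicAlgCl p) ξ
    rw [hz'] at h
    have h2 : ‖(z : ℚ_[p])‖ = ∏ σ : K →ₐ[ℚ] (PadicAlgCl p), ‖σ ξ‖ := by
      rw [← norm_prod, ← h, ← PadicAlgCl.norm_intCast]; simp
    have h3 := mul_prod_erase univ (fun σ : K →ₐ[ℚ] (PadicAlgCl p) => ‖σ ξ‖) (mem_univ K.val)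
    rw [h2]
    refine h3.symm.trans_le ?_
    refine mul_le_of_le_one_right (norm_nonneg _) (prod_le_one (fun _ _ => norm_nonneg _) ?_)
    intro σ _
    exact PadicAlgCl.norm_le_one_of_isIntegral (hint.map (σ.restrictScalars ℤ))
  calc (1 : ℝ) ≤ |(z : ℝ)| * ‖(z : ℚ_[p])‖ := one_le_abs_mul_padic_norm hz0
    _ ≤ _ := mul_le_mul h1 h2 (norm_nonneg _) (by positivity)

/-- For `0 ≤ c ≤ q` the numbers `-c ± √(c² - q²)` are conjugate complex numbers of modulus `q`. -/
theorem Complex.norm_neg_add_of_sq (c q : ℤ) (hc : 0 ≤ c) (hcq : c ≤ q) (w : ℂ)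
    (hw : w ^ 2 = (c : ℂ) ^ 2 - (q : ℂ) ^ 2) : ‖-(c : ℂ) + w‖ = q := by
  have hq : (0 : ℝ) ≤ q := by exact_mod_cast hc.trans hcq
  have hcq' : (c : ℝ) ≤ q := by exact_mod_cast hcq
  have hc' : (0 : ℝ) ≤ c := by exact_mod_cast hc
  have hre := congrArg Complex.re hw
  have him := congrArg Complex.im hw
  simp [pow_two] at hre him
  have hre0 : w.re = 0 := by
    have h0 : w.re * w.im = 0 := by linarith
    rcases mul_eq_zero.1 h0 with h | h
    · exact h
    · rw [h] at hre
      have : w.re * w.re ≤ 0 := by nlinarith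
      nlinarith [mul_self_nonneg w.re, mul_self_eq_zero.1 (le_antisymm this (mul_self_nonneg _))]
  have : ‖-(c : ℂ) + w‖ ^ 2 = (q : ℝ) ^ 2 := by
    rw [Complex.sq_norm, Complex.normSq_apply]
    simp [hre0] at hre ⊢
    linarith
  exact (pow_left_inj₀ (norm_nonneg _) hq two_ne_zero).1 this

theorem finrank_adjoin_sqrt_le {F : Type*} [Field F] [Algebra ℚ F] (θ : F) (r : ℤ)
    (h : θ ^ 2 = r) : FiniteDimensional ℚ (IntermediateField.adjoin ℚ {θ}) ∧
      Module.finrank ℚ (IntermediateField.adjoin ℚ {θ}) ≤ 2 := by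
  have hmon : (Polynomial.X ^ 2 - Polynomial.C (r : ℚ)).Monic :=
    Polynomial.monic_X_pow_sub_C _ two_ne_zero
  have hroot : Polynomial.aeval θ (Polynomial.X ^ 2 - Polynomial.C (r : ℚ)) = 0 := by
    simp [h]
  have hint : IsIntegral ℚ θ := ⟨_, hmon, by simpa [Polynomial.aeval_def] using hroot⟩
  refine ⟨IntermediateField.adjoin.finiteDimensional hint, ?_⟩
  rw [IntermediateField.adjoin.finrank hint]
  refine (Polynomial.natDegree_le_of_dvd (minpoly.dvd _ _ hroot) hmon.ne_zero).trans ?_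
  rw [Polynomial.natDegree_X_pow_sub_C]

/-- Liouville's inequality for the values of the auxiliary function: such a value, cleared of its
denominator `q ^ (r * L)`, is an algebraic integer of `ℚ(√d, √(c² - q²))`, so it vanishes once its
`p`-adic absolute value is too small. Here `x + y√d` has conjugates of modulus at most `2 * x`, and
`-c + √(c² - q²)` has conjugates of modulus `q`. -/
theorem value_eq_zero_of_small {p : ℕ} [Fact p.Prime] (d x y c q : ℤ) (hd : 0 ≤ d) (hx : 0 ≤ x)
    (hy : 0 ≤ y) (hxy : x ^ 2 - d * y ^ 2 = 1) (hc : 0 ≤ c) (hcq : c ≤ q) (hq : 1 ≤ q)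
    (θ δ : PadicAlgCl p) (hθ : θ ^ 2 = d) (hδ : δ ^ 2 = (c : PadicAlgCl p) ^ 2 - q ^ 2)
    (K L t e r : ℕ) (τ H W : ℝ) (hK : 1 ≤ K) (hL : 1 ≤ L)
    (hτ : t ≤ τ) (hτ1 : 1 ≤ τ) (hH : 1 ≤ H) (hW : 2 * x ≤ W) (hW1 : 1 ≤ W)
    (a : Fin K → Fin L → ℤ) (ha : ∀ i j, |(a i j : ℝ)| ≤ H) (ξ : PadicAlgCl p)
    (hξ : ξ = ∑ i, ∑ j, (a i j : PadicAlgCl p) * (t : PadicAlgCl p) ^ (i : ℕ)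
      * ((x + y * θ) ^ e) ^ (j : ℕ)
      * ((q : PadicAlgCl p) ^ (r * (L - j)) * (-(c : PadicAlgCl p) + δ) ^ (r * j)))
    (hsmall : (K * L * (H * τ ^ K * (W ^ e) ^ L * (q : ℝ) ^ (r * L))) ^ 4 * ‖ξ‖ < 1) : ξ = 0 := by
  obtain ⟨hf1, hr1⟩ := finrank_adjoin_sqrt_le θ d hθ
  obtain ⟨hf2, hr2⟩ := finrank_adjoin_sqrt_le δ (c ^ 2 - q ^ 2) (by rw [hδ]; push_cast; rfl)
  set E : IntermediateField ℚ (PadicAlgCl p) :=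
    IntermediateField.adjoin ℚ {θ} ⊔ IntermediateField.adjoin ℚ {δ} with hE
  have hfE : FiniteDimensional ℚ E := IntermediateField.finiteDimensional_sup _ _
  have hrE : Module.finrank ℚ E ≤ 4 :=
    (IntermediateField.finrank_sup_le _ _).trans (Nat.mul_le_mul hr1 hr2)
  let θE : E := ⟨θ, (le_sup_left : _ ≤ E) (IntermediateField.mem_adjoin_simple_self ℚ θ)⟩
  let δE : E := ⟨δ, (le_sup_right : _ ≤ E) (IntermediateField.mem_adjoin_simple_self ℚ δ)⟩
  have hθE : θE ^ 2 = (d : E) := Subtype.ext (by simpa [θE] using hθ)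
  have hδE : δE ^ 2 = (c : E) ^ 2 - (q : E) ^ 2 := Subtype.ext (by simpa [δE] using hδ)
  let ξE : E := ∑ i : Fin K, ∑ j : Fin L, (a i j : E) * (t : E) ^ (i : ℕ)
      * ((x + y * θE) ^ e) ^ (j : ℕ)
      * ((q : E) ^ (r * (L - j)) * (-(c : E) + δE) ^ (r * j))
  have hξE : (ξE : PadicAlgCl p) = ξ := by
    rw [hξ]; simp [ξE, θE, δE]
  have hintZ : ∀ z : ℤ, IsIntegral ℤ (z : E) := fun z => isIntegral_algebraMap (x := z)
  have hθi : IsIntegral ℤ θE := IsIntegral.of_pow two_pos (by rw [hθE]; exact hintZ d)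
  have hδi : IsIntegral ℤ δE := IsIntegral.of_pow two_pos (by
    rw [hδE]; exact ((hintZ c).pow 2).sub ((hintZ q).pow 2))
  have hint : IsIntegral ℤ ξE := by
    refine IsIntegral.sum _ fun i _ => IsIntegral.sum _ fun j _ => ?_
    refine IsIntegral.mul (IsIntegral.mul (IsIntegral.mul (hintZ _) (IsIntegral.pow ?_ _)) ?_) ?_
    · exact_mod_cast hintZ t
    · exact (((hintZ x).add ((hintZ y).mul hθi)).pow _).pow _
    · exact ((hintZ q).pow _).mul (((hintZ c).neg.add hδi).pow _)
  have hq' : (1 : ℝ) ≤ q := by exact_mod_cast hq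
  have hxr : (0 : ℝ) ≤ x := by exact_mod_cast hx
  have hyr : (0 : ℝ) ≤ y := by exact_mod_cast hy
  have hW0 : 0 ≤ W := by linarith
  have hσ : ∀ σ : E →ₐ[ℚ] ℂ,
      ‖σ ξE‖ ≤ K * L * (H * τ ^ K * (W ^ e) ^ L * (q : ℝ) ^ (r * L)) := by
    intro σ
    have hσθ : (σ θE) ^ 2 = (d : ℂ) := by rw [← map_pow, hθE, map_intCast]
    have hσδ : (σ δE) ^ 2 = (c : ℂ) ^ 2 - (q : ℂ) ^ 2 := by rw [← map_pow, hδE]; simp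
    have h1 : ‖(x : ℂ) + y * σ θE‖ ≤ W := by
      refine (norm_add_le _ _).trans (le_trans ?_ hW)
      have hdn : ‖σ θE‖ ^ 2 = (d : ℝ) := by
        rw [← norm_pow, hσθ, Complex.norm_intCast, abs_of_nonneg (by exact_mod_cast hd)]
      have hpell : (x : ℝ) ^ 2 - d * y ^ 2 = 1 := by exact_mod_cast hxy
      have : (y * ‖σ θE‖ : ℝ) ≤ x := by
        apply le_of_sq_le_sq _ hxr
        rw [mul_pow, hdn]; linarith
      rw [norm_mul, Complex.norm_intCast, Complex.norm_intCast, abs_of_nonneg hxr,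
        abs_of_nonneg hyr]
      linarith
    have h2 : ‖-(c : ℂ) + σ δE‖ = q := Complex.norm_neg_add_of_sq c q hc hcq _ hσδ
    have hterm : ∀ (i : Fin K) (j : Fin L), ‖(a i j : ℂ) * (t : ℂ) ^ (i : ℕ)
        * ((x + y * σ θE) ^ e) ^ (j : ℕ)
        * ((q : ℂ) ^ (r * (L - j)) * (-(c : ℂ) + σ δE) ^ (r * j))‖
        ≤ H * τ ^ K * (W ^ e) ^ L * (q : ℝ) ^ (r * L) := by
      intro i j
      simp only [norm_mul, norm_pow, h2]
      rw [Complex.norm_intCast, Complex.norm_natCast, Complex.norm_intCast, abs_of_pos (by linarith : (0:ℝ) < q),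
        ← pow_add, ← Nat.mul_add, Nat.sub_add_cancel j.2.le]
      have t1 : (t : ℝ) ^ (i : ℕ) ≤ τ ^ K :=
        (pow_le_pow_left₀ (by positivity) hτ _).trans (pow_le_pow_right₀ hτ1 i.2.le)
      have t2 : (‖(x : ℂ) + y * σ θE‖ ^ e) ^ (j : ℕ) ≤ (W ^ e) ^ L :=
        (pow_le_pow_left₀ (by positivity) (pow_le_pow_left₀ (by positivity) h1 _) _).trans
          (pow_le_pow_right₀ (one_le_pow₀ hW1) j.2.le)
      have t0 := ha i j
      gcongr
    have hσξ : σ ξE = ∑ i : Fin K, ∑ j : Fin L, (a i j : ℂ) * (t : ℂ) ^ (i : ℕ)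
        * ((x + y * σ θE) ^ e) ^ (j : ℕ)
        * ((q : ℂ) ^ (r * (L - j)) * (-(c : ℂ) + σ δE) ^ (r * j)) := by
      simp [ξE]
    rw [hσξ]
    refine (norm_sum_le_of_le _ fun i _ => norm_sum_le_of_le _ fun j _ => hterm i j).trans ?_
    simp [mul_assoc]
  by_contra hne
  have hA : (1 : ℝ) ≤ K * L * (H * τ ^ K * (W ^ e) ^ L * (q : ℝ) ^ (r * L)) := by
    have hK' : (1 : ℝ) ≤ K := by exact_mod_cast hK
    have hL' : (1 : ℝ) ≤ L := by exact_mod_cast hL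
    refine one_le_mul_of_one_le_of_one_le (one_le_mul_of_one_le_of_one_le hK' hL') ?_
    refine one_le_mul_of_one_le_of_one_le (one_le_mul_of_one_le_of_one_le
      (one_le_mul_of_one_le_of_one_le hH (one_le_pow₀ hτ1)) (one_le_pow₀ (one_le_pow₀ hW1)))
      (one_le_pow₀ hq')
  have := padic_liouville E hrE ξE hint (by
    rintro h0; rw [h0] at hξE; exact hne (by simpa using hξE.symm)) _ hA hσ
  rw [hξE] at this
  linarith
end

/-! ### Linear forms in two `p`-adic logarithms -/

/-- Powers are `1`-Lipschitz on the unit ball of an ultrametric field. -/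
theorem norm_pow_sub_pow_le {F : Type*} [NormedField F] [IsUltrametricDist F] {a b : F}
    (ha : ‖a‖ ≤ 1) (hb : ‖b‖ ≤ 1) (m : ℕ) : ‖a ^ m - b ^ m‖ ≤ ‖a - b‖ := by
  rw [← Commute.geom_sum₂_mul (Commute.all a b), norm_mul]
  refine mul_le_of_le_one_left (norm_nonneg _) ?_
  refine IsUltrametricDist.norm_sum_le_of_forall_le_of_nonneg zero_le_one fun i _ => ?_
  rw [norm_mul, norm_pow, norm_pow]
  exact mul_le_one₀ (pow_le_one₀ (norm_nonneg _) ha) (by positivity)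
    (pow_le_one₀ (norm_nonneg _) hb)

/-- A Pell unit `u = Xₙ + Yₙ√d` satisfies `u² - 2 Xₙ u + 1 = 0`; if `q Xₙ ≡ -c` modulo a high
power of `p`, it is therefore `p`-adically close to a root `(-c + δ) / q` of `q Z² + 2 c Z + q`. -/
theorem exists_close_root {p : ℕ} [hp : Fact p.Prime] (c q Xn Yn d : ℤ) (θ : PadicAlgCl p)
    (hθ : θ ^ 2 = d) (hpell : Xn ^ 2 - d * Yn ^ 2 = 1) (hpq : ¬ (p : ℤ) ∣ q) (w : ℕ)
    (hdvd : (p : ℤ) ^ (2 * w) ∣ q * Xn + c) :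
    ∃ δ : PadicAlgCl p, δ ^ 2 = (c : PadicAlgCl p) ^ 2 - q ^ 2 ∧
      ‖((Xn : PadicAlgCl p) + Yn * θ) - (-c + δ) / q‖ ≤ ((p : ℝ) ^ w)⁻¹ := by
  obtain ⟨δ, hδ⟩ := IsAlgClosed.exists_pow_nat_eq ((c : PadicAlgCl p) ^ 2 - q ^ 2) two_pos
  have hq0 : (q : PadicAlgCl p) ≠ 0 := by
    have : q ≠ 0 := by rintro rfl; exact hpq (dvd_zero _)
    exact_mod_cast this
  have hqn : ‖(q : PadicAlgCl p)‖ = 1 := by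
    rw [PadicAlgCl.norm_intCast]
    refine le_antisymm (Padic.norm_int_le_one q) (not_lt.1 fun h => hpq ?_)
    exact (Padic.norm_intCast_lt_one_iff).1 h
  have hpell' : (Xn : PadicAlgCl p) ^ 2 - d * (Yn : PadicAlgCl p) ^ 2 = 1 := by exact_mod_cast hpell
  set u : PadicAlgCl p := (Xn : PadicAlgCl p) + Yn * θ with hu
  have hintZ : ∀ z : ℤ, IsIntegral ℤ (z : PadicAlgCl p) := fun z => isIntegral_algebraMap (x := z)
  have hθi : IsIntegral ℤ θ := IsIntegral.of_pow two_pos (by rw [hθ]; exact hintZ d)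
  have hun : ‖u‖ ≤ 1 := PadicAlgCl.norm_le_one_of_isIntegral ((hintZ _).add ((hintZ _).mul hθi))
  have hpn : ‖(p : PadicAlgCl p)‖ = (p : ℝ)⁻¹ := by
    have := PadicAlgCl.norm_intCast (p := p) (p : ℤ)
    simpa using this
  have hprod : (u - (-c + δ) / q) * (u - (-c + -δ) / q)
      = u * (2 * ((q * Xn + c : ℤ) : PadicAlgCl p) / q) := by
    have hu2 : u ^ 2 + 1 = 2 * Xn * u := by
      rw [hu, ← hpell']; linear_combination (Yn : PadicAlgCl p) ^ 2 * hθ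
    push_cast
    field_simp
    linear_combination (q : PadicAlgCl p) ^ 2 * hu2 - hδ
  obtain ⟨z, hz⟩ := hdvd
  have hnorm : ‖u - (-c + δ) / q‖ * ‖u - (-c + -δ) / q‖ ≤ ((p : ℝ) ^ w)⁻¹ * ((p : ℝ) ^ w)⁻¹ := by
    rw [← norm_mul, hprod, hz, norm_mul, norm_div, hqn, div_one, norm_mul]
    have h2 : ‖(2 : PadicAlgCl p)‖ ≤ 1 := by
      have := PadicAlgCl.norm_le_one_of_isIntegral (hintZ 2)
      simpa using this
    have h3 : ‖(((p : ℤ) ^ (2 * w) * z : ℤ) : PadicAlgCl p)‖ ≤ ((p : ℝ) ^ w)⁻¹ * ((p : ℝ) ^ w)⁻¹ := by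
      push_cast
      rw [norm_mul, norm_pow, hpn]
      have := PadicAlgCl.norm_le_one_of_isIntegral (hintZ z)
      calc ((p : ℝ)⁻¹) ^ (2 * w) * ‖(z : PadicAlgCl p)‖ ≤ ((p : ℝ)⁻¹) ^ (2 * w) * 1 := by gcongr
        _ = _ := by rw [two_mul, pow_add, inv_pow, mul_one]
    calc ‖u‖ * (‖(2 : PadicAlgCl p)‖ * ‖(((p : ℤ) ^ (2 * w) * z : ℤ) : PadicAlgCl p)‖)
        ≤ 1 * (1 * (((p : ℝ) ^ w)⁻¹ * ((p : ℝ) ^ w)⁻¹)) := by gcongr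
      _ = _ := by ring
  rcases le_or_gt ‖u - (-c + δ) / q‖ ((p : ℝ) ^ w)⁻¹ with h | h
  · exact ⟨δ, hδ, h⟩
  · refine ⟨-δ, by rw [neg_sq, hδ], not_lt.1 fun h' => ?_⟩
    exact absurd hnorm (not_le.2 (mul_lt_mul'' h h' (by positivity) (by positivity)))

/-- The transcendence argument. With `β = x + y√d` and `g` the root of `q Z² + 2 c Z + q` close to
`β ^ n`, the integer `t = s₁ + n s₂` has `β ^ (k t)` close to `β ^ (k s₁) * g ^ (k s₂)`. An
auxiliary function `∑ a_{ij} t ^ i β ^ (k j t)` divisible by `p ^ (8 h)` at every integer `t`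
therefore takes very small values at the algebraic points `β ^ (k s₁) * g ^ (k s₂)`. They vanish by
Liouville's inequality, and the zero estimate contradicts `a ≠ 0`. -/
theorem two_log_contradiction {p : ℕ} [hp : Fact p.Prime] (d x y c q : ℤ)
    (hd : 0 ≤ d) (hdns : ∀ n : ℤ, d ≠ n * n) (hx : 2 ≤ x) (hy : 0 ≤ y)
    (hxy : x ^ 2 - d * y ^ 2 = 1) (hc : 0 ≤ c) (hcq : c ≤ q) (hq : 1 ≤ q)
    (hpq : ¬ (p : ℤ) ∣ q) (n k : ℕ) (hk1 : 1 ≤ k)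
    (hk : (p : ℤ√d) ∣ (⟨x, y⟩ : ℤ√d) ^ k - 1)
    (K L S₁ S₂ h : ℕ) (hn : S₁ ≤ n) (hcard : K * L ≤ S₁ * S₂)
    (hdvd : (p : ℤ) ^ (2 * (8 * h)) ∣ q * ((⟨x, y⟩ : ℤ√d) ^ n).re + c)
    (hpig : 2 * (8 * h) * (8 * h + K) < h * (K * L))
    (hsize : (K * L * ((S₁ + L + n * S₂ : ℕ) ^ K * ((2 * x) ^ (k * (S₁ + L))) ^ L
      * q ^ (k * S₂ * L)) : ℝ) < (p : ℝ) ^ h) : False := by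
  set w := 8 * h with hw
  set β : ℤ√d := ⟨x, y⟩ with hβ
  have hKL : 0 < K * L := by
    rcases Nat.eq_zero_or_pos (K * L) with h0 | h0
    · rw [h0] at hpig; omega
    · exact h0
  have hK1 : 1 ≤ K := Nat.pos_of_mul_pos_right hKL
  have hL1 : 1 ≤ L := Nat.pos_of_mul_pos_left hKL
  obtain ⟨θ, hθ⟩ := IsAlgClosed.exists_pow_nat_eq (d : PadicAlgCl p) two_pos
  let φ : ℤ√d →+* PadicAlgCl p := Zsqrtd.lift ⟨θ, by rw [← pow_two, hθ]⟩
  have hφ : ∀ z : ℤ√d, φ z = (z.re : PadicAlgCl p) + z.im * θ := fun z => rfl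
  have hφinj : Function.Injective φ := Zsqrtd.lift_injective _ hdns
  have hintZ : ∀ z : ℤ, IsIntegral ℤ (z : PadicAlgCl p) := fun z => isIntegral_algebraMap (x := z)
  have hθi : IsIntegral ℤ θ := IsIntegral.of_pow two_pos (by rw [hθ]; exact hintZ d)
  have hφn : ∀ z, ‖φ z‖ ≤ 1 := fun z => by
    rw [hφ]; exact PadicAlgCl.norm_le_one_of_isIntegral ((hintZ _).add ((hintZ _).mul hθi))
  have hpn : ‖(p : PadicAlgCl p)‖ = (p : ℝ)⁻¹ := by
    have := PadicAlgCl.norm_intCast (p := p) (p : ℤ)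
    simpa using this
  have hp2 : (2 : ℝ) ≤ p := by exact_mod_cast hp.1.two_le
  have hqn : ‖(q : PadicAlgCl p)‖ = 1 := by
    rw [PadicAlgCl.norm_intCast]
    refine le_antisymm (Padic.norm_int_le_one q) (not_lt.1 fun h => hpq ?_)
    exact Padic.norm_intCast_lt_one_iff.1 h
  have hq0 : (q : PadicAlgCl p) ≠ 0 := by
    intro h; rw [h] at hqn; simp at hqn
  have hpelln : (β ^ n).re ^ 2 - d * (β ^ n).im ^ 2 = 1 := by
    have h1 : (β ^ n).norm = 1 := by
      rw [map_pow Zsqrtd.normMonoidHom β n |> (fun h => (h : (β ^ n).norm = β.norm ^ n))]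
      have : β.norm = 1 := by rw [Zsqrtd.norm_def, hβ]; linarith
      rw [this, one_pow]
    rw [Zsqrtd.norm_def] at h1; linarith
  obtain ⟨δ, hδ, hclose⟩ := exists_close_root (p := p) c q _ _ d θ hθ hpelln hpq w hdvd
  set g : PadicAlgCl p := (-c + δ) / q with hg
  rw [← hφ] at hclose
  have hδi : IsIntegral ℤ δ := IsIntegral.of_pow two_pos (by
    rw [hδ]; exact ((hintZ c).pow 2).sub ((hintZ q).pow 2))
  have hgn : ‖g‖ ≤ 1 := by
    rw [hg, norm_div, hqn, div_one]
    exact PadicAlgCl.norm_le_one_of_isIntegral ((hintZ c).neg.add hδi)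
  -- coefficients of size `p ^ h` making the auxiliary function divisible by `p ^ w` at the first
  -- `w + K` integers, hence at all integers
  obtain ⟨a, ha0, haH, hadvd⟩ := exists_small_coeffs (d := d) p hp.1.two_le w (w + K) h
    (κ := Fin K × Fin L)
    (fun ij t => (t : ℤ√d) ^ (ij.1 : ℕ) * ((β ^ k) ^ (ij.2 : ℕ)) ^ t) (by simpa using hpig)
  have hall := dvd_expPoly_of_dvd_initial (p : ℤ√d) (β ^ k) hk w (w + K) K L le_rfl
    (fun i j => ((a (i, j) : ℤ) : ℤ√d)) (by
      intro t ht
      have := hadvd t ht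
      rwa [Fintype.sum_prod_type] at this)
  have hvanish : ∀ s₁ < S₁ + L, ∀ s₂ < S₂, ∑ i : Fin K, ∑ j : Fin L,
      (a (i, j) : PadicAlgCl p) * (((s₁ + n * s₂ : ℕ) : PadicAlgCl p) ^ (i : ℕ)
        * ((φ β ^ k) ^ s₁ * (g ^ k) ^ s₂) ^ (j : ℕ)) = 0 := by
    intro s₁ h₁ s₂ h₂
    set t := s₁ + n * s₂ with ht
    set V := ∑ i : Fin K, ∑ j : Fin L, (a (i, j) : PadicAlgCl p) * ((t : PadicAlgCl p) ^ (i : ℕ)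
        * ((φ β ^ k) ^ s₁ * (g ^ k) ^ s₂) ^ (j : ℕ)) with hV
    have hVn : ‖V‖ ≤ ((p : ℝ) ^ w)⁻¹ := by
      obtain ⟨z, hz⟩ := hall t
      have hsplit : V = (p : PadicAlgCl p) ^ w * φ z
          + ∑ i : Fin K, ∑ j : Fin L, (a (i, j) : PadicAlgCl p) * ((t : PadicAlgCl p) ^ (i : ℕ)
            * ((φ β ^ (k * s₁ * j)) * (g ^ (k * s₂ * j) - φ (β ^ n) ^ (k * s₂ * j)))) := by
        have := congrArg φ hz
        simp only [map_sum, map_mul, map_pow, map_intCast, map_natCast] at this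
        rw [← this, ← Finset.sum_add_distrib, hV]
        refine Finset.sum_congr rfl fun i _ => ?_
        rw [← Finset.sum_add_distrib]
        refine Finset.sum_congr rfl fun j _ => ?_
        rw [ht, map_pow]
        ring
      rw [hsplit]
      refine (IsUltrametricDist.norm_add_le_max _ _).trans (max_le ?_ ?_)
      · rw [norm_mul, norm_pow, hpn, inv_pow]
        exact mul_le_of_le_one_right (by positivity) (hφn z)
      · refine IsUltrametricDist.norm_sum_le_of_forall_le_of_nonneg (by positivity) fun i _ => ?_
        refine IsUltrametricDist.norm_sum_le_of_forall_le_of_nonneg (by positivity) fun j _ => ?_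
        rw [norm_mul, norm_mul, norm_mul, norm_pow, norm_pow]
        have e1 : ‖(a (i, j) : PadicAlgCl p)‖ ≤ 1 :=
          PadicAlgCl.norm_le_one_of_isIntegral (hintZ _)
        have e2 : ‖(t : PadicAlgCl p)‖ ^ (i : ℕ) ≤ 1 := pow_le_one₀ (norm_nonneg _) (by
          have := PadicAlgCl.norm_le_one_of_isIntegral (hintZ (t : ℤ))
          simpa using this)
        have e3 : ‖φ β‖ ^ (k * s₁ * j) ≤ 1 := pow_le_one₀ (norm_nonneg _) (hφn _)
        have e4 : ‖g ^ (k * s₂ * j) - φ (β ^ n) ^ (k * s₂ * j)‖ ≤ ((p : ℝ) ^ w)⁻¹ :=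
          (norm_pow_sub_pow_le hgn (hφn _) _).trans (by rw [norm_sub_rev]; exact hclose)
        calc _ ≤ 1 * (1 * (1 * ((p : ℝ) ^ w)⁻¹)) := by gcongr
          _ = _ := by ring
    have hq1 : (1 : ℝ) ≤ q := by exact_mod_cast hq
    have hx1 : (1 : ℝ) ≤ 2 * x := by
      have : (2 : ℝ) ≤ x := by exact_mod_cast hx
      linarith
    set ξ : PadicAlgCl p := (q : PadicAlgCl p) ^ (k * s₂ * L) * V with hξ
    have hξ0 : ξ = 0 := by
      refine value_eq_zero_of_small d x y c q hd (by omega) hy hxy hc hcq hq θ δ hθ hδ K L t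
        (k * s₁) (k * s₂) (S₁ + L + n * S₂ : ℕ) ((p : ℝ) ^ h) (2 * x) hK1 hL1 ?_ ?_ ?_ le_rfl hx1
        (fun i j => a (i, j)) ?_ ξ ?_ ?_
      · have : n * s₂ ≤ n * S₂ := Nat.mul_le_mul_left _ h₂.le
        exact_mod_cast (by omega : t ≤ S₁ + L + n * S₂)
      · exact_mod_cast (by omega : 1 ≤ S₁ + L + n * S₂)
      · exact one_le_pow₀ (by linarith)
      · intro i j; exact_mod_cast haH (i, j)
      · rw [hξ, hV, Finset.mul_sum]
        refine Finset.sum_congr rfl fun i _ => ?_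
        rw [Finset.mul_sum]
        refine Finset.sum_congr rfl fun j _ => ?_
        have e1 : (-(c : PadicAlgCl p) + δ) = q * g := by rw [hg]; field_simp
        have e2 : k * s₂ * L = k * s₂ * (L - j) + k * s₂ * j := by
          rw [← Nat.mul_add, Nat.sub_add_cancel j.2.le]
        have e3 : φ β = x + y * θ := hφ β
        rw [e1, e2, e3]
        ring_nf
      · have hA : (K * L * ((p : ℝ) ^ h * ((S₁ + L + n * S₂ : ℕ) : ℝ) ^ K
            * ((2 * x : ℝ) ^ (k * s₁)) ^ L * (q : ℝ) ^ (k * s₂ * L))) < (p : ℝ) ^ (2 * h) := by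
          calc _ ≤ (p : ℝ) ^ h * (K * L * (((S₁ + L + n * S₂ : ℕ) : ℝ) ^ K
                * ((2 * x : ℝ) ^ (k * (S₁ + L))) ^ L * (q : ℝ) ^ (k * S₂ * L))) := by
                rw [show (K * L * ((p : ℝ) ^ h * ((S₁ + L + n * S₂ : ℕ) : ℝ) ^ K
                  * ((2 * x : ℝ) ^ (k * s₁)) ^ L * (q : ℝ) ^ (k * s₂ * L)))
                  = (p : ℝ) ^ h * (K * L * (((S₁ + L + n * S₂ : ℕ) : ℝ) ^ K
                  * ((2 * x : ℝ) ^ (k * s₁)) ^ L * (q : ℝ) ^ (k * s₂ * L))) by ring]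
                gcongr
            _ < (p : ℝ) ^ h * (p : ℝ) ^ h := by
                refine mul_lt_mul_of_pos_left ?_ (by positivity)
                exact_mod_cast hsize
            _ = _ := by ring
        have hξn : ‖ξ‖ ≤ ((p : ℝ) ^ w)⁻¹ := by
          rw [hξ, norm_mul, norm_pow, hqn, one_pow, one_mul]; exact hVn
        calc _ ≤ (K * L * ((p : ℝ) ^ h * ((S₁ + L + n * S₂ : ℕ) : ℝ) ^ K
            * ((2 * x : ℝ) ^ (k * s₁)) ^ L * (q : ℝ) ^ (k * s₂ * L))) ^ 4 * ((p : ℝ) ^ w)⁻¹ := by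
              gcongr
          _ < ((p : ℝ) ^ (2 * h)) ^ 4 * ((p : ℝ) ^ w)⁻¹ := by
              refine mul_lt_mul_of_pos_right ?_ (by positivity)
              exact pow_lt_pow_left₀ hA (by positivity) (by norm_num)
          _ = 1 := by
              rw [← pow_mul, hw, show 2 * h * 4 = 8 * h by ring]
              exact mul_inv_cancel₀ (by positivity)
    rcases mul_eq_zero.1 hξ0 with h0 | h0
    · exact absurd h0 (pow_ne_zero _ hq0)
    · exact h0
  -- what follows supplies the hypotheses of the zero estimate at the base points `φ β ^ k`, `g ^ k`
  have hββ' : β * ⟨x, -y⟩ = 1 := by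
    ext <;> simp [hβ]
    · linarith
    · ring
  have hφβ0 : φ β ≠ 0 := by
    intro h0
    have := congrArg φ hββ'
    rw [map_mul, h0, zero_mul, map_one] at this
    exact zero_ne_one this
  have hg0 : g ≠ 0 := by
    intro h0
    rw [hg, div_eq_zero_iff, or_iff_left hq0] at h0
    have h1 : δ = c := by linear_combination h0
    rw [h1] at hδ
    exact pow_ne_zero 2 hq0 (by linear_combination hδ)
  have hinj : ∀ s t : ℕ, (φ β ^ k) ^ s = (φ β ^ k) ^ t → s = t := by
    intro s t hst
    rw [← pow_mul, ← pow_mul, ← map_pow, ← map_pow] at hst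
    have h1 := congrArg (Zsqrtd.toReal hd) (hφinj hst)
    rw [map_pow, map_pow] at h1
    have hgt : 1 < Zsqrtd.toReal hd β := by
      have e : Zsqrtd.toReal hd β = x + y * Real.sqrt d := rfl
      rw [e]
      have hx' : (2 : ℝ) ≤ x := by exact_mod_cast hx
      have hy' : (0 : ℝ) ≤ y := by exact_mod_cast hy
      have := mul_nonneg hy' (Real.sqrt_nonneg d)
      linarith
    have h2 := pow_right_injective₀ (by linarith) hgt.ne' h1
    exact Nat.eq_of_mul_eq_mul_left hk1 h2
  have hz := zero_estimate K L S₁ S₂ n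
    (fun j : Fin L => ∑ i : Fin K, Polynomial.C (a (i, j) : PadicAlgCl p) * Polynomial.X ^ (i : ℕ))
    (by
      intro j
      refine lt_of_le_of_lt (Polynomial.natDegree_sum_le_of_forall_le (n := K - 1) _ _ ?_)
        (by omega)
      intro i _
      refine (Polynomial.natDegree_C_mul_X_pow_le _ _).trans ?_
      have := i.2; omega)
    (φ β ^ k) (g ^ k) (pow_ne_zero _ hφβ0) (pow_ne_zero _ hg0) hinj hn hcard (by
      intro s₁ h₁ s₂ h₂
      rw [← hvanish s₁ h₁ s₂ h₂, Finset.sum_comm]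
      refine Finset.sum_congr rfl fun j _ => ?_
      rw [Polynomial.eval_finsetSum, Finset.sum_mul]
      refine Finset.sum_congr rfl fun i _ => ?_
      simp only [Polynomial.eval_mul, Polynomial.eval_C, Polynomial.eval_pow, Polynomial.eval_X]
      ring)
  apply ha0
  funext ⟨i, j⟩
  have := congrArg (fun P => Polynomial.coeff P (i : ℕ)) (hz j)
  simp only [Polynomial.finsetSum_coeff, Polynomial.coeff_C_mul_X_pow, Polynomial.coeff_zero] at this
  rw [Finset.sum_eq_single i (by
    intro i' _ hne
    rw [if_neg (fun h => hne (Fin.ext h.symm))]) (by simp), if_pos rfl] at this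
  exact_mod_cast this

/-! ### Choice of the parameters -/

theorem clog_sq_le {b : ℕ} (hb : 2 ≤ b) : Nat.clog 2 b ^ 2 ≤ 2 * b := by
  have h1 : 2 ^ (Nat.clog 2 b - 1) < b := Nat.pow_pred_clog_lt_self (by norm_num) (by omega)
  have key : ∀ t : ℕ, (t + 1) ^ 2 ≤ 2 * (2 ^ t + 1) := by
    intro t
    rcases Nat.lt_or_ge t 4 with h | h
    · interval_cases t <;> norm_num
    · have : (t + 1) ^ 2 ≤ 2 * 2 ^ t := by
        induction t, h using Nat.le_induction with
        | base => norm_num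
        | succ t ht ih => rw [pow_succ 2]; nlinarith
      omega
  have hpos : 0 < Nat.clog 2 b := Nat.clog_pos (by norm_num) hb
  have := key (Nat.clog 2 b - 1)
  rw [Nat.sub_add_cancel hpos] at this
  omega

/-- The inequality `n ≥ 10¹⁸ b⁴` absorbs a squared logarithm of `n`; proved by comparing fourth
powers, using `ν ^ 8 ≤ 2 ^ (ν - 1)` for `ν ≥ 60`. -/
theorem log_bound {b n : ℕ} (hb : 2 ≤ b) (hn : 10 ^ 18 * b ^ 4 ≤ n) :
    2010000000000 * b ^ 3 * Nat.clog 2 n ^ 2 ≤ n := by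
  set ν := Nat.clog 2 n with hν
  have hb4 : 2 ^ 4 ≤ b ^ 4 := Nat.pow_le_pow_left hb 4
  have h1 : 2 ^ (ν - 1) < n := Nat.pow_pred_clog_lt_self (by norm_num) (by omega)
  have hν60 : 60 ≤ ν := by
    have : n ≤ 2 ^ ν := Nat.le_pow_clog (by norm_num) n
    by_contra h
    have : 2 ^ ν ≤ 2 ^ 59 := Nat.pow_le_pow_right (by norm_num) (by omega)
    omega
  have key : ∀ t : ℕ, 59 ≤ t → (t + 1) ^ 8 ≤ 2 ^ t := by
    intro t ht
    induction t, ht using Nat.le_induction with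
    | base => norm_num
    | succ t ht ih =>
      have h3 : 60 * (t + 1 + 1) ≤ 61 * (t + 1) := by omega
      have h4 : 60 ^ 8 * (t + 1 + 1) ^ 8 ≤ 61 ^ 8 * (t + 1) ^ 8 := by
        rw [← mul_pow, ← mul_pow]; exact Nat.pow_le_pow_left h3 8
      rw [pow_succ 2]
      norm_num at h4 ⊢
      omega
  have h8 : ν ^ 8 ≤ n := by
    have := key (ν - 1) (by omega)
    rw [Nat.sub_add_cancel (by omega)] at this
    omega
  refine le_of_pow_le_pow_left₀ (n := 4) (by norm_num) (Nat.zero_le _) ?_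
  calc (2010000000000 * b ^ 3 * ν ^ 2) ^ 4 = 2010000000000 ^ 4 * (b ^ 4) ^ 3 * ν ^ 8 := by ring
    _ ≤ 10 ^ 54 * (b ^ 4) ^ 3 * n :=
        Nat.mul_le_mul (Nat.mul_le_mul_right _ (by norm_num)) h8
    _ = (10 ^ 18 * b ^ 4) ^ 3 * n := by ring
    _ ≤ n ^ 3 * n := by gcongr
    _ = n ^ 4 := by ring

theorem prod_lt_of_exponents {p A T x q : ℝ} {K L r u e₁ e₂ e₃ e₄ h : ℕ} (hp : 2 ≤ p)
    (hA : A ≤ 2 ^ e₁) (hT0 : 0 ≤ T) (hT : T ≤ 2 ^ e₂) (hx0 : 0 ≤ x)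
    (hx : x ≤ 2 ^ e₃) (hq0 : 0 ≤ q) (hq : q ≤ 2 ^ e₄)
    (hexp : e₁ + (e₂ * K + e₃ * r * L + e₄ * u) < h) :
    A * (T ^ K * (x ^ r) ^ L * q ^ u) < p ^ h := by
  calc A * (T ^ K * (x ^ r) ^ L * q ^ u)
      ≤ 2 ^ e₁ * ((2 ^ e₂) ^ K * ((2 ^ e₃) ^ r) ^ L * (2 ^ e₄) ^ u) := by gcongr
    _ = 2 ^ (e₁ + (e₂ * K + e₃ * r * L + e₄ * u)) := by
        simp only [← pow_mul, ← pow_add]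
    _ < 2 ^ h := pow_lt_pow_right₀ (by norm_num) hexp
    _ ≤ p ^ h := by gcongr

/-- The choice of parameters. A unit `x + y√d` with `x` of size `b ^ m` cannot have
`(b - 1) Xₙ + c` divisible by `b ^ s` with `s ≥ (m - 1) n` when `n ≥ 10¹⁸ b⁴`, provided `m` is at
most of the order of `log n`. -/
theorem size_contradiction {b : ℕ} (hb : 2 ≤ b) (d x y : ℤ) (c : ℤ) (n m s : ℕ)
    (hd : 0 ≤ d) (hdns : ∀ n : ℤ, d ≠ n * n) (hx : 2 ≤ x) (hy : 0 ≤ y)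
    (hxy : x ^ 2 - d * y ^ 2 = 1) (hc : 0 ≤ c) (hcq : c ≤ b - 1)
    (hn : 10 ^ 18 * b ^ 4 ≤ n) (hm : 100 ≤ m) (hmn : m + 2 ≤ 3 * Nat.clog 2 n)
    (hxb : 2 * x ≤ b ^ (m + 2)) (hs : (m - 1) * n ≤ s)
    (hdvd : (b : ℤ) ^ s ∣ (b - 1) * ((⟨x, y⟩ : ℤ√d) ^ n).re + c) : False := by
  obtain ⟨p, hp, hpb⟩ := Nat.exists_prime_and_dvd (n := b) (by omega)
  have : Fact p.Prime := ⟨hp⟩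
  obtain ⟨k, hk1, hk2, hk⟩ := exists_pow_sub_one_dvd p hp x y hxy
  have hpb' : p ≤ b := Nat.le_of_dvd (by omega) hpb
  have hpq : ¬ (p : ℤ) ∣ (b - 1 : ℤ) := by
    intro h
    have h1 : (p : ℤ) ∣ b := by exact_mod_cast hpb
    have h2 : (p : ℤ) ∣ 1 := by simpa using dvd_sub h1 h
    exact hp.one_lt.ne' (by exact_mod_cast Int.eq_one_of_dvd_one (by positivity) h2)
  have hlog := log_bound hb hn
  have hlam := clog_sq_le hb
  have hnν : n ≤ 2 ^ Nat.clog 2 n := Nat.le_pow_clog (by norm_num) n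
  have hbl : b ≤ 2 ^ Nat.clog 2 b := Nat.le_pow_clog (by norm_num) b
  have hlpos : 0 < Nat.clog 2 b := Nat.clog_pos (by norm_num) hb
  set ν := Nat.clog 2 n with hν
  set lam := Nat.clog 2 b with hlamdef
  have hν1 : 1 ≤ ν := by omega
  have hkb : k ≤ 2 * b := by omega
  have hlb : lam ≤ b := by nlinarith
  -- The sizes are forced as follows: `L` by the pigeonhole condition `K * L > 16 (8 h + K)`, `K` by
  -- the archimedean size of the values, `S₁` and `S₂` by `K * L = S₁ * S₂`, with `S₂ = M * S₁`
  -- balancing the heights `M log b` of `β` and `log b` of the quadratic number close to `β ^ n`.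
  set M := m + 2 with hM
  set L := 2048 * ν with hL
  set S₁ := 1025 * 2048 * (k * lam * ν) with hS₁
  set S₂ := M * S₁ with hS₂
  set K := 1025 * (k * lam) * M * S₁ with hK
  set h := 7 * ν * K with hh
  have hkl : 1 ≤ k * lam := Nat.mul_pos hk1 hlpos
  have hklν : 1 ≤ k * lam * ν := Nat.mul_pos hkl hν1
  have hνkl : ν ≤ k * lam * ν := Nat.le_mul_of_pos_left _ hkl
  have hb3 : b ^ 2 ≤ b ^ 3 := Nat.pow_le_pow_right (by omega) (by norm_num)
  have hkl2 : k * lam ≤ 2 * b ^ 2 := by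
    calc k * lam ≤ 2 * b * b := Nat.mul_le_mul hkb hlb
      _ = _ := by ring
  have hS₂n : S₂ + 1 ≤ n := by
    have : S₂ ≤ 1025 * 2048 * 6 * (b ^ 3 * ν ^ 2) := by
      calc S₂ ≤ 3 * ν * (1025 * 2048 * (2 * b ^ 3 * ν)) := by
            rw [hS₂, hS₁]
            have hkl3 : k * lam ≤ 2 * b ^ 3 := by omega
            gcongr
        _ = _ := by ring
    have h1 : 1 ≤ b ^ 3 * ν ^ 2 := Nat.mul_pos (by positivity) (by positivity)
    rw [mul_assoc] at hlog
    omega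
  have hS₁L : S₁ + L ≤ S₂ := by
    have : 2 * S₁ ≤ S₂ := Nat.mul_le_mul_right _ (by omega)
    omega
  have hKpos : 1 ≤ K := by
    have : 1 ≤ S₁ := by omega
    have : 1 ≤ M := by omega
    exact Nat.mul_pos (Nat.mul_pos (Nat.mul_pos (by norm_num) hkl) this) (by omega)
  have hKL : K * L = S₁ * S₂ := by rw [hS₂, hK, hL, hS₁]; ring
  have hkk : (k * lam) ^ 2 ≤ 8 * b ^ 3 := by
    calc (k * lam) ^ 2 = k ^ 2 * lam ^ 2 := by ring
      _ ≤ (2 * b) ^ 2 * (2 * b) := by gcongr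
      _ = _ := by ring
  have h16 : 2 * (8 * h) ≤ s := by
    have hMm : 25 * M ≤ 26 * (m - 1) := by omega
    refine le_trans ?_ hs
    have e : 2 * (8 * h) = 240988160000 * (k * lam) ^ 2 * ν ^ 2 * M := by
      rw [hh, hK, hS₁]; ring
    rw [e]
    refine Nat.le_of_mul_le_mul_left (c := 25) ?_ (by norm_num)
    calc 25 * (240988160000 * (k * lam) ^ 2 * ν ^ 2 * M)
        = 240988160000 * (k * lam) ^ 2 * ν ^ 2 * (25 * M) := by ring
      _ ≤ 240988160000 * (8 * b ^ 3) * ν ^ 2 * (26 * (m - 1)) := by gcongr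
      _ = (m - 1) * (50125537280000 * (b ^ 3 * ν ^ 2)) := by ring
      _ ≤ (m - 1) * (25 * n) := by
          refine Nat.mul_le_mul_left _ ?_
          rw [mul_assoc] at hlog
          omega
      _ = _ := by ring
  refine two_log_contradiction (p := p) d x y c (b - 1) hd hdns hx hy hxy hc hcq (by omega) hpq
    n k hk1 hk K L S₁ S₂ h (by omega) hKL.le ?_ ?_ ?_
  · refine dvd_trans ?_ hdvd
    refine (pow_dvd_pow_of_dvd (by exact_mod_cast hpb : (p : ℤ) ∣ b) _).trans ?_
    exact pow_dvd_pow _ h16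
  · have hhpos : 0 < h := by rw [hh]; positivity
    calc 2 * (8 * h) * (8 * h + K) = h * (16 * (8 * h + K)) := by ring
      _ < h * (K * L) := by
        refine Nat.mul_lt_mul_of_pos_left ?_ hhpos
        calc 16 * (8 * h + K) = K * (896 * ν + 16) := by rw [hh]; ring
          _ < K * L := Nat.mul_lt_mul_of_pos_left (by omega) hKpos
  · have hn2 : n * n ≤ 2 ^ (2 * ν) := by
      rw [two_mul, pow_add]; exact Nat.mul_le_mul hnν hnν
    have hT : S₁ + L + n * S₂ ≤ 2 ^ (2 * ν) := by
      refine le_trans ?_ hn2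
      calc S₁ + L + n * S₂ ≤ n + n * S₂ := by omega
        _ = n * (S₂ + 1) := by ring
        _ ≤ n * n := Nat.mul_le_mul_left _ hS₂n
    have hKLn : K * L ≤ 2 ^ (2 * ν) := by
      rw [hKL]
      exact le_trans (Nat.mul_le_mul (by omega) (by omega)) hn2
    have hbl' : (b : ℝ) ≤ 2 ^ lam := by exact_mod_cast hbl
    have hx' : (2 * x : ℝ) ≤ 2 ^ (lam * M) := by
      calc (2 * x : ℝ) ≤ (b : ℝ) ^ M := by exact_mod_cast hxb
        _ ≤ (2 ^ lam) ^ M := pow_le_pow_left₀ (by positivity) hbl' _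
        _ = _ := by rw [← pow_mul]
    have hx0 : (0 : ℝ) ≤ 2 * x := by
      have : (2 : ℝ) ≤ x := by exact_mod_cast hx
      linarith
    have hb1 : (1 : ℝ) ≤ b := by exact_mod_cast (by omega : 1 ≤ b)
    refine prod_lt_of_exponents (by exact_mod_cast hp.two_le)
      (by exact_mod_cast hKLn) (by positivity) (by exact_mod_cast hT) hx0 hx' ?_
      (q := ((b - 1 : ℤ) : ℝ)) (e₄ := lam) ?_ ?_
    · push_cast; linarith
    · push_cast; linarith
    · have h1 : lam * M * (k * (S₁ + L)) * L + lam * (k * S₂ * L)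
          = 2048 * (k * lam) * M * ν * (2 * S₁ + L) := by rw [hS₂, hL]; ring
      have h2 : 512 * (2 * S₁ + L) < 1025 * S₁ := by omega
      have h3 : 2048 * (k * lam) * M * ν * (2 * S₁ + L) < 4 * ν * K := by
        calc 2048 * (k * lam) * M * ν * (2 * S₁ + L)
            = (4 * (k * lam) * M * ν) * (512 * (2 * S₁ + L)) := by ring
          _ < (4 * (k * lam) * M * ν) * (1025 * S₁) :=
              Nat.mul_lt_mul_of_pos_left h2 (by positivity)
          _ = _ := by rw [hK]; ring
      have h4 : 2 * ν ≤ ν * K := by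
        have e : K = 1025 * (k * lam * M * S₁) := by rw [hK]; ring
        have h2K : 2 ≤ K := by omega
        rw [mul_comm]
        exact Nat.mul_le_mul_left ν h2K
      have h5 : h = 7 * (ν * K) := by rw [hh]; ring
      have h6 : 4 * ν * K = 4 * (ν * K) := by ring
      have h7 : 2 * ν * K = 2 * (ν * K) := by ring
      omega

/-! ### Pell sequences: identities, growth and congruences -/

theorem zsqrtd_pow_eq {d : ℕ} (hdns : ¬ IsSquare d) (X Y : ℕ → ℕ)
    (hXY : ∀ n : ℕ, 1 ≤ n →
      (X n : ℝ) + (Y n : ℝ) * Real.sqrt d =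
        ((X 1 : ℝ) + (Y 1 : ℝ) * Real.sqrt d) ^ n) (n : ℕ) (hn : 1 ≤ n) :
    (⟨X 1, Y 1⟩ : ℤ√(d : ℤ)) ^ n = ⟨X n, Y n⟩ := by
  have h0 : (0 : ℤ) ≤ d := by positivity
  have hns : ∀ n : ℤ, (d : ℤ) ≠ n * n := by
    intro z hz
    refine hdns ⟨z.natAbs, ?_⟩
    zify
    rw [hz, abs_mul_abs_self]
  apply Zsqrtd.toReal_injective h0 hns
  rw [map_pow]
  have e : ∀ u v : ℤ, Zsqrtd.toReal h0 (⟨u, v⟩ : ℤ√(d : ℤ)) = u + v * Real.sqrt d := by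
    intro u v
    show (u : ℝ) + v * Real.sqrt ((d : ℤ) : ℝ) = _
    norm_num
  rw [e, e]
  have := hXY n hn
  push_cast
  exact this.symm

theorem pell_step {d : ℤ} {x y : ℤ} (hxy : x ^ 2 - d * y ^ 2 = 1) (n : ℕ) :
    ((⟨x, y⟩ : ℤ√d) ^ (n + 2)).re
      = 2 * x * ((⟨x, y⟩ : ℤ√d) ^ (n + 1)).re - ((⟨x, y⟩ : ℤ√d) ^ n).re := by
  rw [pow_succ, pow_succ]
  set z := (⟨x, y⟩ : ℤ√d) ^ n
  simp only [Zsqrtd.re_mul, Zsqrtd.im_mul]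
  linear_combination (-z.re) * hxy

/-- For odd `n`, `Xₙ ≡ ± n X₁` modulo `X₁³`. -/
theorem pell_odd {d : ℤ} {x y : ℤ} (hxy : x ^ 2 - d * y ^ 2 = 1) (k : ℕ) :
    ∃ W : ℤ, ((⟨x, y⟩ : ℤ√d) ^ (2 * k + 1)).re = x * ((-1) ^ k * (2 * k + 1) + x ^ 2 * W) := by
  have key : ∀ k : ℕ, (∃ W : ℤ, ((⟨x, y⟩ : ℤ√d) ^ (2 * k + 1)).re
        = x * ((-1) ^ k * (2 * k + 1) + x ^ 2 * W)) ∧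
      ∃ V : ℤ, ((⟨x, y⟩ : ℤ√d) ^ (2 * k)).re = (-1) ^ k + x ^ 2 * V := by
    intro k
    induction k with
    | zero => exact ⟨⟨0, by simp⟩, ⟨0, by simp⟩⟩
    | succ k ih =>
      obtain ⟨⟨W, hW⟩, ⟨V, hV⟩⟩ := ih
      have h1 := pell_step hxy (2 * k)
      rw [hW, hV] at h1
      have h2 := pell_step hxy (2 * k + 1)
      rw [show 2 * k + 1 + 1 = 2 * k + 2 by ring, h1, hW] at h2
      refine ⟨⟨4 * ((-1) ^ k * (2 * k + 1) + x ^ 2 * W) - 2 * V - W, ?_⟩,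
        ⟨2 * ((-1) ^ k * (2 * k + 1) + x ^ 2 * W) - V, ?_⟩⟩
      · rw [show 2 * (k + 1) + 1 = 2 * k + 1 + 2 by ring, h2]
        push_cast; ring
      · rw [show 2 * (k + 1) = 2 * k + 2 by ring, h1]
        ring
  exact (key k).1

theorem pell_growth {d : ℤ} {x y : ℤ} (hx : 1 ≤ x)
    (hxy : x ^ 2 - d * y ^ 2 = 1) (n : ℕ) :
    x ^ n ≤ ((⟨x, y⟩ : ℤ√d) ^ n).re ∧ ((⟨x, y⟩ : ℤ√d) ^ n).re ≤ (2 * x) ^ n := by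
  have key : ∀ n : ℕ, 0 < ((⟨x, y⟩ : ℤ√d) ^ n).re ∧
      x * ((⟨x, y⟩ : ℤ√d) ^ n).re ≤ ((⟨x, y⟩ : ℤ√d) ^ (n + 1)).re ∧
      ((⟨x, y⟩ : ℤ√d) ^ (n + 1)).re ≤ 2 * x * ((⟨x, y⟩ : ℤ√d) ^ n).re := by
    intro n
    induction n with
    | zero => simp; omega
    | succ n ih =>
      obtain ⟨h0, h1, h2⟩ := ih
      have h3 := pell_step hxy n
      have h4 : 0 < x * ((⟨x, y⟩ : ℤ√d) ^ n).re := by positivity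
      refine ⟨by omega, ?_, ?_⟩
      · rw [show n + 1 + 1 = n + 2 by ring, h3]
        nlinarith
      · rw [show n + 1 + 1 = n + 2 by ring, h3]
        linarith
  induction n with
  | zero => simp
  | succ n ih =>
    obtain ⟨h0, h1, h2⟩ := key n
    rw [pow_succ', pow_succ' (2 * x)]
    exact ⟨(mul_le_mul_of_nonneg_left ih.1 (by omega)).trans h1,
      h2.trans (mul_le_mul_of_nonneg_left ih.2 (by omega))⟩

/-- A geometric sum with ratio `1 + q R`, modulo `R²`; `T` is the binomial coefficient of `l` over
`2`. -/
theorem geom_mod (q R : ℤ) (l : ℕ) :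
    ∃ U T : ℤ, ∑ i ∈ Finset.range l, (1 + q * R) ^ i = l + q * R * T + R ^ 2 * U ∧
      2 * T = l * (l - 1) := by
  have hp : ∀ i : ℕ, ∃ U : ℤ, (1 + q * R) ^ i = 1 + q * R * i + R ^ 2 * U := by
    intro i
    induction i with
    | zero => exact ⟨0, by simp⟩
    | succ i ih =>
      obtain ⟨U, hU⟩ := ih
      exact ⟨U + q ^ 2 * i + q * R * U, by rw [pow_succ, hU]; push_cast; ring⟩
  induction l with
  | zero => exact ⟨0, 0, by simp, by simp⟩
  | succ l ih =>
    obtain ⟨U, T, h1, h2⟩ := ih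
    obtain ⟨U', hU'⟩ := hp l
    refine ⟨U + U', T + l, ?_, ?_⟩
    · rw [Finset.sum_range_succ, h1, hU']; push_cast; ring
    · push_cast; linarith

/-- With `R` the repunit of length `m`, the hypothesis `h` is the equation `a Xₙ / X₁ = c G`, where
`G` is a geometric sum. Modulo `R` it says `c l ≡ ± a n`, which for large `R` is an equality with sign
`+`; modulo `R²` it then gives `R ∣ c q l (l - 1) / 2`. -/
theorem repunit_le {a c q R l n s U T W G : ℤ}
    (hs : s = 1 ∨ s = -1) (hq : 1 ≤ q) (ha : 1 ≤ a) (haq : a ≤ q ^ 2) (hc : 1 ≤ c) (hcq : c ≤ q)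
    (hR : 1 ≤ R) (hn : 3 ≤ n) (hl : 2 ≤ l) (hln : l ≤ 2 * n)
    (hT : 2 * T = l * (l - 1))
    (hG : G = l + q * R * T + R ^ 2 * U)
    (h : a * (s * n + (a * R) ^ 2 * W) = c * G) : R ≤ 3 * q ^ 2 * n ^ 2 := by
  by_contra hlt
  push Not at hlt
  have hn2 : 3 * n ≤ n ^ 2 := by nlinarith
  have hq2 : q ≤ q ^ 2 := by nlinarith
  have hq2p : 0 < q ^ 2 := by positivity
  have hdvd : R ∣ c * l - s * a * n :=
    ⟨a ^ 3 * R * W - c * q * T - c * R * U, by rw [hG] at h; linear_combination -h⟩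
  have hcl : c * l ≤ q ^ 2 * (2 * n) := mul_le_mul (by linarith) hln (by linarith) (by positivity)
  have han : a * n ≤ q ^ 2 * n := mul_le_mul_of_nonneg_right haq (by linarith)
  have hcl0 : 0 < c * l := by positivity
  have han0 : 0 < a * n := by positivity
  have hsmall : q ^ 2 * n * 3 ≤ 3 * q ^ 2 * n ^ 2 := by nlinarith
  have hzero : c * l - s * a * n = 0 := by
    refine Int.eq_zero_of_abs_lt_dvd hdvd ?_
    rw [abs_lt]
    rcases hs with rfl | rfl <;> constructor <;> nlinarith
  have hdvd2 : R ∣ c * q * T := by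
    refine ⟨a ^ 3 * W - c * U, ?_⟩
    refine mul_left_cancel₀ (by omega : R ≠ 0) ?_
    rw [hG] at h
    linear_combination -hzero - h
  have hT0 : 0 < T := by nlinarith
  have hle := Int.le_of_dvd (by positivity) hdvd2
  have hT2 : T ≤ 2 * n ^ 2 := by nlinarith
  have : c * q * T ≤ q * q * (2 * n ^ 2) := by gcongr
  nlinarith

/-! ### The bounds -/

/-- In the setting of Problem 1 with `m ≥ 100`,
`n < 10¹⁸ b⁴`, `ℓ < 2·10¹⁸ b⁴` and `m < 10²⁰ b⁷`. -/
theorem n_ell_m_bounds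
    (b : ℕ) (hb : 2 ≤ b)
    (d : ℕ) (hd : 2 ≤ d) (hdns : ¬ IsSquare d)
    (X Y : ℕ → ℕ)
    (hX1 : 0 < X 1) (hY1 : 0 < Y 1)
    (hpell : (X 1 : ℤ) ^ 2 - (d : ℤ) * (Y 1 : ℤ) ^ 2 = 1)
    (hfund : ∀ x y : ℕ, 0 < x → 0 < y →
      (x : ℤ) ^ 2 - (d : ℤ) * (y : ℤ) ^ 2 = 1 → X 1 ≤ x)
    (hXY : ∀ n : ℕ, 1 ≤ n →
      (X n : ℝ) + (Y n : ℝ) * Real.sqrt d =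
        ((X 1 : ℝ) + (Y 1 : ℝ) * Real.sqrt d) ^ n)
    (a m : ℕ) (ha : 1 ≤ a ∧ a ≤ (b - 1) ^ 2) (hm : 100 ≤ m)
    (hrep1 : (b - 1) * X 1 = a * (b ^ m - 1))
    (n c ℓ : ℕ) (hn : 1 < n) (hnodd : Odd n)
    (hc : 1 ≤ c ∧ c ≤ b - 1) (hℓ : 1 ≤ ℓ)
    (hrepn : (b - 1) * X n = c * (b ^ (m * ℓ) - 1)) :
    n < 10 ^ 18 * b ^ 4 ∧ ℓ < 2 * 10 ^ 18 * b ^ 4 ∧ m < 10 ^ 20 * b ^ 7 := by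
  have hdZ : ∀ z : ℤ, (d : ℤ) ≠ z * z := by
    intro z hz
    refine hdns ⟨z.natAbs, ?_⟩
    zify
    rw [hz, abs_mul_abs_self]
  have hpow := zsqrtd_pow_eq hdns X Y hXY n (by omega)
  have hre : ((⟨X 1, Y 1⟩ : ℤ√(d : ℤ)) ^ n).re = X n := by rw [hpow]
  obtain ⟨q, rfl⟩ : ∃ q, b = q + 1 := ⟨b - 1, by omega⟩
  simp only [Nat.add_sub_cancel] at ha hrep1 hc hrepn
  have hq : 1 ≤ q := by omega
  set b := q + 1 with hbq
  -- the repunit `R` with `X 1 = a * R`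
  set R := ∑ i ∈ Finset.range m, b ^ i with hR
  have hgeom : ∀ B t : ℕ, (∑ i ∈ Finset.range t, B ^ i) * B + 1
      = (∑ i ∈ Finset.range t, B ^ i) + B ^ t := by
    intro B t
    induction t with
    | zero => simp
    | succ t ih => rw [Finset.sum_range_succ]; linear_combination ih
  have hQ : b ^ m = 1 + q * R := by
    have := hgeom b m
    rw [← hR, hbq] at this
    rw [hbq]; linarith
  have hRb : b ^ (m - 1) ≤ R :=
    Finset.single_le_sum (f := fun i => b ^ i) (fun i _ => Nat.zero_le _)
      (Finset.mem_range.2 (by omega))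
  have hbpow : ∀ t, 1 ≤ b ^ t := fun t => Nat.one_le_pow _ _ (by omega)
  have hR1 : 1 ≤ R := (hbpow _).trans hRb
  have hx : X 1 = a * R := by
    refine Nat.eq_of_mul_eq_mul_left hq ?_
    rw [hrep1, hQ, Nat.add_sub_cancel_left]; ring
  set G := ∑ i ∈ Finset.range ℓ, (b ^ m) ^ i with hG
  have hXn : X n = c * R * G := by
    refine Nat.eq_of_mul_eq_mul_left hq ?_
    have h1 := hgeom (b ^ m) ℓ
    rw [← hG, ← pow_mul] at h1
    have h2 : b ^ (m * ℓ) - 1 = q * R * G := by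
      rw [hQ] at h1
      refine Nat.sub_eq_of_eq_add ?_
      linarith
    rw [hrepn, h2]; ring
  have hxR : R ≤ X 1 := by rw [hx]; exact Nat.le_mul_of_pos_left _ ha.1
  have hbm : 2 ^ (m - 1) ≤ b ^ (m - 1) := Nat.pow_le_pow_left hb _
  have hx2 : 2 ≤ X 1 := by
    have : 2 ^ 1 ≤ 2 ^ (m - 1) := Nat.pow_le_pow_right (by norm_num) (by omega)
    omega
  -- comparing sizes of `X n` bounds the quotient `ℓ / n` from both sides
  obtain ⟨hlow, hupp⟩ := pell_growth (d := d) (x := X 1) (y := Y 1) (by omega) hpell n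
  rw [hre] at hlow hupp
  have hlow' : X 1 ^ n ≤ X n := by exact_mod_cast hlow
  have hupp' : X n ≤ (2 * X 1) ^ n := by exact_mod_cast hupp
  have hxb : 2 * X 1 ≤ b ^ (m + 2) := by
    have h1 : q * X 1 ≤ q * (q * b ^ m) := by
      rw [hrep1]
      calc a * (b ^ m - 1) ≤ q ^ 2 * b ^ m := Nat.mul_le_mul ha.2 (Nat.sub_le _ _)
        _ = _ := by ring
    have h2 := Nat.le_of_mul_le_mul_left h1 hq
    have h3 : 2 * q ≤ b ^ 2 := by rw [hbq]; nlinarith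
    calc 2 * X 1 ≤ 2 * (q * b ^ m) := by omega
      _ = 2 * q * b ^ m := by ring
      _ ≤ b ^ 2 * b ^ m := Nat.mul_le_mul_right _ h3
      _ = _ := by ring
  have hml : (m - 1) * n < m * ℓ := by
    have h1 : X n < b ^ (m * ℓ) := by
      have : q * X n ≤ q * (b ^ (m * ℓ) - 1) := by
        rw [hrepn]; exact Nat.mul_le_mul_right _ hc.2
      have := Nat.le_of_mul_le_mul_left this hq
      have := hbpow (m * ℓ)
      omega
    refine (Nat.pow_lt_pow_iff_right (a := b) (by omega)).1 ?_
    rw [pow_mul]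
    calc (b ^ (m - 1)) ^ n ≤ X 1 ^ n := Nat.pow_le_pow_left (hRb.trans hxR) _
      _ < _ := hlow'.trans_lt h1
  have hml2 : m * ℓ ≤ (m + 2) * n + 1 := by
    refine (Nat.pow_le_pow_iff_right (a := b) (by omega)).1 ?_
    have h1 : b ^ (m * ℓ) - 1 ≤ q * b ^ ((m + 2) * n) := by
      calc b ^ (m * ℓ) - 1 ≤ c * (b ^ (m * ℓ) - 1) := Nat.le_mul_of_pos_left _ hc.1
        _ = q * X n := hrepn.symm
        _ ≤ q * (b ^ (m + 2)) ^ n :=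
            Nat.mul_le_mul_left _ (hupp'.trans (Nat.pow_le_pow_left hxb _))
        _ = _ := by rw [← pow_mul]
    have h2 := hbpow ((m + 2) * n)
    calc b ^ (m * ℓ) ≤ q * b ^ ((m + 2) * n) + b ^ ((m + 2) * n) := by omega
      _ = _ := by rw [pow_succ, hbq]; ring
  have hn3 : 3 ≤ n := by
    obtain ⟨k, hk⟩ := hnodd
    omega
  have hl2n : ℓ ≤ 2 * n := by
    by_contra h
    have : m * (2 * n + 1) ≤ m * ℓ := Nat.mul_le_mul_left _ (by omega)
    have h100 : 100 * n ≤ m * n := Nat.mul_le_mul_right _ hm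
    rw [mul_add, mul_left_comm] at this
    rw [add_mul] at hml2
    omega
  have hl2 : 2 ≤ ℓ := by
    by_contra h
    have h1 : ℓ = 1 := by omega
    have : (m - 1) * 3 ≤ (m - 1) * n := Nat.mul_le_mul_left _ hn3
    rw [h1] at hml
    omega
  -- the congruences modulo `R ^ 2` make `n` exponentially large in terms of `m`
  have hRle : R ≤ 3 * q ^ 2 * n ^ 2 := by
    obtain ⟨k, hk⟩ := hnodd
    obtain ⟨W, hW⟩ := pell_odd hpell k
    rw [← hk, hre] at hW
    obtain ⟨U, T, hGU, hT⟩ := geom_mod q R ℓ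
    have hnk : (n : ℤ) = 2 * k + 1 := by exact_mod_cast hk
    have hGZ : (G : ℤ) = ℓ + q * R * T + R ^ 2 * U := by
      rw [← hGU, hG, hQ]; push_cast; rfl
    have := repunit_le (a := a) (c := c) (q := q) (R := R) (l := ℓ) (n := n) (s := (-1) ^ k)
      (G := G) (U := U) (T := T) (W := W) (neg_one_pow_eq_or ℤ k) (by exact_mod_cast hq)
      (by exact_mod_cast ha.1) (by exact_mod_cast ha.2) (by exact_mod_cast hc.1)
      (by exact_mod_cast hc.2) (by exact_mod_cast hR1) (by exact_mod_cast hn3)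
      (by exact_mod_cast hl2) (by exact_mod_cast hl2n) hT hGZ (by
        have hR0 : (R : ℤ) ≠ 0 := by exact_mod_cast (by omega : R ≠ 0)
        refine mul_left_cancel₀ hR0 ?_
        rw [hXn, hx, ← hnk] at hW
        push_cast at hW
        linear_combination -hW)
    exact_mod_cast this
  have hbn : b ^ (m - 3) ≤ 3 * n ^ 2 := by
    have h1 : b ^ 2 * b ^ (m - 3) ≤ b ^ 2 * (3 * n ^ 2) := by
      calc b ^ 2 * b ^ (m - 3) = b ^ (m - 1) := by rw [← pow_add]; congr 1; omega
        _ ≤ 3 * q ^ 2 * n ^ 2 := hRb.trans hRle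
        _ ≤ 3 * b ^ 2 * n ^ 2 := by gcongr; omega
        _ = _ := by ring
    exact Nat.le_of_mul_le_mul_left h1 (by positivity)
  have hnlt : n < 10 ^ 18 * b ^ 4 := by
    by_contra hge
    push Not at hge
    refine size_contradiction hb d (X 1) (Y 1) c n m (m * ℓ) (by positivity) hdZ
      (by exact_mod_cast hx2) (by positivity) hpell (by positivity)
      (by rw [hbq]; push_cast; have := hc.2; omega) hge hm ?_ (by exact_mod_cast hxb) hml.le ?_
    · have h1 : n ≤ 2 ^ Nat.clog 2 n := Nat.le_pow_clog (by norm_num) n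
      have h2 : 2 ^ (m - 3) < 2 ^ (2 * Nat.clog 2 n + 2) := by
        calc 2 ^ (m - 3) ≤ b ^ (m - 3) := Nat.pow_le_pow_left hb _
          _ ≤ 3 * n ^ 2 := hbn
          _ < 4 * n ^ 2 := Nat.mul_lt_mul_of_pos_right (by norm_num) (by positivity)
          _ ≤ 4 * (2 ^ Nat.clog 2 n) ^ 2 := by gcongr
          _ = _ := by ring
      have h3 := (Nat.pow_lt_pow_iff_right (a := 2) (by norm_num)).1 h2
      omega
    · rw [hre]
      have h1 : q * X n + c = c * b ^ (m * ℓ) := by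
        rw [hrepn]
        have := hbpow (m * ℓ)
        obtain ⟨t, ht⟩ := Nat.exists_eq_add_of_le this
        rw [ht, Nat.add_sub_cancel_left]; ring
      refine ⟨c, ?_⟩
      rw [hbq] at h1 ⊢
      zify at h1
      push_cast
      linear_combination h1
  refine ⟨hnlt, by omega, ?_⟩
  by_contra hge
  have hb7 : 1 ≤ b ^ 7 := hbpow 7
  have h1 : b ^ 8 * b ^ (m - 11) ≤ b ^ 8 * (3 * 10 ^ 36) := by
    calc b ^ 8 * b ^ (m - 11) = b ^ (m - 3) := by rw [← pow_add]; congr 1; omega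
      _ ≤ 3 * n ^ 2 := hbn
      _ ≤ 3 * (10 ^ 18 * b ^ 4) ^ 2 := by gcongr
      _ = _ := by ring
  have h2 := Nat.le_of_mul_le_mul_left h1 (by positivity)
  have h3 : 2 ^ 189 ≤ b ^ (m - 11) :=
    (Nat.pow_le_pow_right (by norm_num) (by omega)).trans (Nat.pow_le_pow_left hb _)
  norm_num at h2 h3
  omega
end

section
/- Suppose there exist two triples (n₁, a₁, m₁) and (n₂, a₂, m₂) of positive integers with n₁ ≠ n₂ both odd, a₁, a₂ ∈ {1, …, b−1}, such that X_{n₁} = a₁(b^{m₁} − 1)/(b − 1) and X_{n₂} = a₂(b^{m₂} − 1)/(b − 1). Then d < exp(10²⁰·b¹⁰). -/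
/-!
Put `g = gcd (n₁, n₂)`. As `n₁ / g` and `n₂ / g` are odd and coprime, `X_g` is the gcd of `X_{n₁}`
and `X_{n₂}` (`dvd_re_of_dvd_pow_re`), and the gcd of two repdigits is almost a repdigit
(`gcd_repdigits`). With `c = b - 1`, `m = gcd (m₁, m₂)` and `B = b ^ m` this gives
`c X_g = e (B - 1)` with `1 ≤ e ≤ c²`. Since `n₁ ≠ n₂`, one of the two indices is `g n` with
`n ≥ 2`, and `c X_{gn} = a (B ^ k - 1)`. So `γ = X_g + Y_g √d` and `w = γ ^ n` satisfy
`c γ² + 2eγ + c ≡ 0` modulo `B` and `c w² + 2aw + c ≡ 0` modulo `B ^ k` in `ℤ[√d]`.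
The claim is that this forces `B < (64 b²) ^ 10000` (`core`); then `d < X_g² ≤ (b B)²` is far
below the asserted bound.

For `n ≤ 100` and large `B` the representations of `X_g` and `X_{gn}` are incompatible in their
leading terms in `B` (`small_arith`).

For `n ≥ 100` (`core_large`) an auxiliary-polynomial argument is used in place of linear forms in
logarithms. With `q = c X² + 2eX + c` and `t = ⌊3n/5⌋`, Siegel's lemma (`siegel_blocks`) provides
integer polynomials with small coefficients (`exists_auxiliary`)
`P₂ = cR`, `P₁ = 2aR + q ^ t S₁`, `P₀ = cR + q ^ t S₀`
supported on exponents in `[0, n)`, `[n, 2n)` and `[2n, 3n)`. Because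
`P₀ + P₁ w + P₂ w² = (c w² + 2aw + c) R + q ^ t (S₀ + S₁ w)`, the value at `γ` of its `i`-th Hasse
derivative (with `w` constant) is divisible by `B ^ (t - i)` (`combination_dvd`). On the other
hand the supports make that value a unit times a combination of `1, γ, …, γ ^ (n - 1)` with small
integer coefficients (`combination_eq`), so its norm is at most about `γ ^ n ≈ B ^ n`
(`norm_bound`), whereas `2t ≈ 6n/5`. Hence for large `B` the values vanish for all `i` up to about
`n / 100`. Then the Wronskian of `P₀, P₁, P₂`, which is nonzero because their degrees differ
(`wronski_ne_zero`), is divisible by `(X - γ) ^ (n / 100 + 2)` (`pow_dvd_wronski`), and comparison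
with its Mahler measure bounds `γ ^ (n / 100)` by the size of its coefficients
(`pow_le_of_pow_dvd`), again impossible for large `B`.
-/

section

open Polynomial

/-! ### The block form of the lemma of Siegel -/

attribute [local instance] Matrix.seminormedAddCommGroup in
/-- Siegel's lemma in block form. The coefficients of `R`, `S₁`, `S₀` are `6n - 4t` unknowns, and
the two divisibility conditions are `3n` linear equations in them. The exponent
`3n / (3n - 4t)` of the general lemma is at most `5` since `5t ≤ 3n`. -/
lemma siegel_blocks (n t A : ℕ) (c₀ c₁ : ℤ) (Q : ℤ[X]) (hn : 0 < n) (ht : 5 * t ≤ 3 * n)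
    (hA : 1 ≤ A) (hc₀ : |c₀| ≤ A) (hc₁ : |c₁| ≤ A) (hQ : ∀ i, |Q.coeff i| ≤ A) :
    ∃ R S₁ S₀ : ℤ[X], (R ≠ 0 ∨ S₁ ≠ 0 ∨ S₀ ≠ 0) ∧
      R.degree < (n : ℕ) ∧ S₁.degree < (2 * n - 2 * t : ℕ) ∧ S₀.degree < (3 * n - 2 * t : ℕ) ∧
      (∀ i, |R.coeff i| ≤ (6 * n * A : ℤ) ^ 5) ∧ (∀ i, |S₁.coeff i| ≤ (6 * n * A : ℤ) ^ 5) ∧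
      (∀ i, |S₀.coeff i| ≤ (6 * n * A : ℤ) ^ 5) ∧
      X ^ n ∣ C c₁ * R + Q * S₁ ∧ X ^ (2 * n) ∣ C c₀ * R + Q * S₀ := by
  classical
  let p₁ : Fin n ⊕ (Fin (2 * n - 2 * t) ⊕ Fin (3 * n - 2 * t)) → ℤ[X] :=
    Sum.elim (fun i => C c₁ * X ^ (i : ℕ)) (Sum.elim (fun i => Q * X ^ (i : ℕ)) fun _ => 0)
  let p₀ : Fin n ⊕ (Fin (2 * n - 2 * t) ⊕ Fin (3 * n - 2 * t)) → ℤ[X] :=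
    Sum.elim (fun i => C c₀ * X ^ (i : ℕ)) (Sum.elim (fun _ => 0) fun i => Q * X ^ (i : ℕ))
  let M : Matrix (Fin n ⊕ Fin (2 * n)) (Fin n ⊕ (Fin (2 * n - 2 * t) ⊕ Fin (3 * n - 2 * t))) ℤ :=
    fun r c => Sum.elim (fun r : Fin n => (p₁ c).coeff r) (fun r : Fin (2 * n) => (p₀ c).coeff r) r
  have hA' : (0 : ℤ) ≤ A := by positivity
  have hM : ∀ r c, |M r c| ≤ A := by
    intro r c
    rcases r with r | r <;> rcases c with c | c | c <;>
      simp only [M, p₁, p₀, Sum.elim_inl, Sum.elim_inr, coeff_mul_X_pow', coeff_C,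
        coeff_zero, abs_zero] <;> try split_ifs
    all_goals simp [hA', hc₀, hc₁, hQ]
  have hcard₁ : Fintype.card (Fin n ⊕ Fin (2 * n)) = 3 * n := by simp; ring
  have hcard₂ : Fintype.card (Fin n ⊕ (Fin (2 * n - 2 * t) ⊕ Fin (3 * n - 2 * t))) =
      6 * n - 4 * t := by simp; omega
  obtain ⟨v, hv0, hMv, hv⟩ := Int.Matrix.exists_ne_zero_int_vec_norm_le M
    (by rw [hcard₁, hcard₂]; omega) (by rw [hcard₁]; omega)
  rw [hcard₁, hcard₂] at hv
  have hMA : max 1 ‖M‖ ≤ (A : ℝ) := by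
    refine max_le (by exact_mod_cast hA) ?_
    rw [Matrix.norm_le_iff (by positivity)]
    intro r c
    rw [Int.norm_eq_abs]
    exact_mod_cast hM r c
  have hnR : (1 : ℝ) ≤ n := by exact_mod_cast hn
  have hAR : (1 : ℝ) ≤ A := by exact_mod_cast hA
  have htR : (5 : ℝ) * t ≤ 3 * n := by exact_mod_cast ht
  have hcast : ((6 * n - 4 * t : ℕ) : ℝ) = 6 * n - 4 * t := by
    rw [Nat.cast_sub (by omega)]; push_cast; ring
  have hv' : ‖v‖ ≤ (6 * n * A : ℝ) ^ 5 := by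
    refine hv.trans ?_
    have h1 : ((6 * n - 4 * t : ℕ) : ℝ) * max 1 ‖M‖ ≤ 6 * n * A := by
      rw [hcast]
      apply mul_le_mul _ hMA (by positivity) (by positivity)
      have : (0 : ℝ) ≤ t := by positivity
      linarith
    have hden : (0 : ℝ) < ((6 * n - 4 * t : ℕ) : ℝ) - ((3 * n : ℕ) : ℝ) := by
      rw [hcast]; push_cast; linarith
    calc _ ≤ (6 * n * A : ℝ) ^ (((3 * n : ℕ) : ℝ) / (((6 * n - 4 * t : ℕ) : ℝ) - ((3 * n : ℕ) : ℝ))) :=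
          Real.rpow_le_rpow (by positivity) h1 (by positivity)
      _ ≤ (6 * n * A : ℝ) ^ (5 : ℝ) := by
          apply Real.rpow_le_rpow_of_exponent_le
          · nlinarith
          · rw [div_le_iff₀ hden, hcast]; push_cast; linarith
      _ = _ := by norm_cast
  have hvc : ∀ c, |v c| ≤ (6 * n * A : ℤ) ^ 5 := by
    intro c
    have := (norm_le_pi_norm v c).trans hv'
    rw [Int.norm_eq_abs] at this
    exact_mod_cast this
  have hpos : (0 : ℤ) ≤ (6 * n * A : ℤ) ^ 5 := by positivity
  -- polynomials with prescribed coefficient vectors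
  have hcoef : ∀ (k : ℕ) (f : Fin k → ℤ) (i : ℕ), (∑ j, C (f j) * X ^ (j : ℕ) : ℤ[X]).coeff i =
      if h : i < k then f ⟨i, h⟩ else 0 := by
    intro k f i
    simp only [finsetSum_coeff, coeff_C_mul, coeff_X_pow]
    split_ifs with h
    · rw [Finset.sum_eq_single ⟨i, h⟩]
      · simp
      · intro j _ hj
        rw [if_neg, mul_zero]
        intro h'; exact hj (Fin.ext h'.symm)
      · simp
    · apply Finset.sum_eq_zero
      intro j _
      rw [if_neg, mul_zero]
      have := j.2; omega
  have hdeg : ∀ (k : ℕ) (f : Fin k → ℤ), (∑ j, C (f j) * X ^ (j : ℕ) : ℤ[X]).degree < (k : ℕ) := by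
    intro k f
    rw [degree_lt_iff_coeff_zero]
    intro i hi
    rw [hcoef, dif_neg (by omega)]
  have hbd : ∀ (k : ℕ) (f : Fin k → ℤ), (∀ j, |f j| ≤ (6 * n * A : ℤ) ^ 5) → ∀ i,
      |(∑ j, C (f j) * X ^ (j : ℕ) : ℤ[X]).coeff i| ≤ (6 * n * A : ℤ) ^ 5 := by
    intro k f hf i
    rw [hcoef]
    split_ifs with h
    · exact hf _
    · simpa using hpos
  have hzero : ∀ (k : ℕ) (f : Fin k → ℤ), (∑ j, C (f j) * X ^ (j : ℕ) : ℤ[X]) = 0 →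
      ∀ j, f j = 0 := by
    intro k f hf j
    have := hcoef k f j
    rw [hf, coeff_zero, dif_pos j.2] at this
    exact this.symm
  refine ⟨∑ j, C (v (.inl j)) * X ^ (j : ℕ), ∑ j, C (v (.inr (.inl j))) * X ^ (j : ℕ),
    ∑ j, C (v (.inr (.inr j))) * X ^ (j : ℕ), ?_, hdeg _ _, hdeg _ _, hdeg _ _,
    hbd _ _ fun _ => hvc _, hbd _ _ fun _ => hvc _, hbd _ _ fun _ => hvc _, ?_, ?_⟩
  · by_contra! h
    apply hv0
    funext c
    rcases c with c | c | c
    · exact hzero _ _ h.1 c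
    · exact hzero _ _ h.2.1 c
    · exact hzero _ _ h.2.2 c
  · rw [X_pow_dvd_iff]
    intro i hi
    have := congrFun hMv (.inl ⟨i, hi⟩)
    simp only [Matrix.mulVec, dotProduct, M, p₁, Fintype.sum_sum_type, Sum.elim_inl,
      Sum.elim_inr, Pi.zero_apply, coeff_zero, zero_mul, Finset.sum_const_zero, add_zero] at this
    rw [← this]
    simp only [Finset.mul_sum, coeff_add, finsetSum_coeff]
    congr 1 <;> refine Finset.sum_congr rfl fun j _ => ?_
    · rw [mul_left_comm, coeff_C_mul, mul_comm]
    · rw [mul_left_comm, coeff_C_mul, mul_comm]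
  · rw [X_pow_dvd_iff]
    intro i hi
    have := congrFun hMv (.inr ⟨i, hi⟩)
    simp only [Matrix.mulVec, dotProduct, M, p₀, Fintype.sum_sum_type, Sum.elim_inl,
      Sum.elim_inr, Pi.zero_apply, coeff_zero, zero_mul, Finset.sum_const_zero, zero_add] at this
    rw [← this]
    simp only [Finset.mul_sum, coeff_add, finsetSum_coeff]
    congr 1 <;> refine Finset.sum_congr rfl fun j _ => ?_
    · rw [mul_left_comm, coeff_C_mul, mul_comm]
    · rw [mul_left_comm, coeff_C_mul, mul_comm]

/-! ### Wronskians and a zero estimate -/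

/-- The Euler operator `X · d/dX`, which multiplies the coefficient of `X ^ j` by `j`. -/
noncomputable def euler {R : Type*} [CommRing R] (p : R[X]) : R[X] := X * derivative p

lemma euler_coeff {R : Type*} [CommRing R] (p : R[X]) (j : ℕ) :
    (euler p).coeff j = j * p.coeff j := by
  rcases j with _ | j
  · simp [euler]
  · rw [euler, coeff_X_mul, coeff_derivative]; push_cast; ring

lemma euler_natDegree_le {R : Type*} [CommRing R] {p : R[X]} {N : ℕ} (h : p.natDegree ≤ N) :
    (euler p).natDegree ≤ N := by
  rw [natDegree_le_iff_coeff_eq_zero] at h ⊢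
  intro j hj
  rw [euler_coeff, h j hj, mul_zero]

lemma euler_coeff_bound {p : ℤ[X]} {N : ℕ} {h : ℤ} (hp : p.natDegree ≤ N)
    (hc : ∀ i, |p.coeff i| ≤ h) (i : ℕ) : |(euler p).coeff i| ≤ N * h := by
  have hh : 0 ≤ h := (abs_nonneg _).trans (hc 0)
  rw [euler_coeff]
  by_cases hi : i ≤ N
  · rw [abs_mul, Nat.abs_cast]
    gcongr
    exact hc i
  · rw [natDegree_le_iff_coeff_eq_zero.1 hp i (by omega)]
    simp; positivity

lemma coeff_mul_bound {p r : ℤ[X]} {N : ℕ} {h k : ℤ} (hp : p.natDegree ≤ N)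
    (hc : ∀ i, |p.coeff i| ≤ h) (hr : ∀ i, |r.coeff i| ≤ k) (i : ℕ) :
    |(p * r).coeff i| ≤ (N + 1) * (h * k) := by
  have hh : 0 ≤ h := (abs_nonneg _).trans (hc 0)
  have hk : 0 ≤ k := (abs_nonneg _).trans (hr 0)
  rw [p.as_sum_range_C_mul_X_pow' (Nat.lt_succ_of_le hp), Finset.sum_mul, finsetSum_coeff]
  refine (Finset.abs_sum_le_sum_abs _ _).trans ?_
  refine (Finset.sum_le_card_nsmul _ _ (h * k) fun j _ => ?_).trans ?_
  · rw [mul_assoc, coeff_C_mul, abs_mul, coeff_X_pow_mul']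
    gcongr
    · exact hc j
    · split_ifs
      · exact hr _
      · simpa using hk
  · simp

/-- The Wronskian of three polynomials, formed with the Euler operator. -/
noncomputable def wronski {R : Type*} [CommRing R] (p q r : R[X]) : R[X] :=
  p * (euler q * euler (euler r)) - p * (euler r * euler (euler q))
  - euler p * (q * euler (euler r)) + euler p * (r * euler (euler q))
  + euler (euler p) * (q * euler r) - euler (euler p) * (r * euler q)

lemma wronski_natDegree_le {R : Type*} [CommRing R] {p q r : R[X]} {N : ℕ}
    (hp : p.natDegree ≤ N) (hq : q.natDegree ≤ N) (hr : r.natDegree ≤ N) :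
    (wronski p q r).natDegree ≤ 3 * N := by
  have key : ∀ {x y z : R[X]}, x.natDegree ≤ N → y.natDegree ≤ N → z.natDegree ≤ N →
      (x * (y * z)).natDegree ≤ 3 * N := fun hx hy hz =>
    (natDegree_mul_le_of_le hx (natDegree_mul_le_of_le hy hz)).trans (by omega)
  have e := @euler_natDegree_le R _
  unfold wronski
  refine natDegree_sub_le_of_le (natDegree_add_le_of_le (natDegree_add_le_of_le
    (natDegree_sub_le_of_le (natDegree_sub_le_of_le ?_ ?_ : _ ≤ max (3 * N) (3 * N)) ?_ :
      _ ≤ max (max (3 * N) (3 * N)) (3 * N)) ?_ :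
      _ ≤ max (max (max (3 * N) (3 * N)) (3 * N)) (3 * N)) ?_ :
      _ ≤ max (max (max (max (3 * N) (3 * N)) (3 * N)) (3 * N)) (3 * N)) ?_ |>.trans
      (by simp : max (max (max (max (max (3 * N) (3 * N)) (3 * N)) (3 * N)) (3 * N)) (3 * N) ≤ _)
  · exact key hp (e hq) (e (e hr))
  · exact key hp (e hr) (e (e hq))
  · exact key (e hp) hq (e (e hr))
  · exact key (e hp) hr (e (e hq))
  · exact key (e (e hp)) hq (e hr)
  · exact key (e (e hp)) hr (e hq)

lemma wronski_coeff_bound {p q r : ℤ[X]} {N : ℕ} {h : ℤ} (hN : 1 ≤ N)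
    (hp : p.natDegree ≤ N) (hq : q.natDegree ≤ N) (hr : r.natDegree ≤ N)
    (hpc : ∀ i, |p.coeff i| ≤ h) (hqc : ∀ i, |q.coeff i| ≤ h) (hrc : ∀ i, |r.coeff i| ≤ h)
    (i : ℕ) : |(wronski p q r).coeff i| ≤ 6 * ((N + 1) ^ 2 * (N ^ 2 * h) ^ 3) := by
  have hh : 0 ≤ h := (abs_nonneg _).trans (hpc 0)
  have hN' : (1 : ℤ) ≤ N := by exact_mod_cast hN
  have key : ∀ {x y z : ℤ[X]}, x.natDegree ≤ N → y.natDegree ≤ N →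
      (∀ i, |x.coeff i| ≤ N ^ 2 * h) → (∀ i, |y.coeff i| ≤ N ^ 2 * h) →
      (∀ i, |z.coeff i| ≤ N ^ 2 * h) →
      |(x * (y * z)).coeff i| ≤ (N + 1) ^ 2 * (N ^ 2 * h) ^ 3 := by
    intro x y z hx hy hxc hyc hzc
    refine (coeff_mul_bound hx hxc (coeff_mul_bound hy hyc hzc) i).trans (le_of_eq ?_)
    ring
  have l0 : ∀ {x : ℤ[X]}, (∀ i, |x.coeff i| ≤ h) → ∀ i, |x.coeff i| ≤ N ^ 2 * h := by
    intro x hx i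
    refine (hx i).trans (le_mul_of_one_le_left hh (one_le_pow₀ hN'))
  have l1 : ∀ {x : ℤ[X]}, x.natDegree ≤ N → (∀ i, |x.coeff i| ≤ h) →
      ∀ i, |(euler x).coeff i| ≤ N ^ 2 * h := by
    intro x hxN hx i
    refine (euler_coeff_bound hxN hx i).trans ?_
    gcongr
    nlinarith
  have l2 : ∀ {x : ℤ[X]}, x.natDegree ≤ N → (∀ i, |x.coeff i| ≤ h) →
      ∀ i, |(euler (euler x)).coeff i| ≤ N ^ 2 * h := by
    intro x hxN hx i
    refine (euler_coeff_bound (euler_natDegree_le hxN) (euler_coeff_bound hxN hx) i).trans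
      (le_of_eq ?_)
    ring
  have e := @euler_natDegree_le ℤ _
  have k1 := key hp (e hq) (l0 hpc) (l1 hq hqc) (l2 hr hrc)
  have k2 := key hp (e hr) (l0 hpc) (l1 hr hrc) (l2 hq hqc)
  have k3 := key (e hp) hq (l1 hp hpc) (l0 hqc) (l2 hr hrc)
  have k4 := key (e hp) hr (l1 hp hpc) (l0 hrc) (l2 hq hqc)
  have k5 := key (e (e hp)) hq (l2 hp hpc) (l0 hqc) (l1 hr hrc)
  have k6 := key (e (e hp)) hr (l2 hp hpc) (l0 hrc) (l1 hq hqc)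
  unfold wronski
  simp only [coeff_add, coeff_sub]
  rw [abs_le] at *
  constructor <;> linarith [k1.1, k1.2, k2.1, k2.2, k3.1, k3.2, k4.1, k4.2, k5.1, k5.2, k6.1, k6.2]

/-- Polynomials of distinct degrees have a nonzero Wronskian: its top coefficient is a
Vandermonde determinant in the degrees. -/
lemma wronski_ne_zero {p q r : ℤ[X]} (hp : p ≠ 0) (hq : q ≠ 0) (hr : r ≠ 0)
    (hqp : q.natDegree < p.natDegree) (hrq : r.natDegree < q.natDegree) :
    wronski p q r ≠ 0 := by
  intro h0
  have e := @euler_natDegree_le ℤ _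
  have key : ∀ {x y z : ℤ[X]} {i j k : ℕ}, x.natDegree ≤ i → y.natDegree ≤ j → z.natDegree ≤ k →
      (x * (y * z)).coeff (i + (j + k)) = x.coeff i * (y.coeff j * z.coeff k) := by
    intro x y z i j k hx hy hz
    rw [coeff_mul_add_eq_of_natDegree_le hx (natDegree_mul_le_of_le hy hz),
      coeff_mul_add_eq_of_natDegree_le hy hz]
  have hc := congrArg (fun f => f.coeff (p.natDegree + (q.natDegree + r.natDegree))) h0
  have hs : p.natDegree + (q.natDegree + r.natDegree) =
    p.natDegree + (r.natDegree + q.natDegree) := by ring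
  simp only [wronski, coeff_add, coeff_sub, coeff_zero] at hc
  have k1 := key (le_refl p.natDegree) (e (le_refl q.natDegree)) (e (e (le_refl r.natDegree)))
  have k2 := key (le_refl p.natDegree) (e (le_refl r.natDegree)) (e (e (le_refl q.natDegree)))
  have k3 := key (e (le_refl p.natDegree)) (le_refl q.natDegree) (e (e (le_refl r.natDegree)))
  have k4 := key (e (le_refl p.natDegree)) (le_refl r.natDegree) (e (e (le_refl q.natDegree)))
  have k5 := key (e (e (le_refl p.natDegree))) (le_refl q.natDegree) (e (le_refl r.natDegree))
  have k6 := key (e (e (le_refl p.natDegree))) (le_refl r.natDegree) (e (le_refl q.natDegree))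
  rw [← hs] at k2 k4 k6
  rw [k1, k2, k3, k4, k5, k6] at hc
  simp only [euler_coeff, coeff_natDegree] at hc
  have hV : (p.leadingCoeff * q.leadingCoeff * r.leadingCoeff) *
      (((q.natDegree : ℤ) - p.natDegree) * ((r.natDegree : ℤ) - p.natDegree) *
        ((r.natDegree : ℤ) - q.natDegree)) = 0 := by linear_combination hc
  have a1 : ((q.natDegree : ℤ) - p.natDegree) ≠ 0 := by omega
  have a2 : ((r.natDegree : ℤ) - p.natDegree) ≠ 0 := by omega
  have a3 : ((r.natDegree : ℤ) - q.natDegree) ≠ 0 := by omega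
  have b1 := leadingCoeff_ne_zero.2 hp
  have b2 := leadingCoeff_ne_zero.2 hq
  have b3 := leadingCoeff_ne_zero.2 hr
  exact (mul_ne_zero (mul_ne_zero (mul_ne_zero b1 b2) b3) (mul_ne_zero (mul_ne_zero a1 a2) a3)) hV

lemma euler_map {R S : Type*} [CommRing R] [CommRing S] (f : R →+* S) (p : R[X]) :
    (euler p).map f = euler (p.map f) := by
  simp [euler, derivative_map]

lemma wronski_map {R S : Type*} [CommRing R] [CommRing S] (f : R →+* S) (p q r : R[X]) :
    (wronski p q r).map f = wronski (p.map f) (q.map f) (r.map f) := by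
  simp [wronski, euler_map]

lemma pow_dvd_euler {R : Type*} [CommRing R] {l p : R[X]} {s : ℕ} (h : l ^ (s + 1) ∣ p) :
    l ^ s ∣ euler p := by
  have := pow_sub_dvd_iterate_derivative_of_pow_dvd 1 h
  simpa [euler] using this.mul_left X

/-- Column operations: a combination `p + c q + c' r` of high vanishing order forces the
Wronskian to vanish to nearly the same order. -/
lemma pow_dvd_wronski {R : Type*} [CommRing R] {l p q r : R[X]} {s : ℕ} (c c' : R)
    (h : l ^ (s + 2) ∣ p + C c * q + C c' * r) : l ^ s ∣ wronski p q r := by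
  set G := p + C c * q + C c' * r with hG
  have e1 : euler G = euler p + C c * euler q + C c' * euler r := by
    simp only [hG, euler, derivative_add, derivative_mul, derivative_C]; ring
  have e2 : euler (euler G) =
      euler (euler p) + C c * euler (euler q) + C c' * euler (euler r) := by
    rw [e1]; simp only [euler, derivative_add, derivative_mul, derivative_C]; ring
  have d1 : l ^ (s + 1) ∣ euler G := pow_dvd_euler h
  have d2 : l ^ s ∣ euler (euler G) := pow_dvd_euler d1
  have hW : wronski p q r = G * (euler q * euler (euler r) - euler r * euler (euler q))
      - euler G * (q * euler (euler r) - r * euler (euler q))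
      + euler (euler G) * (q * euler r - r * euler q) := by
    rw [e2, e1, hG, wronski]; ring
  rw [hW]
  exact dvd_add (dvd_sub (((pow_dvd_pow l (by omega)).trans h).mul_right _)
    (((pow_dvd_pow l (by omega)).trans d1).mul_right _)) (d2.mul_right _)

/-- An integer polynomial with small coefficients cannot vanish to high order at a large real
number, because its Mahler measure is at most the sum of the absolute values of its coefficients. -/
lemma pow_le_of_pow_dvd {W : ℤ[X]} (hW : W ≠ 0) {N s : ℕ} {h : ℤ} {g : ℝ} (hg : 1 ≤ g)
    (hN : W.natDegree ≤ N) (hc : ∀ i, |W.coeff i| ≤ h)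
    (hd : (X - C g) ^ s ∣ W.map (Int.castRingHom ℝ)) : g ^ s ≤ (N + 1) * h := by
  have hd' : (X - C (g : ℂ)) ^ s ∣ W.map (Int.castRingHom ℂ) := by
    have := Polynomial.map_dvd Complex.ofRealHom hd
    rw [Polynomial.map_map] at this
    have hcomp : Complex.ofRealHom.comp (Int.castRingHom ℝ) = Int.castRingHom ℂ :=
      RingHom.ext_int _ _
    rw [hcomp] at this
    simpa using this
  obtain ⟨Q, hQ⟩ := hd'
  have hinj : Function.Injective (Int.castRingHom ℂ) := Int.cast_injective
  have hW' : W.map (Int.castRingHom ℂ) ≠ 0 := (Polynomial.map_ne_zero_iff hinj).2 hW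
  have hlc : 1 ≤ ‖Q.leadingCoeff‖ := by
    have h1 : (W.map (Int.castRingHom ℂ)).leadingCoeff = Q.leadingCoeff := by
      rw [hQ, leadingCoeff_mul, leadingCoeff_pow, leadingCoeff_X_sub_C, one_pow, one_mul]
    rw [← h1, leadingCoeff_map_of_injective hinj]
    have : 1 ≤ |W.leadingCoeff| := Int.one_le_abs (leadingCoeff_ne_zero.2 hW)
    simp only [eq_intCast, Complex.norm_intCast]
    exact_mod_cast this
  have hM : (W.map (Int.castRingHom ℂ)).mahlerMeasure = g ^ s * Q.mahlerMeasure := by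
    rw [hQ, mahlerMeasure_mul]
    congr 1
    have : ∀ s : ℕ, ((X - C (g : ℂ)) ^ s).mahlerMeasure = g ^ s := by
      intro s
      induction s with
      | zero => simp
      | succ s ih =>
        rw [pow_succ, mahlerMeasure_mul, ih, mahlerMeasure_X_sub_C, Complex.norm_real,
          Real.norm_of_nonneg (by linarith), max_eq_right hg, pow_succ]
    exact this s
  have h1 := mahlerMeasure_le_sum_norm_coeff (W.map (Int.castRingHom ℂ))
  have h2 := one_le_mahlerMeasure_of_one_le_norm_leadingCoeff hlc
  rw [hM, sum_over_range' _ (by simp) (N + 1)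
    (Nat.lt_succ_of_le ((natDegree_map_le).trans hN))] at h1
  have hgs : 0 ≤ g ^ s := by positivity
  calc g ^ s ≤ g ^ s * Q.mahlerMeasure := le_mul_of_one_le_right hgs h2
    _ ≤ _ := h1
    _ ≤ (Finset.range (N + 1)).card • (h : ℝ) := by
      apply Finset.sum_le_card_nsmul
      intro i _
      simp only [coeff_map, eq_intCast, Complex.norm_intCast]
      exact_mod_cast hc i
    _ = _ := by simp

/-! ### Hasse derivatives of the auxiliary function -/

lemma pow_dvd_hasseDeriv {R : Type*} [CommRing R] (q S : R[X]) (t k : ℕ) :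
    q ^ (t - k) ∣ hasseDeriv k (q ^ t * S) := by
  induction t generalizing k with
  | zero => simp
  | succ t ih =>
    rw [pow_succ', mul_assoc, hasseDeriv_mul]
    refine Finset.dvd_sum fun ij hij => ?_
    have hij := Finset.HasAntidiagonal.mem_antidiagonal.1 hij
    rcases Nat.eq_zero_or_pos ij.1 with h0 | h0
    · rw [h0, hasseDeriv_zero']
      refine (pow_dvd_pow q (by omega : t + 1 - k ≤ (t - ij.2) + 1)).trans ?_
      rw [pow_succ']
      exact mul_dvd_mul_left q (ih ij.2)
    · exact ((pow_dvd_pow q (by omega)).trans (ih ij.2)).mul_left _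

/-- Write `P₀ = c R + q ^ t S₀`, `P₁ = 2 a R + q ^ t S₁` and `P₂ = c R`.
If `q(γ)` is a multiple of `β` and `c w² + 2a w + c` is a multiple of `β ^ k`, then the
Hasse derivatives at `γ` of `P₀ + P₁ w + P₂ w²`, with `w` treated as a constant, are divisible
by high powers of `β`. -/
lemma combination_dvd {K : Type*} [CommRing K] (q R S₁ S₀ : ℤ[X]) (c a : ℤ) (γ w β : K)
    (t k i : ℕ) (htk : t ≤ k) (hq : β ∣ aeval γ q) (hw : β ^ k ∣ c * w ^ 2 + 2 * a * w + c) :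
    β ^ (t - i) ∣ aeval γ (hasseDeriv i (C c * R + q ^ t * S₀)) +
      aeval γ (hasseDeriv i (C (2 * a) * R + q ^ t * S₁)) * w +
      aeval γ (hasseDeriv i (C c * R)) * w ^ 2 := by
  have hS : ∀ S : ℤ[X], β ^ (t - i) ∣ aeval γ (hasseDeriv i (q ^ t * S)) := by
    intro S
    have h1 := map_dvd (aeval γ) (pow_dvd_hasseDeriv q S t i)
    rw [map_pow] at h1
    exact (pow_dvd_pow_of_dvd hq _).trans h1
  have hC : ∀ z : ℤ, aeval γ (hasseDeriv i (C z * R)) = z * aeval γ (hasseDeriv i R) := by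
    intro z
    rw [← smul_eq_C_mul, map_smul, map_smul, zsmul_eq_mul]
  simp only [map_add, hC]
  have hw' : β ^ (t - i) ∣ c * w ^ 2 + 2 * a * w + c := (pow_dvd_pow β (by omega)).trans hw
  have := dvd_add (dvd_add (hw'.mul_left (aeval γ (hasseDeriv i R))) (hS S₀)) ((hS S₁).mul_right w)
  convert this using 1
  push_cast
  ring

/-- Evaluation of a Hasse derivative of a polynomial supported on exponents in `[m, m + n)`. -/
lemma pow_mul_aeval_hasseDeriv {K : Type*} [CommRing K] (P : ℤ[X]) (γ : K) (m n i : ℕ)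
    (h1 : X ^ m ∣ P) (h2 : P.degree < (m + n : ℕ)) :
    γ ^ i * aeval γ (hasseDeriv i P) =
      ∑ l ∈ Finset.range n, (((m + l).choose i * P.coeff (m + l) : ℤ) : K) * γ ^ (m + l) := by
  rw [degree_lt_iff_coeff_zero] at h2
  rw [X_pow_dvd_iff] at h1
  have hmon : ∀ (j : ℕ) (r : ℤ), γ ^ i * aeval γ (hasseDeriv i (monomial j r)) =
      ((j.choose i * r : ℤ) : K) * γ ^ j := by
    intro j r
    rw [hasseDeriv_monomial, aeval_monomial]
    by_cases hij : i ≤ j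
    · have : γ ^ j = γ ^ i * γ ^ (j - i) := by rw [← pow_add]; congr 1; omega
      rw [this]; simp; ring
    · rw [Nat.choose_eq_zero_of_lt (by omega)]; simp
  have hP : P.natDegree < m + n ∨ P = 0 := by
    by_cases h0 : P = 0
    · exact Or.inr h0
    · left
      by_contra! h
      exact h0 (leadingCoeff_eq_zero.1 (h2 _ h))
  rcases hP with hP | hP
  · conv_lhs => rw [P.as_sum_range' (m + n) hP]
    rw [map_sum, map_sum, Finset.mul_sum, Finset.sum_range_add]
    rw [Finset.sum_eq_zero, zero_add]
    · exact Finset.sum_congr rfl fun l _ => hmon _ _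
    · intro j hj
      rw [h1 j (Finset.mem_range.1 hj)]; simp
  · subst hP; simp

/-- If all three blocks are aligned with powers of `w = γ ^ n`, the combination of Hasse
derivatives is, up to a power of `γ`, an integer combination of `1, γ, …, γ ^ (n - 1)`. -/
lemma combination_eq {K : Type*} [CommRing K] (P₀ P₁ P₂ : ℤ[X]) (γ : K) (n i : ℕ) (H : ℤ)
    (hP₀ : X ^ (2 * n) ∣ P₀) (hP₀' : P₀.degree < (2 * n + n : ℕ))
    (hP₁ : X ^ n ∣ P₁) (hP₁' : P₁.degree < (n + n : ℕ)) (hP₂' : P₂.degree < (n : ℕ))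
    (h₀ : ∀ i, |P₀.coeff i| ≤ H) (h₁ : ∀ i, |P₁.coeff i| ≤ H) (h₂ : ∀ i, |P₂.coeff i| ≤ H) :
    ∃ f : ℕ → ℤ, (∀ l ∈ Finset.range n, |f l| ≤ 3 * (8 ^ n * H)) ∧
      γ ^ i * (aeval γ (hasseDeriv i P₀) + aeval γ (hasseDeriv i P₁) * γ ^ n +
        aeval γ (hasseDeriv i P₂) * (γ ^ n) ^ 2) =
      γ ^ (2 * n) * ∑ l ∈ Finset.range n, (f l : K) * γ ^ l := by
  have hH : 0 ≤ H := (abs_nonneg _).trans (h₀ 0)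
  refine ⟨fun l => (2 * n + l).choose i * P₀.coeff (2 * n + l) +
    (n + l).choose i * P₁.coeff (n + l) + (0 + l).choose i * P₂.coeff (0 + l), ?_, ?_⟩
  · intro l hl
    have hl' := Finset.mem_range.1 hl
    have key : ∀ (P : ℤ[X]) (j : ℕ), (∀ i, |P.coeff i| ≤ H) → j ≤ 3 * n →
        |(j.choose i : ℤ) * P.coeff j| ≤ 8 ^ n * H := by
      intro P j hP hj
      rw [abs_mul, Nat.abs_cast]
      apply mul_le_mul _ (hP j) (abs_nonneg _) (by positivity)
      have : j.choose i ≤ 8 ^ n :=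
        (Nat.choose_le_two_pow j i).trans ((Nat.pow_le_pow_right (by norm_num) hj).trans
          (by rw [pow_mul]; norm_num))
      exact_mod_cast this
    refine (abs_add_three _ _ _).trans ?_
    have := key P₀ (2 * n + l) h₀ (by omega)
    have := key P₁ (n + l) h₁ (by omega)
    have := key P₂ (0 + l) h₂ (by omega)
    linarith
  · have e₀ := pow_mul_aeval_hasseDeriv P₀ γ (2 * n) n i hP₀ hP₀'
    have e₁ := pow_mul_aeval_hasseDeriv P₁ γ n n i hP₁ hP₁'
    have e₂ := pow_mul_aeval_hasseDeriv P₂ γ 0 n i (by simp) (by simpa using hP₂')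
    rw [mul_add, mul_add, ← mul_assoc, ← mul_assoc, e₀, e₁, e₂, Finset.sum_mul, Finset.sum_mul,
      Finset.mul_sum, ← Finset.sum_add_distrib, ← Finset.sum_add_distrib]
    refine Finset.sum_congr rfl fun l _ => ?_
    push_cast
    ring

/-- Vanishing of all Hasse derivatives up to order `I` means divisibility by a power. -/
lemma pow_dvd_of_hasseDeriv {G : ℝ[X]} {g : ℝ} {I : ℕ}
    (h : ∀ i ≤ I, (hasseDeriv i G).eval g = 0) : (X - C g) ^ (I + 1) ∣ G := by
  rw [X_sub_C_pow_dvd_iff, ← taylor_apply, X_pow_dvd_iff]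
  intro i hi
  rw [taylor_coeff]
  exact h i (by omega)

/-- The conjugate of `γ` lies in `(0, 1]`, so only one of the two factors of the norm is large. -/
lemma norm_bound {D : ℤ} (hD : 0 ≤ D) (γ : ℤ√D) (hγ : γ * star γ = 1)
    (hg : 1 ≤ Zsqrtd.toReal hD γ) (n : ℕ) (F : ℤ) (f : ℕ → ℤ)
    (hf : ∀ l ∈ Finset.range n, |f l| ≤ F) :
    (|(∑ l ∈ Finset.range n, (f l : ℤ√D) * γ ^ l).norm| : ℝ) ≤
      (n * F) ^ 2 * Zsqrtd.toReal hD γ ^ n := by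
  set φ := Zsqrtd.toReal hD with hφ
  set g := φ γ
  set z := ∑ l ∈ Finset.range n, (f l : ℤ√D) * γ ^ l with hz
  have hg' : g * φ (star γ) = 1 := by rw [← map_mul, hγ, map_one]
  have hs0 : 0 ≤ φ (star γ) := by
    by_contra! h
    nlinarith
  have hs1 : φ (star γ) ≤ 1 := by nlinarith
  have hnorm : ((z.norm : ℤ) : ℝ) = φ z * φ (star z) := by
    rw [← map_mul, ← Zsqrtd.norm_eq_mul_conj, map_intCast]
  have hfR : ∀ l ∈ Finset.range n, |(f l : ℝ)| ≤ F := by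
    intro l hl; exact_mod_cast hf l hl
  have h1 : |φ z| ≤ n * F * g ^ n := by
    rw [hz, map_sum]
    refine (Finset.abs_sum_le_sum_abs _ _).trans ?_
    refine (Finset.sum_le_card_nsmul _ _ (F * g ^ n) fun l hl => ?_).trans (by simp [mul_assoc])
    rw [map_mul, map_pow, map_intCast, abs_mul, abs_of_nonneg (by positivity : 0 ≤ φ γ ^ l)]
    apply mul_le_mul (hfR l hl) _ (by positivity) ((abs_nonneg _).trans (hfR l hl))
    exact pow_le_pow_right₀ hg (Finset.mem_range.1 hl).le
  have h2 : |φ (star z)| ≤ n * F := by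
    rw [hz, star_sum, map_sum]
    refine (Finset.abs_sum_le_sum_abs _ _).trans ?_
    refine (Finset.sum_le_card_nsmul _ _ (F : ℝ) fun l hl => ?_).trans (by simp)
    rw [star_mul', star_pow, star_intCast, map_mul, map_pow, map_intCast, abs_mul,
      abs_of_nonneg (by positivity : 0 ≤ φ (star γ) ^ l)]
    calc _ ≤ (F : ℝ) * 1 := mul_le_mul (hfR l hl) (pow_le_one₀ hs0 hs1) (by positivity)
            ((abs_nonneg _).trans (hfR l hl))
      _ = F := mul_one _
  rw [hnorm, abs_mul]
  calc _ ≤ (n * F * g ^ n) * (n * F) :=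
        mul_le_mul h1 h2 (abs_nonneg _) ((abs_nonneg _).trans h1)
    _ = _ := by ring

/-! ### Construction of the auxiliary polynomials -/

lemma quad_coeff_le {c e : ℤ} (hc : 1 ≤ c) (he : 1 ≤ e) (he' : e ≤ c ^ 2) (i : ℕ) :
    |(C c * X ^ 2 + C (2 * e) * X + C c : ℤ[X]).coeff i| ≤ 2 * (c + 1) ^ 2 := by
  simp only [coeff_add, coeff_C_mul, coeff_X_pow, coeff_X, coeff_C]
  rcases i with _ | _ | _ | i
  · norm_num
    rw [abs_of_nonneg (by omega)]
    nlinarith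
  · norm_num
    rw [abs_of_nonneg (by omega)]
    nlinarith
  · norm_num
    rw [abs_of_nonneg (by omega)]
    nlinarith
  · norm_num
    positivity

lemma quad_natDegree_le (c e : ℤ) :
    (C c * X ^ 2 + C (2 * e) * X + C c : ℤ[X]).natDegree ≤ 2 := by
  compute_degree

lemma quad_pow_coeff_le {c e : ℤ} (hc : 1 ≤ c) (he : 1 ≤ e) (he' : e ≤ c ^ 2) (t i : ℕ) :
    |((C c * X ^ 2 + C (2 * e) * X + C c : ℤ[X]) ^ t).coeff i| ≤ (6 * (c + 1) ^ 2) ^ t := by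
  induction t generalizing i with
  | zero =>
    rw [pow_zero, pow_zero, coeff_one]
    split_ifs <;> simp
  | succ t ih =>
    rw [pow_succ']
    refine (coeff_mul_bound (quad_natDegree_le c e) (quad_coeff_le hc he he') ih i).trans
      (le_of_eq ?_)
    push_cast
    ring

/-- The auxiliary polynomials `P₂ = cR`, `P₁ = 2aR + q^t S₁`, `P₀ = cR + q^t S₀`, where
`q = cX² + 2eX + c`: they are nonzero, supported on the disjoint ranges of exponents `[0, n)`,
`[n, 2n)` and `[2n, 3n)`, and have small coefficients. -/
lemma exists_auxiliary {c e a : ℤ} (hc : 1 ≤ c) (ha : 1 ≤ a) (ha' : a ≤ c) (he : 1 ≤ e)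
    (he' : e ≤ c ^ 2) {n t : ℕ} (hn : 1 ≤ n) (ht : 5 * t ≤ 3 * n) (ht' : n ≤ 2 * t)
    (q : ℤ[X]) (hq : q = C c * X ^ 2 + C (2 * e) * X + C c) :
    ∃ R S₁ S₀ : ℤ[X],
      (C c * R ≠ 0 ∧ C (2 * a) * R + q ^ t * S₁ ≠ 0 ∧ C c * R + q ^ t * S₀ ≠ 0) ∧
      ((C c * R).degree < (n : ℕ) ∧ (C (2 * a) * R + q ^ t * S₁).degree < (n + n : ℕ) ∧
        (C c * R + q ^ t * S₀).degree < (2 * n + n : ℕ)) ∧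
      (X ^ n ∣ C (2 * a) * R + q ^ t * S₁ ∧ X ^ (2 * n) ∣ C c * R + q ^ t * S₀) ∧
      (∀ i, |(C c * R).coeff i| ≤ (64 * (c + 1) ^ 2) ^ (6 * n)) ∧
      (∀ i, |(C (2 * a) * R + q ^ t * S₁).coeff i| ≤ (64 * (c + 1) ^ 2) ^ (6 * n)) ∧
      (∀ i, |(C c * R + q ^ t * S₀).coeff i| ≤ (64 * (c + 1) ^ 2) ^ (6 * n)) := by
  set K : ℤ := 64 * (c + 1) ^ 2 with hK
  set A : ℤ := (6 * (c + 1) ^ 2) ^ n with hA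
  have h6 : (1 : ℤ) ≤ 6 * (c + 1) ^ 2 := by nlinarith
  have hA1 : 6 * (c + 1) ^ 2 ≤ A := le_self_pow₀ h6 (by omega)
  have hA0 : 0 ≤ A := by linarith
  have h10 : (6 * n : ℤ) ≤ 10 ^ n := by
    have : ∀ m : ℕ, 1 ≤ m → (6 * m : ℤ) ≤ 10 ^ m := by
      intro m hm
      induction m, hm using Nat.le_induction with
      | base => norm_num
      | succ m hm ih => rw [pow_succ]; push_cast; have : (1 : ℤ) ≤ m := by exact_mod_cast hm
                        linarith
    exact this n hn
  have hKn : 6 * n * A ≤ K ^ n := by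
    calc 6 * n * A ≤ 10 ^ n * A := by gcongr
      _ = (60 * (c + 1) ^ 2) ^ n := by rw [hA, ← mul_pow]; ring
      _ ≤ K ^ n := by
        apply pow_le_pow_left₀ (by positivity)
        rw [hK]; gcongr; norm_num
  have hn' : (1 : ℤ) ≤ n := by exact_mod_cast hn
  have hqc : ∀ i, |(q ^ t).coeff i| ≤ A := by
    intro i
    rw [hq]
    refine (quad_pow_coeff_le hc he he' t i).trans (pow_le_pow_right₀ h6 (by omega))
  have hqd : (q ^ t).natDegree = 2 * t := by
    rw [natDegree_pow, hq, natDegree_quadratic (by omega), mul_comm]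
  have hq2 : q.natDegree = 2 := by rw [hq, natDegree_quadratic (by omega)]
  have hq0 : q ≠ 0 := by rintro h; rw [h] at hq2; simp at hq2
  have hqX : ¬ X ∣ q := by
    rw [X_dvd_iff, hq]
    simp
    omega
  have hcA : 2 * c ≤ A := by nlinarith
  obtain ⟨A', hA'⟩ := Int.eq_ofNat_of_zero_le hA0
  have hA'' : A = (A' : ℤ) := hA'
  obtain ⟨R, S₁, S₀, hne, dR, d1, d0, cR, c1, c0, v1, v0⟩ :=
    siegel_blocks n t A' c (2 * a) (q ^ t) (by omega) ht (by zify; rw [← hA'']; linarith)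
      (by rw [← hA'', abs_of_nonneg (by omega)]; linarith)
      (by rw [← hA'', abs_of_nonneg (by omega)]; linarith)
      (by rw [← hA'']; exact hqc)
  rw [← hA''] at cR c1 c0
  -- the Siegel coefficients are at most `K ^ (5n)`
  have hL : (6 * n * A) ^ 5 ≤ K ^ (5 * n) := by
    rw [mul_comm 5 n, pow_mul]
    exact pow_le_pow_left₀ (by positivity) hKn 5
  replace cR := fun i => (cR i).trans hL
  replace c1 := fun i => (c1 i).trans hL
  replace c0 := fun i => (c0 i).trans hL
  have hKpos : 0 ≤ K := by positivity
  -- a power of `X` dividing `q ^ t * S` divides `S`, as `q(0) ≠ 0`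
  have hXS : ∀ (m : ℕ) (S : ℤ[X]), X ^ m ∣ q ^ t * S → S.degree < (m : ℕ) → S = 0 := by
    intro m S h1 h2
    by_contra hS
    have h3 : X ^ m ∣ S := (prime_X.pow_dvd_of_dvd_mul_left m
      (fun h => hqX (prime_X.dvd_of_dvd_pow h)) h1)
    have := degree_le_of_dvd h3 hS
    rw [degree_X_pow] at this
    exact absurd (lt_of_le_of_lt this h2) (lt_irrefl _)
  have hR : R ≠ 0 := by
    rintro rfl
    have e1 := hXS n S₁ (by simpa using v1)
      (d1.trans_le (by exact_mod_cast (by omega : 2 * n - 2 * t ≤ n)))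
    have e0 := hXS (2 * n) S₀ (by simpa using v0)
      (d0.trans_le (by exact_mod_cast (by omega : 3 * n - 2 * t ≤ 2 * n)))
    simp [e1, e0] at hne
  have hCR : ∀ z : ℤ, z ≠ 0 → ∀ S : ℤ[X], C z * R + q ^ t * S ≠ 0 := by
    intro z hz S h0
    have hzR : C z * R ≠ 0 := mul_ne_zero (by simpa using hz) hR
    have hS : S ≠ 0 := by
      rintro rfl
      simp at h0
      tauto
    have h1 : C z * R = - (q ^ t * S) := by linear_combination h0
    have h2 : (C z * R).natDegree = 2 * t + S.natDegree := by
      rw [h1, natDegree_neg, natDegree_mul (pow_ne_zero _ hq0) hS, hqd]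
    have h3 : (C z * R).natDegree = R.natDegree := natDegree_C_mul hz
    have h4 : R.natDegree < n := (natDegree_lt_iff_degree_lt hR).2 dR
    omega
  have hdeg : ∀ (z : ℤ) (S : ℤ[X]) (m : ℕ), z ≠ 0 → n ≤ m → S.degree < (m - 2 * t : ℕ) →
      (C z * R + q ^ t * S).degree < (m : ℕ) := by
    intro z S m hz hm hS
    refine lt_of_le_of_lt (degree_add_le _ _) (max_lt ?_ ?_)
    · rw [degree_C_mul hz]
      exact dR.trans_le (by exact_mod_cast hm)
    · by_cases hS0 : S = 0
      · subst hS0; simp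
      · rw [← natDegree_lt_iff_degree_lt (mul_ne_zero (pow_ne_zero _ hq0) hS0),
          natDegree_mul (pow_ne_zero _ hq0) hS0, hqd]
        have := (natDegree_lt_iff_degree_lt hS0).2 hS
        omega
  have hco : ∀ (z : ℤ) (S : ℤ[X]), 0 ≤ z → z ≤ 2 * c → (∀ i, |S.coeff i| ≤ K ^ (5 * n)) →
      ∀ i, |(C z * R + q ^ t * S).coeff i| ≤ K ^ (6 * n) := by
    intro z S hz0 hz hS i
    have b1 : |(C z * R).coeff i| ≤ A * K ^ (5 * n) := by
      rw [coeff_C_mul, abs_mul, abs_of_nonneg hz0]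
      exact mul_le_mul (by linarith) (cR i) (abs_nonneg _) hA0
    have b2 := coeff_mul_bound hqd.le hqc hS i
    rw [coeff_add]
    refine (abs_add_le _ _).trans ?_
    have h2t : ((2 * t : ℕ) : ℤ) + 1 + 1 ≤ 6 * n := by push_cast; omega
    have hpos : 0 ≤ A * K ^ (5 * n) := by positivity
    calc _ ≤ A * K ^ (5 * n) + (((2 * t : ℕ) : ℤ) + 1) * (A * K ^ (5 * n)) := add_le_add b1 b2
      _ = (((2 * t : ℕ) : ℤ) + 1 + 1) * (A * K ^ (5 * n)) := by ring
      _ ≤ 6 * n * (A * K ^ (5 * n)) := by gcongr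
      _ = (6 * n * A) * K ^ (5 * n) := by ring
      _ ≤ K ^ n * K ^ (5 * n) := by gcongr
      _ = K ^ (6 * n) := by rw [← pow_add]; congr 1; ring
  refine ⟨R, S₁, S₀, ⟨by simpa using hCR c (by omega) 0, hCR _ (by omega) _, hCR _ (by omega) _⟩,
    ⟨by rwa [degree_C_mul (by omega)], hdeg _ _ _ (by omega) (by omega) ?_,
      hdeg _ _ _ (by omega) (by omega) ?_⟩,
    ⟨v1, v0⟩, fun i => ?_, hco _ _ (by omega) (by omega) c1, hco _ _ (by omega) (by omega) c0⟩
  · convert d1 using 3; ring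
  · convert d0 using 3; ring
  · simpa using hco c 0 (by omega) (by omega) (by simp; positivity) i

/-! ### Norm-one units and large exponents -/

/-- A norm-one unit `γ ≥ 1` is within `1` of twice its rational part, because its conjugate
lies in `(0, 1]`. -/
lemma unit_bounds {D : ℤ} (hD : 0 ≤ D) (γ : ℤ√D) (hγ : γ * star γ = 1)
    (hg : 1 ≤ Zsqrtd.toReal hD γ) :
    2 * (γ.re : ℝ) - 1 ≤ Zsqrtd.toReal hD γ ∧ Zsqrtd.toReal hD γ ≤ 2 * (γ.re : ℝ) := by
  have h1 : Zsqrtd.toReal hD γ * Zsqrtd.toReal hD (star γ) = 1 := by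
    rw [← map_mul, hγ, map_one]
  have h2 : Zsqrtd.toReal hD γ + Zsqrtd.toReal hD (star γ) = 2 * (γ.re : ℝ) := by
    have : γ + star γ = ((2 * γ.re : ℤ) : ℤ√D) := by
      ext <;> simp [two_mul]
    rw [← map_add, this, map_intCast]
    push_cast; ring
  have h3 : 0 ≤ Zsqrtd.toReal hD (star γ) := by
    by_contra! h
    nlinarith
  constructor <;> nlinarith

lemma pow_star_eq_one {D : ℤ} {γ : ℤ√D} (hγ : γ * star γ = 1) (n : ℕ) :
    γ ^ n * star (γ ^ n) = 1 := by
  rw [star_pow, ← mul_pow, hγ, one_pow]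

/-- The trace relation `γ + star γ = 2 x` of a norm-one unit with rational part `x`, times `γ`. -/
lemma unit_quadratic {D : ℤ} {γ : ℤ√D} (hγ : γ * star γ = 1) :
    γ ^ 2 + 1 = 2 * (γ.re : ℤ√D) * γ := by
  have : γ + star γ = 2 * (γ.re : ℤ√D) := by
    ext <;> simp [two_mul]
  rw [← this, ← hγ]; ring

lemma hasseDeriv_map_int (i : ℕ) (P : ℤ[X]) :
    (hasseDeriv i P).map (Int.castRingHom ℝ) = hasseDeriv i (P.map (Int.castRingHom ℝ)) := by
  ext j
  simp [hasseDeriv_coeff]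

/-- If `γ` has rational part `x = e (B - 1) / c`, then `γ` equals `B` up to factors of size `O(c)`. -/
lemma unit_size {c e B x : ℤ} {g : ℝ} (hc : 1 ≤ c) (he : 1 ≤ e) (he' : e ≤ c ^ 2) (hB : c + 2 ≤ B)
    (hx : c * x = e * (B - 1)) (h1 : 2 * (x : ℝ) - 1 ≤ g) (h2 : g ≤ 2 * (x : ℝ)) :
    (B : ℝ) ≤ c * g ∧ g ≤ 2 * c * B := by
  have hcR : (1 : ℝ) ≤ c := by exact_mod_cast hc
  constructor
  · have h3 : B ≤ c * (2 * x - 1) := by nlinarith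
    have h3' : (B : ℝ) ≤ c * (2 * x - 1) := by exact_mod_cast h3
    exact h3'.trans (by gcongr)
  · have h3 : x ≤ c * B := by
      by_contra! h
      have h4 : c * (c * B) < c * x := by nlinarith
      nlinarith
    have h3' : (x : ℝ) ≤ c * B := by exact_mod_cast h3
    linarith

/-- The numerical estimate for the Wronskian bound. -/
lemma wronski_const_le {K : ℝ} (hK : 64 ≤ K) {n : ℕ} (hn : 1 ≤ n) :
    (9 * n + 1 : ℝ) * (6 * ((3 * n + 1) ^ 2 * ((3 * n) ^ 2 * K ^ (6 * n)) ^ 3)) ≤ K ^ (28 * n) := by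
  have hn' : (1 : ℝ) ≤ n := by exact_mod_cast hn
  have h2n : (n : ℝ) ≤ 2 ^ n := by exact_mod_cast (Nat.lt_two_pow_self).le
  have h1 : (9 * n + 1 : ℝ) ≤ 10 * 2 ^ n := by linarith
  have h2 : (3 * n + 1 : ℝ) ≤ 4 * 2 ^ n := by linarith
  have h3 : (3 * n : ℝ) ≤ 3 * 2 ^ n := by linarith
  calc _ ≤ (10 * 2 ^ n : ℝ) *
        (6 * ((4 * 2 ^ n) ^ 2 * ((3 * 2 ^ n) ^ 2 * K ^ (6 * n)) ^ 3)) := by gcongr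
    _ = 699840 * (2 ^ n) ^ 9 * K ^ (18 * n) := by ring
    _ ≤ 64 ^ 4 * (2 ^ n) ^ 9 * K ^ (18 * n) := by gcongr; norm_num
    _ ≤ K ^ (4 * n) * (K ^ n) ^ 6 * K ^ (18 * n) := by
        have hA : (64 : ℝ) ^ 4 ≤ K ^ (4 * n) := by
          rw [mul_comm, pow_mul]
          exact pow_le_pow_left₀ (by norm_num)
            (hK.trans (le_self_pow₀ (by linarith) (by omega : n ≠ 0))) 4
        have hB : ((2 : ℝ) ^ n) ^ 9 ≤ (K ^ n) ^ 6 := by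
          have e1 : ((2 : ℝ) ^ n) ^ 9 = (512 : ℝ) ^ n := by
            rw [← pow_mul, mul_comm, pow_mul]; norm_num
          have e2 : (K ^ n) ^ 6 = (K ^ 6) ^ n := by rw [← pow_mul, ← pow_mul, mul_comm]
          rw [e1, e2]
          refine pow_le_pow_left₀ (by norm_num) ?_ n
          calc (512 : ℝ) ≤ 64 ^ 6 := by norm_num
            _ ≤ K ^ 6 := by gcongr
        gcongr
    _ = K ^ (28 * n) := by rw [← pow_mul, ← pow_add, ← pow_add]; congr 1; ring

/-- The case of large `n`. Put `w = γ ^ n`; then `c γ² + 2eγ + c` is divisible by `B` and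
`c w² + 2aw + c` by `B ^ k`, so the combinations `P₀⁽ⁱ⁾(γ) + P₁⁽ⁱ⁾(γ) w + P₂⁽ⁱ⁾(γ) w²` of Hasse
derivatives of the auxiliary polynomials are divisible by `B ^ (t - i)`, where `t ≈ 3n/5`.
If one of them with `i ≤ n / 100 + 3` is nonzero, its norm is at least `B ^ (2(t - i))`, but it is
at most about `B ^ n`. If all of them vanish, the Wronskian of `P₀, P₁, P₂` vanishes at `γ` to
an order that its coefficients do not allow.

The exponent `N = 10000` is a variable, which keeps `κ ^ N` from being evaluated. -/
lemma core_large {D : ℤ} (hD : 0 ≤ D) (hns : ∀ z : ℤ, D ≠ z * z) {γ : ℤ√D} (hγ : γ * star γ = 1)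
    (hg : 1 ≤ Zsqrtd.toReal hD γ) {c e a B : ℤ} (hc : 1 ≤ c) (ha : 1 ≤ a) (ha' : a ≤ c)
    (he : 1 ≤ e) (he' : e ≤ c ^ 2) {N : ℕ} (hN : N = 10000) {κ : ℤ} (hκ : κ = 64 * (c + 1) ^ 2)
    (hB : κ ^ N ≤ B) {n k : ℕ}
    (hx : c * γ.re = e * (B - 1)) (hw : c * (γ ^ n).re = a * (B ^ k - 1)) (hn : 100 ≤ n) :
    False := by
  set φ := Zsqrtd.toReal hD with hφ
  set g := φ γ with hgdef
  obtain ⟨K, hKκ⟩ : ∃ K : ℝ, K = κ := ⟨_, rfl⟩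
  have hK : K = 64 * (c + 1) ^ 2 := by rw [hKκ, hκ]; push_cast; ring
  have hcR : (1 : ℝ) ≤ c := by exact_mod_cast hc
  have hK64 : 64 ≤ K := by rw [hK]; nlinarith
  have hK1 : 1 < K := by linarith
  have hKc : 2 * c ≤ K := by rw [hK]; nlinarith
  have hBR : K ^ N ≤ (B : ℝ) := by
    rw [hKκ]; exact_mod_cast hB
  have hKB : K ≤ B := (le_self_pow₀ hK1.le (by omega)).trans hBR
  have hB1 : (1 : ℝ) ≤ B := by linarith
  have hcB : c + 2 ≤ B := by
    have : (c : ℝ) + 2 ≤ B := by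
      refine le_trans ?_ hKB
      rw [hK]; nlinarith
    exact_mod_cast this
  obtain ⟨u1, u2⟩ := unit_bounds hD γ hγ hg
  obtain ⟨hBg, hgB⟩ := unit_size hc he he' hcB hx u1 u2
  rw [← hφ, ← hgdef] at hBg hgB
  have hg1 : 1 ≤ g := hg
  have hgK : K ^ (N - 1) ≤ g := by
    have h1 : c * K ^ (N - 1) ≤ c * g := by
      refine le_trans ?_ (hBR.trans hBg)
      obtain ⟨M, hM⟩ : ∃ M, N = M + 1 := ⟨N - 1, by omega⟩
      rw [hM, pow_succ', Nat.add_sub_cancel]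
      gcongr; linarith
    exact le_of_mul_le_mul_left h1 (by linarith)
  -- `B ^ n ≤ (cγ) ^ n` is at most `K ^ n B ^ k`, so `k ≥ 2n/3 ≥ t` for the exponent `t` below
  have hnk : 3 * n ≤ 3 * k + n := by
    have hφn : φ (γ ^ n) = g ^ n := by rw [map_pow]
    have u3 := (unit_bounds hD (γ ^ n) (pow_star_eq_one hγ n)
      (by rw [← hφ, hφn]; exact one_le_pow₀ hg1)).2
    rw [← hφ, hφn] at u3
    have hB0 : 0 ≤ B := by omega
    have h3 : (γ ^ n).re ≤ B ^ k := by
      by_contra! h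
      have hBk : 0 ≤ B ^ k := by positivity
      nlinarith
    have h3' : ((γ ^ n).re : ℝ) ≤ (B : ℝ) ^ k := by exact_mod_cast h3
    have h4 : (B : ℝ) ^ n ≤ K ^ n * B ^ k := by
      calc (B : ℝ) ^ n ≤ (c * g) ^ n := by gcongr
        _ = c ^ n * g ^ n := mul_pow _ _ _
        _ ≤ c ^ n * (2 * B ^ k) := by gcongr; linarith
        _ = (2 * c ^ n) * B ^ k := by ring
        _ ≤ (2 ^ n * c ^ n) * B ^ k := by
            gcongr
            exact le_self_pow₀ (by norm_num) (by omega)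
        _ = (2 * c) ^ n * B ^ k := by rw [mul_pow]
        _ ≤ K ^ n * B ^ k := by gcongr
    by_contra! hlt
    have h5 : (B : ℝ) ^ (n - k) * B ^ k ≤ K ^ n * B ^ k := by
      rw [← pow_add, Nat.sub_add_cancel (by omega)]; exact h4
    have h6 : (B : ℝ) ^ (n - k) ≤ K ^ n := le_of_mul_le_mul_right h5 (by positivity)
    have h7 : K ^ (N * (n - k)) ≤ K ^ n := by
      rw [pow_mul]
      exact (pow_le_pow_left₀ (by positivity) hBR _).trans h6
    have := (pow_le_pow_iff_right₀ hK1).1 h7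
    rw [hN] at this
    omega
  obtain ⟨t, ht⟩ : ∃ t, t = 3 * n / 5 := ⟨_, rfl⟩
  set q : ℤ[X] := C c * X ^ 2 + C (2 * e) * X + C c with hq
  obtain ⟨R, S₁, S₀, ⟨n2, n1, n0⟩, ⟨d2, d1, d0⟩, ⟨v1, v0⟩, c2, c1, c0⟩ :=
    exists_auxiliary hc ha ha' he he' (by omega : 1 ≤ n) (by omega : 5 * t ≤ 3 * n) (by omega) q hq
  -- divisibility of the values by powers of `B`
  have hqγ : (B : ℤ√D) ∣ aeval γ q := by
    refine ⟨2 * e * γ, ?_⟩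
    have h1 := unit_quadratic hγ
    have h2 : ((c * γ.re : ℤ) : ℤ√D) = ((e * (B - 1) : ℤ) : ℤ√D) := by rw [hx]
    push_cast at h2
    simp only [hq, map_add, map_mul, map_pow, aeval_X, eq_intCast, map_intCast]
    push_cast
    linear_combination (c : ℤ√D) * h1 + 2 * γ * h2
  have hwB : (B : ℤ√D) ^ k ∣ c * (γ ^ n) ^ 2 + 2 * a * γ ^ n + c := by
    refine ⟨2 * a * γ ^ n, ?_⟩
    have h1 := unit_quadratic (pow_star_eq_one hγ n)
    have h2 : ((c * (γ ^ n).re : ℤ) : ℤ√D) = ((a * (B ^ k - 1) : ℤ) : ℤ√D) := by rw [hw]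
    push_cast at h2
    linear_combination (c : ℤ√D) * h1 + 2 * γ ^ n * h2
  have hdvd := fun i => combination_dvd q R S₁ S₀ c a γ (γ ^ n) (B : ℤ√D) t k i (by omega) hqγ hwB
  set P₂ := C c * R with hP₂
  set P₁ := C (2 * a) * R + q ^ t * S₁ with hP₁
  set P₀ := C c * R + q ^ t * S₀ with hP₀
  set H : ℤ := (64 * (c + 1) ^ 2) ^ (6 * n) with hH
  have hHR : (H : ℝ) = K ^ (6 * n) := by rw [hH, hK]; push_cast; rfl
  by_cases hall : ∀ i ≤ n / 100 + 3, aeval γ (hasseDeriv i P₀) +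
      aeval γ (hasseDeriv i P₁) * γ ^ n + aeval γ (hasseDeriv i P₂) * (γ ^ n) ^ 2 = 0
  -- vanishing to high order: the Wronskian is divisible by a high power of `X - g`
  · set ι := Int.castRingHom ℝ with hι
    have hev : ∀ P : ℤ[X], φ (aeval γ P) = (P.map ι).eval g := by
      intro P
      rw [eval_map, hgdef, aeval_def, hom_eval₂]
      congr 1
      exact RingHom.ext_int _ _
    have hG : (X - C g) ^ (n / 100 + 3 + 1) ∣
        P₀.map ι + C (g ^ n) * P₁.map ι + C ((g ^ n) ^ 2) * P₂.map ι := by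
      apply pow_dvd_of_hasseDeriv
      intro i hi
      have h1 := congrArg φ (hall i hi)
      rw [map_add, map_add, map_mul, map_mul, hev, hev, hev, map_pow φ _ 2,
        map_pow φ γ, map_zero,
        hasseDeriv_map_int, hasseDeriv_map_int, hasseDeriv_map_int, ← hgdef, ← hι] at h1
      rw [← smul_eq_C_mul, ← smul_eq_C_mul, map_add, map_add, map_smul, map_smul, eval_add,
        eval_add, eval_smul, eval_smul, smul_eq_mul, smul_eq_mul]
      linear_combination h1
    have hdW := pow_dvd_wronski (s := n / 100 + 2) _ _ hG
    rw [← wronski_map] at hdW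
    have e2 : P₂.natDegree < n := (natDegree_lt_iff_degree_lt n2).2 d2
    have e1 : P₁.natDegree < n + n := (natDegree_lt_iff_degree_lt n1).2 d1
    have e0 : P₀.natDegree < 2 * n + n := (natDegree_lt_iff_degree_lt n0).2 d0
    have f1 : n ≤ P₁.natDegree := by simpa using natDegree_le_of_dvd v1 n1
    have f0 : 2 * n ≤ P₀.natDegree := by simpa using natDegree_le_of_dvd v0 n0
    have hW := wronski_ne_zero n0 n1 n2 (by omega) (by omega)
    have hb := pow_le_of_pow_dvd hW hg1
      (wronski_natDegree_le (N := 3 * n) (by omega) (by omega) (by omega))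
      (wronski_coeff_bound (N := 3 * n) (by omega) (by omega) (by omega) (by omega) c0 c1 c2) hdW
    push_cast at hb
    rw [hHR] at hb
    have hb' : g ^ (n / 100 + 2) ≤ K ^ (28 * n) := by
      refine le_trans (le_of_le_of_eq hb ?_) (wronski_const_le hK64 (by omega : 1 ≤ n))
      ring
    have h7 : K ^ ((N - 1) * (n / 100 + 2)) ≤ K ^ (28 * n) := by
      rw [pow_mul]
      exact (pow_le_pow_left₀ (by positivity) hgK _).trans hb'
    have := (pow_le_pow_iff_right₀ hK1).1 h7
    rw [hN] at this
    omega
  -- a nonzero value: its norm is a multiple of `B ^ (2(t - i))`, but bounded by about `g ^ n`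
  · push Not at hall
    obtain ⟨i, hi, hF⟩ := hall
    obtain ⟨f, hf, hfe⟩ := combination_eq P₀ P₁ P₂ γ n i H v0 d0 v1 d1 d2 c0 c1 c2
    obtain ⟨G, hGe⟩ := hdvd i
    set F := aeval γ (hasseDeriv i P₀) +
      aeval γ (hasseDeriv i P₁) * γ ^ n + aeval γ (hasseDeriv i P₂) * (γ ^ n) ^ 2 with hFdef
    set Z := ∑ l ∈ Finset.range n, (f l : ℤ√D) * γ ^ l with hZ
    have hNγ : γ.norm = 1 := by
      have := Zsqrtd.norm_eq_mul_conj γ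
      rw [hγ] at this
      exact_mod_cast this
    have hNpow : ∀ j : ℕ, (γ ^ j).norm = 1 := by
      intro j
      have := map_pow (Zsqrtd.normMonoidHom (d := D)) γ j
      change (γ ^ j).norm = γ.norm ^ j at this
      rw [this, hNγ, one_pow]
    have hNF : F.norm = Z.norm := by
      have := congrArg Zsqrtd.norm hfe
      rwa [Zsqrtd.norm_mul, Zsqrtd.norm_mul, hNpow, hNpow, one_mul, one_mul] at this
    have hG0 : G.norm ≠ 0 := by
      rw [Ne, Zsqrtd.norm_eq_zero hns]
      rintro rfl
      exact hF (by rw [hGe, mul_zero])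
    have hNF' : F.norm = B ^ (2 * (t - i)) * G.norm := by
      rw [hGe, Zsqrtd.norm_mul, ← Int.cast_pow, Zsqrtd.norm_intCast]
      ring
    have hlow : (B : ℝ) ^ (2 * (t - i)) ≤ |(Z.norm : ℝ)| := by
      rw [← hNF, hNF']
      push_cast
      rw [abs_mul, abs_of_nonneg (by positivity)]
      refine le_mul_of_one_le_right (by positivity) ?_
      exact_mod_cast Int.one_le_abs hG0
    have hup := norm_bound hD γ hγ hg n (3 * (8 ^ n * H)) f hf
    rw [← hZ, ← hφ, ← hgdef] at hup
    push_cast at hup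
    rw [hHR] at hup
    have h2n : (n : ℝ) ≤ 2 ^ n := by exact_mod_cast (Nat.lt_two_pow_self).le
    have hmain : (B : ℝ) ^ (2 * (t - i)) ≤ K ^ (17 * n) * B ^ n := by
      refine hlow.trans (hup.trans ?_)
      have hs : (n * (3 * (8 ^ n * K ^ (6 * n))) : ℝ) ≤ K ^ (8 * n) := by
        calc (n * (3 * (8 ^ n * K ^ (6 * n))) : ℝ)
            ≤ 2 ^ n * (4 ^ n * (8 ^ n * K ^ (6 * n))) := by
              gcongr
              calc (3 : ℝ) ≤ 4 := by norm_num
                _ ≤ 4 ^ n := le_self_pow₀ (by norm_num) (by omega)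
          _ = 64 ^ n * K ^ (6 * n) := by
              rw [← mul_assoc, ← mul_assoc, ← mul_pow, ← mul_pow]; norm_num
          _ ≤ K ^ n * K ^ (6 * n) := by gcongr
          _ = K ^ (7 * n) := by rw [← pow_add]; congr 1; ring
          _ ≤ K ^ (8 * n) := pow_le_pow_right₀ hK1.le (by omega)
      calc _ ≤ (K ^ (8 * n)) ^ 2 * (2 * c * B) ^ n := by gcongr
        _ = K ^ (16 * n) * ((2 * c) ^ n * B ^ n) := by rw [← pow_mul, ← mul_pow]; congr 2; ring
        _ ≤ K ^ (16 * n) * (K ^ n * B ^ n) := by gcongr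
        _ = K ^ (17 * n) * B ^ n := by rw [← mul_assoc, ← pow_add]; congr 2; ring
    have h5 : (B : ℝ) ^ (2 * (t - i) - n) * B ^ n ≤ K ^ (17 * n) * B ^ n := by
      rw [← pow_add, Nat.sub_add_cancel (by omega)]; exact hmain
    have h6 : (B : ℝ) ^ (2 * (t - i) - n) ≤ K ^ (17 * n) :=
      le_of_mul_le_mul_right h5 (by positivity)
    have h7 : K ^ (N * (2 * (t - i) - n)) ≤ K ^ (17 * n) := by
      rw [pow_mul]
      exact (pow_le_pow_left₀ (by positivity) hBR _).trans h6
    have := (pow_le_pow_iff_right₀ hK1).1 h7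
    rw [hN] at this
    omega

/-! ### Small exponents -/

/-- Bernoulli's inequality in homogeneous form. -/
lemma pow_succ_le_sub_pow {u v : ℤ} (hv : 0 ≤ v) (huv : v ≤ u) (m : ℕ) :
    u ^ (m + 1) ≤ (u - v) ^ (m + 1) + (m + 1) * v * u ^ m := by
  induction m with
  | zero => simp
  | succ m ih =>
    have hu : 0 ≤ u := hv.trans huv
    have h1 : (u - v) ^ (m + 1) ≤ u ^ (m + 1) := by
      apply pow_le_pow_left₀ <;> linarith
    have h2 := mul_le_mul_of_nonneg_left ih hu
    have h3 := mul_le_mul_of_nonneg_left h1 hv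
    have e1 : u ^ (m + 1 + 1) = u * u ^ (m + 1) := by ring
    have e2 : (u - v) ^ (m + 1 + 1) = u * (u - v) ^ (m + 1) - v * (u - v) ^ (m + 1) := by ring
    have e3 : ((m + 1 : ℕ) + 1 : ℤ) * v * u ^ (m + 1) =
        u * ((m + 1) * v * u ^ m) + v * u ^ (m + 1) := by push_cast; ring
    rw [e1, e2, e3]
    linarith

/-- For bounded exponents, comparing the base-`B` sizes of the two representations forces
`k = m + 1`, then equality of the leading coefficients `(2e) ^ (m + 1)` and `2 a c ^ m`, and
then the next order terms disagree. -/
lemma small_arith {c e a B : ℤ} (hc : 1 ≤ c) (ha : 1 ≤ a) (ha' : a ≤ c)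
    (he : 1 ≤ e) (he' : e ≤ c ^ 2) {N : ℕ} (hN : N = 10000) {κ : ℤ} (hκ : κ = 64 * (c + 1) ^ 2)
    (hB : κ ^ N ≤ B) {m k : ℕ} (hm : 1 ≤ m) (hm' : m < 100)
    (h1 : (2 * e * (B - 1) - c) ^ (m + 1) ≤ 2 * a * c ^ m * (B ^ k - 1))
    (h2 : 2 * a * c ^ m * (B ^ k - 1) ≤ (2 * e * (B - 1)) ^ (m + 1) + c ^ (m + 1)) : False := by
  have hκ64 : 64 ≤ κ := by rw [hκ]; nlinarith
  have hκe : 2 * e + c ≤ κ := by rw [hκ]; nlinarith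
  have hκ0 : 0 ≤ κ := by omega
  obtain ⟨W, hW⟩ : ∃ W, W = κ ^ (m + 1) := ⟨_, rfl⟩
  have hκW : κ ≤ W := by rw [hW]; exact le_self_pow₀ (by omega) (by omega)
  have hWB : 64 * W ^ 2 ≤ B := by
    calc 64 * W ^ 2 ≤ κ * W ^ 2 := by gcongr
      _ = κ ^ (1 + 2 * (m + 1)) := by rw [hW]; ring
      _ ≤ κ ^ N := pow_le_pow_right₀ (by omega) (by omega)
      _ ≤ B := hB
  clear hB
  have hpW : (2 * e) ^ (m + 1) ≤ W := by
    rw [hW]; exact pow_le_pow_left₀ (by omega) (by omega) _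
  have hcW : c ^ (m + 1) ≤ W := by
    rw [hW]; exact pow_le_pow_left₀ (by omega) (by omega) _
  have hqW : 2 * a * c ^ m ≤ W := by
    calc 2 * a * c ^ m ≤ κ * κ ^ m := by
          have : c ^ m ≤ κ ^ m := pow_le_pow_left₀ (by omega) (by omega) _
          have : 2 * a ≤ κ := by rw [hκ]; nlinarith
          gcongr
      _ = W := by rw [hW]; ring
  have hrW : (2 * e + c) * (2 * e) ^ m ≤ W := by
    calc (2 * e + c) * (2 * e) ^ m ≤ κ * κ ^ m := by
          have : (2 * e) ^ m ≤ κ ^ m := pow_le_pow_left₀ (by omega) (by omega) _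
          gcongr
      _ = W := by rw [hW]; ring
  have hmW : (m + 1 : ℤ) ≤ W := by
    have : (m : ℤ) < 100 := by exact_mod_cast hm'
    have : κ * κ ≤ W := by
      rw [hW, ← pow_two]; exact pow_le_pow_right₀ (by omega) (by omega)
    nlinarith
  have hcκ : 2 * c + 4 ≤ κ := by rw [hκ]; nlinarith
  obtain ⟨q, hq⟩ : ∃ q, q = 2 * a * c ^ m := ⟨_, rfl⟩
  obtain ⟨p, hp⟩ : ∃ p, p = (2 * e) ^ (m + 1) := ⟨_, rfl⟩
  rw [← hq] at h1 h2 hqW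
  rw [mul_pow, ← hp] at h2
  rw [← hp] at hpW
  have hq1 : 1 ≤ q := by
    have : 1 ≤ c ^ m := one_le_pow₀ hc
    rw [hq]; nlinarith
  have hp1 : 1 ≤ p := by rw [hp]; exact one_le_pow₀ (by omega)
  have hW64 : 64 ≤ W := hκ64.trans hκW
  have hWB' : 64 * W ≤ B := by nlinarith
  have hB1 : 1 ≤ B := by omega
  have hLB : B ≤ 2 * e * (B - 1) - c := by nlinarith
  have hBm : 1 ≤ B ^ (m + 1) := one_le_pow₀ hB1
  have hB1m : (B - 1) ^ (m + 1) ≤ B ^ (m + 1) := pow_le_pow_left₀ (by omega) (by omega) _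
  have hpB : p * (B - 1) ^ (m + 1) ≤ p * B ^ (m + 1) := by gcongr
  have hkn : k = m + 1 := by
    rcases lt_trichotomy k (m + 1) with hk | hk | hk
    · exfalso
      have h3 : B ^ k ≤ B ^ m := pow_le_pow_right₀ hB1 (by omega)
      have h4 : B ^ (m + 1) ≤ (2 * e * (B - 1) - c) ^ (m + 1) :=
        pow_le_pow_left₀ (by omega) hLB _
      have h5 : q * (B ^ k - 1) ≤ W * B ^ m := by
        have : 0 ≤ B ^ k - 1 := by linarith [one_le_pow₀ hB1 (n := k)]
        have : B ^ k - 1 ≤ B ^ m := by omega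
        gcongr
      have h6 : B * B ^ m ≤ W * B ^ m := by rw [← pow_succ']; linarith
      have := le_of_mul_le_mul_right h6 (by positivity)
      omega
    · exact hk
    · exfalso
      have h3 : B * B ^ (m + 1) ≤ B ^ k := by
        rw [← pow_succ']; exact pow_le_pow_right₀ hB1 (by omega)
      have h4 : B ^ k - 1 ≤ q * (B ^ k - 1) := by
        apply le_mul_of_one_le_left _ hq1
        linarith [one_le_pow₀ hB1 (n := k)]
      have h5 : p * B ^ (m + 1) ≤ W * B ^ (m + 1) := by gcongr
      have h6 : B * B ^ (m + 1) ≤ (2 * W + 1) * B ^ (m + 1) := by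
        have : W ≤ W * B ^ (m + 1) := le_mul_of_one_le_right (by omega) hBm
        linarith
      have := le_of_mul_le_mul_right h6 (by positivity)
      omega
  subst hkn
  have hBle : B ≤ B ^ (m + 1) := le_self_pow₀ hB1 (by omega)
  have hpq : q ≤ p := by
    by_contra! h
    have : (p + 1) * (B ^ (m + 1) - 1) ≤ q * (B ^ (m + 1) - 1) :=
      mul_le_mul_of_nonneg_right (by omega) (by omega)
    linarith
  rcases hpq.lt_or_eq with h | h
  -- unequal leading coefficients: the difference of the two sides is of order `B ^ (m + 1)`
  · have hb := pow_succ_le_sub_pow (u := 2 * e * B) (v := 2 * e + c) (by omega) (by linarith) m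
    have e1 : 2 * e * B - (2 * e + c) = 2 * e * (B - 1) - c := by ring
    have e2 : (2 * e * B) ^ (m + 1) = p * B ^ (m + 1) := by rw [mul_pow, ← hp]
    rw [e1, e2, mul_pow] at hb
    have h3 : ((m + 1) * (2 * e + c) * ((2 * e) ^ m * B ^ m) : ℤ) ≤ W * W * B ^ m := by
      calc _ = ((m + 1 : ℤ) * ((2 * e + c) * (2 * e) ^ m)) * B ^ m := by ring
        _ ≤ W * W * B ^ m := by gcongr
    have h4 : q * (B ^ (m + 1) - 1) ≤ (p - 1) * B ^ (m + 1) :=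
      mul_le_mul (by omega) (by omega) (by omega) (by omega)
    have h5 : B * B ^ m ≤ W * W * B ^ m := by
      rw [← pow_succ']; linarith
    have := le_of_mul_le_mul_right h5 (by positivity)
    have : 0 < W * W := by positivity
    linarith
  -- equal leading coefficients: `B ^ (m + 1) - 1` exceeds `(B - 1) ^ (m + 1)` by at least `B - 1`
  · rw [h] at h2
    have h3 : (B - 1) ^ (m + 1) ≤ (B - 1) * B ^ m := by
      rw [pow_succ']
      exact mul_le_mul_of_nonneg_left (pow_le_pow_left₀ (by omega) (by omega) _) (by omega)
    have h4 : B ≤ B ^ m := le_self_pow₀ hB1 (by omega)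
    have h5 : B ^ (m + 1) = (B - 1) * B ^ m + B ^ m := by ring
    have h6 : p * (B - 1) ≤ p * (B ^ (m + 1) - 1 - (B - 1) ^ (m + 1)) :=
      mul_le_mul_of_nonneg_left (by linarith) (by omega)
    have h7 : B - 1 ≤ p * (B - 1) := le_mul_of_one_le_left (by omega) hp1
    linarith

/-- The case of bounded `n`: the estimates of `γ` and `γ ^ n` by twice their rational parts reduce
it to `small_arith`. -/
lemma core_small {D : ℤ} (hD : 0 ≤ D) {γ : ℤ√D} (hγ : γ * star γ = 1)
    (hg : 1 ≤ Zsqrtd.toReal hD γ) {c e a B : ℤ} (hc : 1 ≤ c) (ha : 1 ≤ a) (ha' : a ≤ c)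
    (he : 1 ≤ e) (he' : e ≤ c ^ 2) {N : ℕ} (hN : N = 10000) {κ : ℤ} (hκ : κ = 64 * (c + 1) ^ 2)
    (hB : κ ^ N ≤ B) {n k : ℕ}
    (hx : c * γ.re = e * (B - 1)) (hw : c * (γ ^ n).re = a * (B ^ k - 1)) (hn : 2 ≤ n)
    (hn' : n ≤ 100) : False := by
  obtain ⟨m, rfl⟩ : ∃ m, n = m + 1 := ⟨n - 1, by omega⟩
  obtain ⟨u1, u2⟩ := unit_bounds hD γ hγ hg
  have hφn : Zsqrtd.toReal hD (γ ^ (m + 1)) = Zsqrtd.toReal hD γ ^ (m + 1) := by rw [map_pow]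
  obtain ⟨u3, u4⟩ := unit_bounds hD (γ ^ (m + 1)) (pow_star_eq_one hγ _)
    (by rw [hφn]; exact one_le_pow₀ hg)
  rw [hφn] at u3 u4
  set g := Zsqrtd.toReal hD γ
  have hcR : (1 : ℝ) ≤ c := by exact_mod_cast hc
  have hxR : (c : ℝ) * γ.re = e * (B - 1) := by exact_mod_cast hx
  have hwR : (c : ℝ) * (γ ^ (m + 1)).re = a * (B ^ k - 1) := by exact_mod_cast hw
  have hcw : (2 * a * c ^ m * (B ^ k - 1) : ℝ) = c ^ (m + 1) * (2 * (γ ^ (m + 1)).re) := by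
    rw [pow_succ]; linear_combination (-2 * (c : ℝ) ^ m) * hwR
  have hlow : (0 : ℝ) ≤ 2 * e * (B - 1) - c := by
    have : (0 : ℤ) ≤ 2 * e * (B - 1) - c := by
      have hκ64 : c + 2 ≤ κ := by rw [hκ]; nlinarith
      have : κ ≤ B := (le_self_pow₀ (by omega) (by omega)).trans hB
      clear hB
      nlinarith
    exact_mod_cast this
  have hg0 : 0 ≤ g := by linarith
  have hcg : c * g ≤ 2 * e * (B - 1) := by nlinarith
  have hcg0 : 0 ≤ c * g := by positivity
  have h1 : ((2 * e * (B - 1) - c) ^ (m + 1) : ℝ) ≤ 2 * a * c ^ m * (B ^ k - 1) := by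
    rw [hcw]
    calc ((2 * e * (B - 1) - c) ^ (m + 1) : ℝ) ≤ (c * g) ^ (m + 1) := by
          apply pow_le_pow_left₀ hlow
          nlinarith
      _ = c ^ (m + 1) * g ^ (m + 1) := mul_pow _ _ _
      _ ≤ _ := by gcongr
  have h2 : (2 * a * c ^ m * (B ^ k - 1) : ℝ) ≤ (2 * e * (B - 1)) ^ (m + 1) + c ^ (m + 1) := by
    rw [hcw]
    calc (c ^ (m + 1) * (2 * (γ ^ (m + 1)).re) : ℝ) ≤ c ^ (m + 1) * (g ^ (m + 1) + 1) := by
          gcongr; linarith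
      _ = (c * g) ^ (m + 1) + c ^ (m + 1) := by rw [mul_pow]; ring
      _ ≤ _ := by
          gcongr
  exact small_arith hc ha ha' he he' hN hκ hB (m := m) (k := k) (by omega) (by omega)
    (by exact_mod_cast h1) (by exact_mod_cast h2)

/-- If `γ` and `γ ^ n`, `n ≥ 2`, both have rational parts of repdigit shape in base `B`, then `B`
is bounded in terms of `c`. -/
lemma core {D : ℤ} (hD : 0 ≤ D) (hns : ∀ z : ℤ, D ≠ z * z) {γ : ℤ√D} (hγ : γ * star γ = 1)
    (hg : 1 ≤ Zsqrtd.toReal hD γ) {c e a B : ℤ} (hc : 1 ≤ c) (ha : 1 ≤ a) (ha' : a ≤ c)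
    (he : 1 ≤ e) (he' : e ≤ c ^ 2) {N : ℕ} (hN : N = 10000) {κ : ℤ} (hκ : κ = 64 * (c + 1) ^ 2)
    {n k : ℕ} (hx : c * γ.re = e * (B - 1)) (hw : c * (γ ^ n).re = a * (B ^ k - 1)) (hn : 2 ≤ n) :
    B < κ ^ N := by
  by_contra! hB
  rcases le_total n 100 with h | h
  · exact core_small hD hγ hg hc ha ha' he he' hN hκ hB hx hw hn h
  · exact core_large hD hns hγ hg hc ha ha' he he' hN hκ hB hx hw h

/-! ### Greatest common divisors and the reduction -/

/-- Divisibility of the rational part of a norm-one unit, read off from `γ² ≡ -1` modulo `2N`. -/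
lemma two_mul_dvd_sq_add_one {D : ℤ} {γ : ℤ√D} (hγ : γ * star γ = 1) (N : ℤ) :
    ((2 * N : ℤ) : ℤ√D) ∣ γ ^ 2 + 1 ↔ N ∣ γ.re := by
  have hu : IsUnit γ := IsUnit.of_mul_eq_one _ hγ
  rw [unit_quadratic hγ, hu.dvd_mul_right]
  have : (2 * (γ.re : ℤ√D)) = ((2 * γ.re : ℤ) : ℤ√D) := by push_cast; rfl
  rw [this, Zsqrtd.intCast_dvd_intCast]
  exact mul_dvd_mul_iff_left two_ne_zero

lemma re_dvd_pow_re {D : ℤ} {γ : ℤ√D} (hγ : γ * star γ = 1) {r : ℕ} (hr : Odd r) :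
    γ.re ∣ (γ ^ r).re := by
  rw [← two_mul_dvd_sq_add_one (pow_star_eq_one hγ r)]
  refine ((two_mul_dvd_sq_add_one hγ γ.re).2 dvd_rfl).trans ?_
  have := hr.add_dvd_pow_add_pow (γ ^ 2) 1
  rwa [one_pow, ← pow_mul, mul_comm, pow_mul] at this

/-- Bézout: with `r u + s v = 1` and `r`, `s` odd, `u + v` is odd and `δ = (-1) ^ (u + v)`. -/
lemma eq_neg_one_of_pow {Q : Type*} [CommRing Q] (δ : Qˣ) {r s : ℕ} (hr : Odd r) (hs : Odd s)
    (hrs : Nat.Coprime r s) (h1 : δ ^ r = -1) (h2 : δ ^ s = -1) : δ = -1 := by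
  have hb : (r * r.gcdA s + s * r.gcdB s : ℤ) = 1 := by
    have := Nat.gcd_eq_gcd_ab r s
    rw [hrs.gcd_eq_one] at this
    exact_mod_cast this.symm
  have hodd : Odd (r.gcdA s + r.gcdB s) := by
    have hr' : Odd (r : ℤ) := by exact_mod_cast hr
    have hs' : Odd (s : ℤ) := by exact_mod_cast hs
    have := congrArg Odd hb
    simp only [Int.odd_add, Int.odd_mul, hr', hs', true_and, odd_one, eq_iff_iff, iff_true,
      ← Int.not_odd_iff_even] at this ⊢
    tauto
  obtain ⟨j, hj⟩ := hodd
  calc δ = δ ^ (r * r.gcdA s + s * r.gcdB s : ℤ) := by rw [hb, zpow_one]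
    _ = (-1) ^ (r.gcdA s + r.gcdB s) := by
        rw [zpow_add, zpow_mul, zpow_mul, zpow_natCast, zpow_natCast, h1, h2, zpow_add]
    _ = -1 := by
        rw [hj, zpow_add, zpow_mul, zpow_one]
        norm_num

/-- With `γ = X_g + Y_g √d` this says `gcd (X_{gr}, X_{gs}) ∣ X_g` for odd coprime `r`, `s`. It
follows from `eq_neg_one_of_pow` for `γ²` in `ℤ√D` modulo `2N`. -/
lemma dvd_re_of_dvd_pow_re {D : ℤ} {γ : ℤ√D} (hγ : γ * star γ = 1) {r s : ℕ} (hr : Odd r)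
    (hs : Odd s) (hrs : Nat.Coprime r s) {N : ℤ} (h1 : N ∣ (γ ^ r).re) (h2 : N ∣ (γ ^ s).re) :
    N ∣ γ.re := by
  set I : Ideal (ℤ√D) := Ideal.span {((2 * N : ℤ) : ℤ√D)} with hI
  have hu : IsUnit γ := IsUnit.of_mul_eq_one _ hγ
  obtain ⟨u, rfl⟩ := hu
  have key : ∀ j : ℕ, ((2 * N : ℤ) : ℤ√D) ∣ ((u : ℤ√D) ^ j) ^ 2 + 1 ↔
      (Units.map (Ideal.Quotient.mk I : ℤ√D →* ℤ√D ⧸ I) u ^ 2) ^ j = -1 := by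
    intro j
    rw [← Ideal.mem_span_singleton, ← hI, ← Ideal.Quotient.eq_zero_iff_mem, Units.ext_iff,
      Units.val_neg, Units.val_one, eq_neg_iff_add_eq_zero]
    simp [← pow_mul, mul_comm]
  rw [← two_mul_dvd_sq_add_one (pow_star_eq_one hγ _), key] at h1 h2
  rw [← two_mul_dvd_sq_add_one hγ]
  have := (key 1).2 (by rw [pow_one]; exact eq_neg_one_of_pow _ hr hs hrs h1 h2)
  rwa [pow_one] at this

/-- The gcd of two repdigits in base `b` is again of the form `e (b ^ m - 1) / (b - 1)`, where the
digit is replaced by a number `e ≤ (b - 1)²`. -/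
lemma gcd_repdigits {b a₁ a₂ m₁ m₂ x₁ x₂ : ℕ} (hb : 2 ≤ b) (ha₁ : 1 ≤ a₁ ∧ a₁ ≤ b - 1)
    (ha₂ : 1 ≤ a₂ ∧ a₂ ≤ b - 1) (hm₁ : 1 ≤ m₁)
    (hrep₁ : (b - 1) * x₁ = a₁ * (b ^ m₁ - 1)) (hrep₂ : (b - 1) * x₂ = a₂ * (b ^ m₂ - 1)) :
    ∃ e, 1 ≤ e ∧ e ≤ (b - 1) ^ 2 ∧
      (b - 1) * Nat.gcd x₁ x₂ = e * (b ^ Nat.gcd m₁ m₂ - 1) := by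
  set M := b ^ Nat.gcd m₁ m₂ - 1 with hM
  have hgm : 1 ≤ Nat.gcd m₁ m₂ := Nat.gcd_pos_of_pos_left _ hm₁
  have hM0 : 0 < M := by
    have := Nat.one_lt_pow (by omega : Nat.gcd m₁ m₂ ≠ 0) (by omega : 1 < b)
    omega
  have hgcd : Nat.gcd (b ^ m₁ - 1) (b ^ m₂ - 1) = M := Nat.pow_sub_one_gcd_pow_sub_one b m₁ m₂
  obtain ⟨A, hA⟩ : M ∣ b ^ m₁ - 1 := hgcd ▸ Nat.gcd_dvd_left _ _
  obtain ⟨A', hA'⟩ : M ∣ b ^ m₂ - 1 := hgcd ▸ Nat.gcd_dvd_right _ _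
  have hco : Nat.gcd A A' = 1 := by
    rw [hA, hA', Nat.gcd_mul_left] at hgcd
    exact Nat.eq_of_mul_eq_mul_left hM0 (by rw [hgcd, mul_one])
  have hA0 : 0 < A := by
    rcases Nat.eq_zero_or_pos A with h | h
    · rw [h, mul_zero] at hA
      have := Nat.one_lt_pow (by omega : m₁ ≠ 0) (by omega : 1 < b)
      omega
    · exact h
  have he : Nat.gcd (a₁ * A) (a₂ * A') ∣ a₁ * a₂ := by
    have h1 : Nat.gcd (a₁ * A) (a₂ * A') ∣ Nat.gcd (a₁ * a₂ * A) (a₁ * a₂ * A') := by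
      apply Nat.dvd_gcd
      · exact (Nat.gcd_dvd_left _ _).trans ⟨a₂, by ring⟩
      · exact (Nat.gcd_dvd_right _ _).trans ⟨a₁, by ring⟩
    rwa [Nat.gcd_mul_left, hco, mul_one] at h1
  refine ⟨Nat.gcd (a₁ * A) (a₂ * A'), ?_, ?_, ?_⟩
  · exact Nat.gcd_pos_of_pos_left _ (Nat.mul_pos ha₁.1 hA0)
  · refine (Nat.le_of_dvd (Nat.mul_pos ha₁.1 ha₂.1) he).trans ?_
    rw [pow_two]
    exact Nat.mul_le_mul ha₁.2 ha₂.2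
  · rw [← Nat.gcd_mul_left, hrep₁, hrep₂, hA, hA', mul_left_comm, mul_left_comm a₂,
      Nat.gcd_mul_left, mul_comm]

lemma lt_sq_of_pell {d x y c e B : ℤ} (hd : 0 ≤ d) (hc : 1 ≤ c) (he : 1 ≤ e) (he' : e ≤ c ^ 2)
    (hB : 0 ≤ B) (hx : c * x = e * (B - 1)) (hx0 : 0 ≤ x) (hp : x * x - d * (y * y) = 1)
    (hy : 1 ≤ y) : d < ((c + 1) * B) ^ 2 := by
  have h1 : c * x ≤ c * (c * B) := by nlinarith
  have h2 : x ≤ c * B := le_of_mul_le_mul_left h1 (by omega)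
  have h3 : x ≤ (c + 1) * B := by linarith
  have h4 : d * 1 ≤ d * (y * y) := mul_le_mul_of_nonneg_left (by nlinarith) hd
  have h5 : x ^ 2 ≤ ((c + 1) * B) ^ 2 := pow_le_pow_left₀ hx0 h3 2
  linarith

lemma final_bound {b N : ℕ} (hb : 2 ≤ b) (hN : N = 10000) :
    ((b : ℝ) * (64 * b ^ 2) ^ N) ^ 2 ≤ Real.exp (10 ^ 20 * (b : ℝ) ^ 10) := by
  have hb' : (2 : ℝ) ≤ b := by exact_mod_cast hb
  have h1 : (b : ℝ) ≤ Real.exp b := by linarith [Real.add_one_le_exp (b : ℝ)]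
  have h2 : (64 : ℝ) ≤ Real.exp 64 := by linarith [Real.add_one_le_exp (64 : ℝ)]
  have hN' : (N : ℝ) = 10000 := by rw [hN]; norm_num
  calc ((b : ℝ) * (64 * b ^ 2) ^ N) ^ 2
      ≤ (Real.exp b * (Real.exp 64 * Real.exp b ^ 2) ^ N) ^ 2 := by gcongr
    _ = Real.exp (2 * (b + 10000 * (64 + 2 * b))) := by
        rw [← Real.exp_nat_mul, ← Real.exp_add, ← Real.exp_nat_mul, ← Real.exp_add,
          ← Real.exp_nat_mul, hN']
        norm_num
    _ ≤ Real.exp (10 ^ 20 * (b : ℝ) ^ 10) := by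
        apply Real.exp_le_exp.2
        have : (b : ℝ) ≤ b ^ 10 := le_self_pow₀ (by linarith) (by norm_num)
        nlinarith

end

/-- If there are two triples `(n₁, a₁, m₁)` and `(n₂, a₂, m₂)` of positive integers
with `n₁ ≠ n₂` both odd and `a₁, a₂ ∈ {1, …, b-1}` such that
`X_{nᵢ} = aᵢ (b^{mᵢ} - 1)/(b - 1)`, then `d < exp (10²⁰ b¹⁰)`. -/
theorem two_odd_solutions_bound
    (b : ℕ) (hb : 2 ≤ b)
    (d : ℕ) (hd : 2 ≤ d) (hdns : ¬ IsSquare d)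
    (X Y : ℕ → ℕ)
    (hX1 : 0 < X 1) (hY1 : 0 < Y 1)
    (hpell : (X 1 : ℤ) ^ 2 - (d : ℤ) * (Y 1 : ℤ) ^ 2 = 1)
    (hfund : ∀ x y : ℕ, 0 < x → 0 < y →
      (x : ℤ) ^ 2 - (d : ℤ) * (y : ℤ) ^ 2 = 1 → X 1 ≤ x)
    (hXY : ∀ n : ℕ, 1 ≤ n →
      (X n : ℝ) + (Y n : ℝ) * Real.sqrt d =
        ((X 1 : ℝ) + (Y 1 : ℝ) * Real.sqrt d) ^ n)
    (n₁ a₁ m₁ n₂ a₂ m₂ : ℕ)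
    (hn₁ : 0 < n₁) (hn₂ : 0 < n₂) (hne : n₁ ≠ n₂)
    (hn₁odd : Odd n₁) (hn₂odd : Odd n₂)
    (ha₁ : 1 ≤ a₁ ∧ a₁ ≤ b - 1) (ha₂ : 1 ≤ a₂ ∧ a₂ ≤ b - 1)
    (hm₁ : 1 ≤ m₁) (hm₂ : 1 ≤ m₂)
    (hrep₁ : (b - 1) * X n₁ = a₁ * (b ^ m₁ - 1))
    (hrep₂ : (b - 1) * X n₂ = a₂ * (b ^ m₂ - 1)) :
    (d : ℝ) < Real.exp (10 ^ 20 * (b : ℝ) ^ 10) := by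
  have hns : ∀ z : ℤ, (d : ℤ) ≠ z * z := by
    intro z hz
    refine hdns ⟨z.natAbs, ?_⟩
    zify
    rw [hz, abs_mul_abs_self]
  have hD : (0 : ℤ) ≤ (d : ℤ) := by positivity
  set φ := Zsqrtd.toReal hD with hφ
  have hφe : ∀ x y : ℕ, φ ⟨x, y⟩ = x + y * Real.sqrt d := by
    intro x y
    simp [hφ]
  have hinj : Function.Injective φ := Zsqrtd.toReal_injective hD hns
  set α : ℤ√(d : ℤ) := ⟨X 1, Y 1⟩ with hα
  have hαpow : ∀ n, 1 ≤ n → α ^ n = ⟨X n, Y n⟩ := by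
    intro n hn
    apply hinj
    rw [map_pow, hα, hφe, hφe, hXY n hn]
  have hα1 : α * star α = 1 := by
    ext
    · simp [hα]; linarith
    · simp [hα]; ring
  have hαgt : 1 < φ α := by
    rw [hα, hφe]
    have h1 : (1 : ℝ) ≤ X 1 := by exact_mod_cast hX1
    have h2 : (0 : ℝ) < Y 1 * Real.sqrt d := by positivity
    linarith
  -- `X_g` with `g = gcd (n₁, n₂)` is the gcd of the two given terms
  obtain ⟨g, hg⟩ : ∃ g, g = Nat.gcd n₁ n₂ := ⟨_, rfl⟩
  have hg0 : 0 < g := hg ▸ Nat.gcd_pos_of_pos_left _ hn₁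
  obtain ⟨r, hr⟩ : g ∣ n₁ := hg ▸ Nat.gcd_dvd_left _ _
  obtain ⟨s, hs⟩ : g ∣ n₂ := hg ▸ Nat.gcd_dvd_right _ _
  have hrs : Nat.Coprime r s := by
    rw [hr, hs, Nat.gcd_mul_left] at hg
    exact Nat.eq_of_mul_eq_mul_left hg0 (by rw [mul_one]; exact hg.symm)
  have hrodd : Odd r := (Nat.odd_mul.1 (hr ▸ hn₁odd)).2
  have hsodd : Odd s := (Nat.odd_mul.1 (hs ▸ hn₂odd)).2
  set γ := α ^ g with hγ
  have hγe : γ = ⟨X g, Y g⟩ := hαpow g hg0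
  have hγ1 : γ * star γ = 1 := pow_star_eq_one hα1 g
  have hγgt : 1 < φ γ := by rw [hγ, map_pow]; exact one_lt_pow₀ hαgt (by omega)
  have hγr : γ ^ r = ⟨X n₁, Y n₁⟩ := by rw [hγ, ← pow_mul, ← hr, hαpow _ hn₁]
  have hγs : γ ^ s = ⟨X n₂, Y n₂⟩ := by rw [hγ, ← pow_mul, ← hs, hαpow _ hn₂]
  have hgcd : Nat.gcd (X n₁) (X n₂) = X g := by
    apply Nat.dvd_antisymm
    · have := dvd_re_of_dvd_pow_re hγ1 hrodd hsodd hrs (N := (Nat.gcd (X n₁) (X n₂) : ℕ))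
        (by rw [hγr]; exact Int.natCast_dvd_natCast.2 (Nat.gcd_dvd_left _ _))
        (by rw [hγs]; exact Int.natCast_dvd_natCast.2 (Nat.gcd_dvd_right _ _))
      rw [hγe] at this
      exact Int.natCast_dvd_natCast.1 this
    · apply Nat.dvd_gcd
      · have := re_dvd_pow_re hγ1 hrodd
        rw [hγr, hγe] at this
        exact Int.natCast_dvd_natCast.1 this
      · have := re_dvd_pow_re hγ1 hsodd
        rw [hγs, hγe] at this
        exact Int.natCast_dvd_natCast.1 this
  obtain ⟨e, he, he', hxe⟩ := gcd_repdigits hb ha₁ ha₂ hm₁ hrep₁ hrep₂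
  rw [hgcd] at hxe
  obtain ⟨m, hm⟩ : ∃ m, m = Nat.gcd m₁ m₂ := ⟨_, rfl⟩
  rw [← hm] at hxe
  obtain ⟨k₁, hk₁⟩ : m ∣ m₁ := hm ▸ Nat.gcd_dvd_left _ _
  obtain ⟨k₂, hk₂⟩ : m ∣ m₂ := hm ▸ Nat.gcd_dvd_right _ _
  obtain ⟨c, hc⟩ : ∃ c, b = c + 1 := ⟨b - 1, by omega⟩
  obtain ⟨B, hB⟩ : ∃ B : ℤ, B = (b : ℤ) ^ m := ⟨_, rfl⟩
  have hcast : ∀ (u x a j : ℕ), u * x = a * (b ^ j - 1) →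
      (u : ℤ) * x = a * ((b : ℤ) ^ j - 1) := by
    intro u x a j h
    have h1 : 1 ≤ b ^ j := Nat.one_le_pow _ _ (by omega)
    have := congrArg (Nat.cast : ℕ → ℤ) h
    push_cast [Nat.cast_sub h1] at this
    exact this
  have hbc : b - 1 = c := by omega
  rw [hbc] at hxe hrep₁ hrep₂ ha₁ ha₂ he'
  have hx : (c : ℤ) * γ.re = e * (B - 1) := by rw [hγe, hB]; exact hcast _ _ _ _ hxe
  have hw₁ : (c : ℤ) * (γ ^ r).re = a₁ * (B ^ k₁ - 1) := by
    rw [hγr, hB, ← pow_mul, ← hk₁]; exact hcast _ _ _ _ hrep₁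
  have hw₂ : (c : ℤ) * (γ ^ s).re = a₂ * (B ^ k₂ - 1) := by
    rw [hγs, hB, ← pow_mul, ← hk₂]; exact hcast _ _ _ _ hrep₂
  obtain ⟨N, hN⟩ : ∃ N, N = 10000 := ⟨_, rfl⟩
  have hc1 : (1 : ℤ) ≤ c := by exact_mod_cast (by omega : 1 ≤ c)
  have heZ : (1 : ℤ) ≤ e := by exact_mod_cast he
  have heZ' : (e : ℤ) ≤ c ^ 2 := by exact_mod_cast he'
  have hlt : B < (64 * ((c : ℤ) + 1) ^ 2) ^ N := by
    have hr0 : 0 < r := hrodd.pos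
    have hs0 : 0 < s := hsodd.pos
    rcases (by
      by_contra! h
      have h1 : r = 1 := by omega
      have h2 : s = 1 := by omega
      rw [h1] at hr
      rw [h2] at hs
      omega : 2 ≤ r ∨ 2 ≤ s) with h | h
    · exact core hD hns hγ1 hγgt.le hc1 (by exact_mod_cast ha₁.1) (by exact_mod_cast ha₁.2)
        heZ heZ' hN rfl hx hw₁ h
    · exact core hD hns hγ1 hγgt.le hc1 (by exact_mod_cast ha₂.1) (by exact_mod_cast ha₂.2)
        heZ heZ' hN rfl hx hw₂ h
  -- `d ≤ d Y_g² < X_g²`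
  have hYg : (1 : ℤ) ≤ Y g := by
    by_contra! h
    have h0 : Y g = 0 := by omega
    have h1 := congrArg φ hγ1
    rw [map_mul, map_one] at h1
    have h2 : star γ = γ := by rw [hγe]; ext <;> simp [h0]
    rw [h2] at h1
    nlinarith
  have hpg : (X g : ℤ) * X g - d * (Y g * Y g) = 1 := by
    have := congrArg Zsqrtd.re hγ1
    rw [hγe] at this
    simp at this
    linarith
  have hB0 : 0 ≤ B := by rw [hB]; positivity
  rw [hγe] at hx
  have hbc' : ((c : ℤ) + 1) = b := by rw [hc]; push_cast; rfl
  have hdx := lt_sq_of_pell hD hc1 heZ heZ' hB0 hx (by positivity) hpg hYg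
  rw [hbc'] at hdx hlt
  have hfin : (d : ℤ) < (b * (64 * (b : ℤ) ^ 2) ^ N) ^ 2 :=
    hdx.trans_le (pow_le_pow_left₀ (by positivity) (by gcongr) 2)
  have hfin' : (d : ℝ) < ((b : ℝ) * (64 * (b : ℝ) ^ 2) ^ N) ^ 2 := by exact_mod_cast hfin
  exact hfin'.trans_le (final_bound hb hN)
end
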